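/- Let G be a connected planar graph on at least 2 vertices that contains no cycle of length 4. Then the 2-surviving rate satisfies ρ₂(G) > 1/9. -/

import Mathlib

/-- The set of vertices on fire after `t` fire-spread rounds, when the fire breaks out
at `v` and the firefighters protect the vertices of `P s` in round `s + 1` (protection
happens just before the `s`-th spread step and is permanent). -/
def burnedSet {V : Type*} (G : SimpleGraph V) (v : V) (P : ℕ → Set V) : ℕ → Set V
  | 0 => {v}
  | t + 1 => burnedSet G v P t ∪
      {w | (∃ u ∈ burnedSet G v P t, G.Adj u w) ∧ ∀ s ≤ t, w ∉ P s}

/-- A strategy `P` is valid for the per-round budgets `b` if in each round it protects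
at most `b t` vertices, none of which are already on fire. -/
def ValidStrategy {V : Type*} (G : SimpleGraph V) (b : ℕ → ℕ) (v : V) (P : ℕ → Set V) : Prop :=
  ∀ t, (P t).Finite ∧ (P t).ncard ≤ b t ∧ Disjoint (P t) (burnedSet G v P t)

/-- `sn G b v` is the maximum number of vertices that can be saved (i.e. that never
catch fire) when the fire breaks out at `v` and the firefighters may protect at most
`b t` vertices in round `t + 1`. -/
noncomputable def sn {V : Type*} (G : SimpleGraph V) (b : ℕ → ℕ) (v : V) : ℕ :=
  sSup {m | ∃ P, ValidStrategy G b v P ∧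
    m = Nat.card {w : V | ∀ t, w ∉ burnedSet G v P t}}

/-- The surviving rate of `G` with per-round budgets `b` : the expected fraction of
vertices that can be saved when the starting vertex is chosen uniformly at random. -/
noncomputable def survivingRate {V : Type*} [Fintype V] (G : SimpleGraph V) (b : ℕ → ℕ) : ℝ :=
  (∑ v : V, (sn G b v : ℝ)) / (Fintype.card V : ℝ) ^ 2

/-- A plane embedding of a simple graph: vertices are points of the plane and edges are
simple arcs between their endpoints, such that arcs avoid all other vertices and two
arcs of distinct edges meet only in common endpoints. -/
structure PlaneEmbedding {V : Type*} (G : SimpleGraph V) where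
  pos : V → ℝ × ℝ
  arc : V → V → ℝ → ℝ × ℝ
  pos_inj : Function.Injective pos
  arc_cont : ∀ ⦃u v⦄, G.Adj u v → Continuous (arc u v)
  arc_injOn : ∀ ⦃u v⦄, G.Adj u v → Set.InjOn (arc u v) (Set.Icc 0 1)
  arc_zero : ∀ ⦃u v⦄, G.Adj u v → arc u v 0 = pos u
  arc_one : ∀ ⦃u v⦄, G.Adj u v → arc u v 1 = pos v
  arc_symm : ∀ ⦃u v⦄, G.Adj u v → ∀ t, arc v u t = arc u v (1 - t)
  arc_avoid : ∀ ⦃u v⦄, G.Adj u v → ∀ w : V, pos w ∉ arc u v '' Set.Ioo 0 1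
  arc_meet : ∀ ⦃u v x y⦄, G.Adj u v → G.Adj x y → s(u, v) ≠ s(x, y) →
      arc u v '' Set.Icc 0 1 ∩ arc x y '' Set.Icc 0 1 ⊆
        ({pos u, pos v} : Set (ℝ × ℝ)) ∩ {pos x, pos y}

/-- A graph is planar if it admits a plane embedding. -/
def IsPlanar {V : Type*} (G : SimpleGraph V) : Prop :=
  Nonempty (PlaneEmbedding G)

namespace FF

/-! ## The triangulated quarter plane -/

abbrev Pt := ℕ × ℕ

/-- lattice edges: horizontal, vertical, diagonal -/
inductive LE : Type
  | h : ℕ → ℕ → LE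
  | v : ℕ → ℕ → LE
  | d : ℕ → ℕ → LE

/-- faces: outer face, lower triangles, upper triangles -/
inductive LF : Type
  | out : LF
  | lo : ℕ → ℕ → LF
  | up : ℕ → ℕ → LF

noncomputable instance : DecidableEq LE := Classical.decEq _
noncomputable instance : DecidableEq LF := Classical.decEq _

def src : LE → Pt
  | .h i j => (i, j)
  | .v i j => (i, j)
  | .d i j => (i, j)

def tgt : LE → Pt
  | .h i j => (i + 1, j)
  | .v i j => (i, j + 1)
  | .d i j => (i + 1, j + 1)

def lf : LE → LF
  | .h i j => .lo i j
  | .v i j => .up i j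
  | .d i j => .up i j

def rf : LE → LF
  | .h _ 0 => .out
  | .h i (j + 1) => .up i j
  | .v 0 _ => .out
  | .v (i + 1) j => .lo i j
  | .d i j => .lo i j

noncomputable def inc : Pt → Finset LE
  | (0, 0) => {.h 0 0, .v 0 0, .d 0 0}
  | (i + 1, 0) => {.h (i + 1) 0, .v (i + 1) 0, .d (i + 1) 0, .h i 0}
  | (0, j + 1) => {.h 0 (j + 1), .v 0 (j + 1), .d 0 (j + 1), .v 0 j}
  | (i + 1, j + 1) => {.h (i + 1) (j + 1), .v (i + 1) (j + 1), .d (i + 1) (j + 1),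
      .h i (j + 1), .v (i + 1) j, .d i j}

theorem mem_inc (e : LE) (p : Pt) : e ∈ inc p ↔ src e = p ∨ tgt e = p := by
  obtain ⟨i, j⟩ := p
  rcases i with _ | i <;> rcases j with _ | j <;> rcases e with ⟨a, b⟩ | ⟨a, b⟩ | ⟨a, b⟩ <;>
    simp [inc, src, tgt] <;> omega

theorem src_ne_tgt (e : LE) : src e ≠ tgt e := by
  rcases e with ⟨a, b⟩ | ⟨a, b⟩ | ⟨a, b⟩ <;> simp [src, tgt]

/-- an edge is determined by its ends -/
theorem edge_ext {e e' : LE} (h1 : src e = src e') (h2 : tgt e = tgt e') : e = e' := by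
  rcases e with ⟨a, b⟩ | ⟨a, b⟩ | ⟨a, b⟩ <;> rcases e' with ⟨a', b'⟩ | ⟨a', b'⟩ | ⟨a', b'⟩ <;>
    simp [src, tgt] at * <;> omega

theorem edge_ext' {e e' : LE} (h1 : src e = tgt e') (h2 : tgt e = src e') : False := by
  rcases e with ⟨a, b⟩ | ⟨a, b⟩ | ⟨a, b⟩ <;> rcases e' with ⟨a', b'⟩ | ⟨a', b'⟩ | ⟨a', b'⟩ <;>
    simp [src, tgt] at * <;> omega

abbrev Chain := LE → ZMod 2

/-- boundary of a set of faces -/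
def bd (s : LF → ZMod 2) : Chain := fun e => s (lf e) + s (rf e)

noncomputable def vsum (c : Chain) (p : Pt) : ZMod 2 := ∑ e ∈ inc p, c e

theorem z2_add_self (a : ZMod 2) : a + a = 0 := CharTwo.add_self_eq_zero a

theorem z2_cases (a : ZMod 2) : a = 0 ∨ a = 1 := by
  revert a; decide

theorem z2_add_eq_zero {a b : ZMod 2} : a + b = 0 ↔ a = b := by
  revert a b; decide

theorem z2_ne_iff {a b : ZMod 2} : a ≠ b ↔ a + b = 1 := by
  revert a b; decide

theorem vsum_add (c c' : Chain) (p : Pt) : vsum (c + c') p = vsum c p + vsum c' p := by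
  simp [vsum, Finset.sum_add_distrib]

theorem vsum_zero (p : Pt) : vsum 0 p = 0 := by
  simp [vsum]

theorem vsum_00 (c : Chain) : vsum c (0, 0) = c (.h 0 0) + c (.v 0 0) + c (.d 0 0) := by
  simp [vsum, inc]; ring

theorem vsum_s0 (c : Chain) (i : ℕ) :
    vsum c (i + 1, 0) = c (.h (i + 1) 0) + c (.v (i + 1) 0) + c (.d (i + 1) 0) + c (.h i 0) := by
  simp [vsum, inc]; ring

theorem vsum_0s (c : Chain) (j : ℕ) :
    vsum c (0, j + 1) = c (.h 0 (j + 1)) + c (.v 0 (j + 1)) + c (.d 0 (j + 1)) + c (.v 0 j) := by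
  simp [vsum, inc]; ring

theorem vsum_ss (c : Chain) (i j : ℕ) :
    vsum c (i + 1, j + 1) = c (.h (i + 1) (j + 1)) + c (.v (i + 1) (j + 1))
      + c (.d (i + 1) (j + 1)) + c (.h i (j + 1)) + c (.v (i + 1) j) + c (.d i j) := by
  simp [vsum, inc]; ring

theorem vsum_bd (s : LF → ZMod 2) (p : Pt) : vsum (bd s) p = 0 := by
  obtain ⟨i, j⟩ := p
  have h2 : (2 : ZMod 2) = 0 := rfl
  rcases i with _ | i <;> rcases j with _ | j
  · rw [vsum_00]; simp only [bd, lf, rf]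
    linear_combination (s .out + s (.up 0 0) + s (.lo 0 0)) * h2
  · rw [vsum_0s]; rcases j with _ | j <;> simp only [bd, lf, rf]
    · linear_combination (s .out + s (.up 0 0) + s (.lo 0 1) + s (.up 0 1)) * h2
    · linear_combination (s .out + s (.up 0 (j+1)) + s (.lo 0 (j+1+1)) + s (.up 0 (j+1+1))) * h2
  · rw [vsum_s0]; rcases i with _ | i <;> simp only [bd, lf, rf]
    · linear_combination (s .out + s (.lo 0 0) + s (.lo 1 0) + s (.up 1 0)) * h2
    · linear_combination (s .out + s (.lo (i+1) 0) + s (.lo (i+1+1) 0) + s (.up (i+1+1) 0)) * h2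
  · rw [vsum_ss]; simp only [bd, lf, rf]
    linear_combination (s (.lo (i+1) (j+1)) + s (.up (i+1) (j+1)) + s (.lo i (j+1)) + s (.up i j)
      + s (.lo i j) + s (.up (i+1) j)) * h2

/-- explicit filling -/
def fup (c : Chain) : ℕ → ℕ → ZMod 2
  | 0, j => c (.v 0 j)
  | i + 1, j => fup c i j + c (.d i j) + c (.v (i + 1) j)

def ffill (c : Chain) : LF → ZMod 2
  | .out => 0
  | .up i j => fup c i j
  | .lo i j => fup c i j + c (.d i j)

theorem bd_ffill (c : Chain) (hc : ∀ p, vsum c p = 0) : bd (ffill c) = c := by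
  have h2 : (2 : ZMod 2) = 0 := rfl
  funext e
  rcases e with ⟨i, j⟩ | ⟨i, j⟩ | ⟨i, j⟩
  · rcases j with _ | j
    · simp only [bd, lf, rf, ffill]
      induction i with
      | zero =>
        have := hc (0, 0); rw [vsum_00] at this
        simp only [fup]
        linear_combination this - c (.h 0 0) * h2
      | succ i ih =>
        have := hc (i + 1, 0); rw [vsum_s0] at this
        simp only [fup]
        linear_combination this + ih - (c (.h (i+1) 0)) * h2
    · simp only [bd, lf, rf, ffill]
      induction i with
      | zero =>
        have := hc (0, j + 1); rw [vsum_0s] at this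
        simp only [fup]
        linear_combination this - c (.h 0 (j+1)) * h2
      | succ i ih =>
        have := hc (i + 1, j + 1); rw [vsum_ss] at this
        simp only [fup]
        linear_combination this + ih - (c (.h (i+1) (j+1))) * h2
  · rcases i with _ | i
    · simp [bd, lf, rf, ffill, fup]
    · simp only [bd, lf, rf, ffill, fup]
      linear_combination (fup c i j + c (.d i j)) * h2
  · simp only [bd, lf, rf, ffill]
    linear_combination (fup c i j) * h2

theorem bd_conn (s : LF → ZMod 2) (hs : bd s = 0) (f : LF) : s f = s .out := by
  have hd : ∀ i j, s (.up i j) = s (.lo i j) := fun i j =>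
    z2_add_eq_zero.1 (congrFun hs (.d i j))
  have hu : ∀ i j, s (.up i j) = s .out := by
    intro i j
    induction i with
    | zero => exact z2_add_eq_zero.1 (congrFun hs (.v 0 j))
    | succ i ih => rw [← ih, hd i j]; exact z2_add_eq_zero.1 (congrFun hs (.v (i + 1) j))
  rcases f with _ | ⟨i, j⟩ | ⟨i, j⟩
  · rfl
  · rw [← hd, hu]
  · rw [hu]

theorem bd_add (s t : LF → ZMod 2) : bd (s + t) = bd s + bd t := by
  funext e; simp only [bd, Pi.add_apply]; ring

theorem bd_const (a : ZMod 2) : bd (fun _ => a) = 0 := by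
  funext e; simp [bd, z2_add_self]

/-- uniqueness of fillings -/
theorem bd_unique {s t : LF → ZMod 2} (h : bd s = bd t) (f f' : LF) :
    s f + t f = s f' + t f' := by
  have : bd (s + t) = 0 := by
    rw [bd_add, h]; funext e; exact z2_add_self _
  have h1 := bd_conn _ this f
  have h2 := bd_conn _ this f'
  simp only [Pi.add_apply] at h1 h2
  rw [h1, h2]

/-- `f` is a face around `p` -/
def atP (f : LF) (p : Pt) : Prop := ∃ e, (src e = p ∨ tgt e = p) ∧ (f = lf e ∨ f = rf e)

theorem link (s : LF → ZMod 2) (p : Pt)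
    (h : ∀ e, (src e = p ∨ tgt e = p) → bd s e = 0) {f f' : LF}
    (hf : atP f p) (hf' : atP f' p) : s f = s f' := by
  have key : ∀ f, atP f p → s f = s (lf (.d p.1 p.2)) := by
    clear hf hf'
    rintro f ⟨e, he, hfe⟩
    have h0 : ∀ e ∈ inc p, s (lf e) = s (rf e) := fun e he =>
      z2_add_eq_zero.1 (h e ((mem_inc e p).1 he))
    have hee : s f = s (lf e) := by
      rcases hfe with rfl | rfl
      · rfl
      · exact (h0 e ((mem_inc e p).2 he)).symm
    rw [hee]
    have he' := (mem_inc e p).2 he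
    clear h he hfe hee
    obtain ⟨i, j⟩ := p
    rcases i with _ | i <;> rcases j with _ | j
    · simp [inc, lf, rf] at h0 he' ⊢
      rcases he' with rfl | rfl | rfl <;> simp_all
    · rcases j with _ | j <;> simp [inc, lf, rf] at h0 he' ⊢ <;>
      rcases he' with rfl | rfl | rfl | rfl <;> simp_all
    · rcases i with _ | i <;> simp [inc, lf, rf] at h0 he' ⊢ <;>
      rcases he' with rfl | rfl | rfl | rfl <;> simp_all
    · simp [inc, lf, rf] at h0 he' ⊢
      rcases he' with rfl | rfl | rfl | rfl | rfl | rfl <;> simp_all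
  rw [key f hf, key f' hf']

theorem atP_src_l (e : LE) : atP (lf e) (src e) := ⟨e, Or.inl rfl, Or.inl rfl⟩
theorem atP_src_r (e : LE) : atP (rf e) (src e) := ⟨e, Or.inl rfl, Or.inr rfl⟩
theorem atP_tgt_l (e : LE) : atP (lf e) (tgt e) := ⟨e, Or.inr rfl, Or.inl rfl⟩
theorem atP_tgt_r (e : LE) : atP (rf e) (tgt e) := ⟨e, Or.inr rfl, Or.inr rfl⟩

/-- single edge chain -/
noncomputable def sg (e : LE) : Chain := fun e' => if e' = e then 1 else 0

theorem vsum_sg (e : LE) (p : Pt) :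
    vsum (sg e) p = (if src e = p then 1 else 0) + (if tgt e = p then 1 else 0) := by
  unfold vsum sg
  rw [Finset.sum_ite_eq' (inc p) e (fun _ => (1 : ZMod 2))]
  have := mem_inc e p
  have h3 := src_ne_tgt e
  by_cases h1 : src e = p <;> by_cases h2 : tgt e = p <;> simp_all

theorem vsum_single {c : Chain} {e : LE} {p : Pt} (he : src e = p ∨ tgt e = p)
    (h : ∀ e', (src e' = p ∨ tgt e' = p) → e' ≠ e → c e' = 0) : vsum c p = c e := by
  unfold vsum
  apply Finset.sum_eq_single e
  · intro e' he' hne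
    exact h e' ((mem_inc e' p).1 he') hne
  · intro hn
    exact absurd ((mem_inc e p).2 he) hn

end FF

namespace FF

/-! ## Ancestors -/

def Anc {V : Type} (tpar : V → V) (g : V) : Set V := {h | ∃ k, tpar^[k] g = h}

theorem Anc_self {V : Type} (tpar : V → V) (g : V) : g ∈ Anc tpar g := ⟨0, rfl⟩

theorem Anc_tpar {V : Type} (tpar : V → V) {g h : V} (H : h ∈ Anc tpar (tpar g)) :
    h ∈ Anc tpar g := by
  obtain ⟨k, hk⟩ := H
  exact ⟨k + 1, by rw [Function.iterate_succ_apply]; exact hk⟩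

theorem Anc_cases {V : Type} {tpar : V → V} {g h : V} (H : h ∈ Anc tpar g) :
    h = g ∨ h ∈ Anc tpar (tpar g) := by
  obtain ⟨k, hk⟩ := H
  rcases k with _ | k
  · exact Or.inl hk.symm
  · right; exact ⟨k, by rw [← Function.iterate_succ_apply]; exact hk⟩

theorem Anc_trans {V : Type} {tpar : V → V} {a b c : V} (H : b ∈ Anc tpar a)
    (H' : c ∈ Anc tpar b) : c ∈ Anc tpar a := by
  obtain ⟨k, rfl⟩ := H
  obtain ⟨l, rfl⟩ := H'
  exact ⟨l + k, by rw [Function.iterate_add_apply]⟩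

structure STree {V : Type} (G : SimpleGraph V) (v : V) (tpar : V → V) : Prop where
  root : tpar v = v
  adj : ∀ g, g ≠ v → G.Adj (tpar g) g
  lev : ∀ g, g ≠ v → G.dist v g = G.dist v (tpar g) + 1

namespace STree
variable {V : Type} {G : SimpleGraph V} {v : V} {tpar : V → V}

theorem iter_root (T : STree G v tpar) (k : ℕ) : tpar^[k] v = v := by
  induction k with
  | zero => rfl
  | succ k ih => rw [Function.iterate_succ_apply, T.root, ih]

theorem Anc_root (T : STree G v tpar) {g : V} (h : g ∈ Anc tpar v) : g = v := by
  obtain ⟨k, rfl⟩ := h; exact T.iter_root k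

theorem ind (T : STree G v tpar) {P : V → Prop} (h0 : P v) (hs : ∀ g, g ≠ v → P (tpar g) → P g) (g : V) : P g := by
  induction hn : G.dist v g using Nat.strong_induction_on generalizing g with
  | _ n ih =>
    by_cases h : g = v
    · rw [h]; exact h0
    · exact hs g h (ih _ (by rw [← hn, T.lev g h]; omega) _ rfl)

theorem root_mem (T : STree G v tpar) (g : V) : v ∈ Anc tpar g := by
  refine T.ind (P := fun g => v ∈ Anc tpar g) (Anc_self _ _) (fun g _ h => Anc_tpar _ h) g

theorem lev_le (T : STree G v tpar) {g h : V} (H : h ∈ Anc tpar g) : G.dist v h ≤ G.dist v g := by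
  revert H
  refine T.ind (P := fun g => h ∈ Anc tpar g → G.dist v h ≤ G.dist v g) ?_ ?_ g
  · intro H; rw [T.Anc_root H]
  · intro g hg ih H
    rcases Anc_cases H with rfl | H
    · exact le_rfl
    · have := ih H; have := T.lev g hg; omega

theorem lev_inj (T : STree G v tpar) {x g h : V} (hg : g ∈ Anc tpar x) (hh : h ∈ Anc tpar x)
    (e : G.dist v g = G.dist v h) : g = h := by
  revert hg hh
  refine T.ind (P := fun x => g ∈ Anc tpar x → h ∈ Anc tpar x → g = h) ?_ ?_ x
  · intro h1 h2; rw [T.Anc_root h1, T.Anc_root h2]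
  · intro x hx ih h1 h2
    rcases Anc_cases h1 with rfl | h1' <;> rcases Anc_cases h2 with rfl | h2'
    · rfl
    · have := T.lev_le h2'; have := T.lev g hx; omega
    · have := T.lev_le h1'; have := T.lev h hx; omega
    · exact ih h1' h2'

theorem comp (T : STree G v tpar) {x g h : V} (hg : g ∈ Anc tpar x) (hh : h ∈ Anc tpar x)
    (e : G.dist v h ≤ G.dist v g) : h ∈ Anc tpar g := by
  revert hg hh
  refine T.ind (P := fun x => g ∈ Anc tpar x → h ∈ Anc tpar x → h ∈ Anc tpar g) ?_ ?_ x
  · intro h1 h2; rw [T.Anc_root h1, T.Anc_root h2]; exact Anc_self _ _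
  · intro x hx ih h1 h2
    rcases Anc_cases h1 with rfl | h1'
    · exact h2
    rcases Anc_cases h2 with rfl | h2'
    · have := T.lev_le h1'; have := T.lev h hx; omega
    · exact ih h1' h2'

theorem exists_fs (T : STree G v tpar) (x : V) (hx : x ≠ v) : ∃ z ∈ Anc tpar x, z ≠ v ∧ tpar z = v := by
  revert hx
  refine T.ind (P := fun x => x ≠ v → ∃ z ∈ Anc tpar x, z ≠ v ∧ tpar z = v) ?_ ?_ x
  · intro h; exact absurd rfl h
  · intro x hx ih _
    by_cases h : tpar x = v
    · exact ⟨x, Anc_self _ _, hx, h⟩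
    · obtain ⟨z, h1, h2⟩ := ih h
      exact ⟨z, Anc_tpar _ h1, h2⟩

theorem lev_one (T : STree G v tpar) {z : V} (hz : z ≠ v) (h : tpar z = v) : G.dist v z = 1 := by
  rw [T.lev z hz, h, SimpleGraph.dist_self]

end STree

def box (N : ℕ) (p : Pt) : Prop := p.1 ≤ N ∧ p.2 ≤ N

structure LModel {V : Type} (G : SimpleGraph V) (v : V) (tpar : V → V) where
  N : ℕ
  N_pos : 0 < N
  col : Pt → V
  par : Pt → Pt
  pe : Pt → LE
  r : V → Pt
  rk : Pt → ℕ
  r_in : ∀ g, (r g).1 < N ∧ (r g).2 < N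
  col_r : ∀ g, col (r g) = g
  pe_ends : ∀ p, box N p → p ≠ r v →
    (src (pe p) = p ∧ tgt (pe p) = par p) ∨ (tgt (pe p) = p ∧ src (pe p) = par p)
  par_box : ∀ p, box N p → p ≠ r v → box N (par p)
  par_rk : ∀ p, box N p → p ≠ r v → rk (par p) < rk p
  par_col : ∀ p, box N p → p ≠ r (col p) → col (par p) = col p
  par_r : ∀ g, g ≠ v → col (par (r g)) = tpar g
  adj : ∀ g h, G.Adj g h → ∃ e, box N (src e) ∧ box N (tgt e) ∧
    ((col (src e) = g ∧ col (tgt e) = h) ∨ (col (src e) = h ∧ col (tgt e) = g))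
  ring1 : ∀ i, i < N → pe (i + 1, 0) = .h i 0 ∧ (i + 1, 0) ≠ r v
  ring2 : ∀ i, i < N → pe (i + 1, N) = .h i N
  ring3 : ∀ j, j < N → pe (0, j + 1) = .v 0 j ∧ (0, j + 1) ≠ r v
  ring4 : ∀ j, 0 < j → j < N → pe (N, j) = .v N j

namespace LModel
variable {V : Type} {G : SimpleGraph V} {v : V} {tpar : V → V} (M : LModel G v tpar)

theorem r_box (g : V) : box M.N (M.r g) := ⟨(M.r_in g).1.le, (M.r_in g).2.le⟩

theorem ind {P : Pt → Prop} (h0 : P (M.r v))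
    (hs : ∀ p, box M.N p → p ≠ M.r v → P (M.par p) → P p) (p : Pt) (hp : box M.N p) : P p := by
  induction hn : M.rk p using Nat.strong_induction_on generalizing p with
  | _ n ih =>
    by_cases h : p = M.r v
    · rw [h]; exact h0
    · exact hs p hp h (ih _ (by rw [← hn]; exact M.par_rk p hp h) _ (M.par_box p hp h) rfl)

/-- induction towards the root of the blob -/
theorem ind_blob {P : Pt → Prop} {g : V} (h0 : P (M.r g))
    (hs : ∀ p, box M.N p → p ≠ M.r v → M.col p = g → p ≠ M.r g → M.col (M.par p) = g →
      P (M.par p) → P p)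
    (p : Pt) (hp : box M.N p) (hc : M.col p = g) : P p := by
  revert hc
  refine M.ind (P := fun p => M.col p = g → P p) ?_ ?_ p hp
  · intro h; rw [M.col_r] at h; subst h; exact h0
  · intro p hp hne ih hc
    by_cases h : p = M.r g
    · rw [h]; exact h0
    · have := M.par_col p hp (by rw [hc]; exact h)
      rw [hc] at this
      exact hs p hp hne hc h this (ih this)

open Classical in
noncomputable def gamf : ℕ → Pt → Chain
  | 0, _ => 0
  | k + 1, p => if p = M.r v then 0 else sg (M.pe p) + gamf k (M.par p)

theorem gamf_stable : ∀ (k l : ℕ) (p : Pt), box M.N p → M.rk p < k → M.rk p < l →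
    M.gamf k p = M.gamf l p := by
  intro k
  induction k with
  | zero => intro l p _ h; omega
  | succ k ih =>
    intro l p hp h1 h2
    rcases l with _ | l
    · omega
    simp only [gamf]
    split_ifs with h
    · rfl
    · have := M.par_rk p hp h
      rw [ih l _ (M.par_box p hp h) (by omega) (by omega)]

/-- tree path from the root to a point -/
noncomputable def gam (p : Pt) : Chain := M.gamf (M.rk p + 1) p

theorem gam_root : M.gam (M.r v) = 0 := by simp [gam, gamf]

theorem gam_step {p : Pt} (hp : box M.N p) (h : p ≠ M.r v) :
    M.gam p = sg (M.pe p) + M.gam (M.par p) := by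
  have := M.par_rk p hp h
  unfold gam
  conv_lhs => unfold gamf
  rw [if_neg h, M.gamf_stable _ (M.rk (M.par p) + 1) _ (M.par_box p hp h) (by omega) (by omega)]

theorem vsum_gam {p : Pt} (hp : box M.N p) (x : Pt) :
    vsum (M.gam p) x = (if p = x then 1 else 0) + (if M.r v = x then 1 else 0) := by
  refine M.ind (P := fun p => vsum (M.gam p) x
    = (if p = x then 1 else 0) + (if M.r v = x then 1 else 0)) ?_ ?_ p hp
  · rw [gam_root, vsum_zero, z2_add_self]
  · intro p hp h ih
    rw [M.gam_step hp h, vsum_add, ih, vsum_sg]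
    rcases M.pe_ends p hp h with ⟨h1, h2⟩ | ⟨h1, h2⟩ <;> rw [h1, h2]
    · linear_combination z2_add_self (if M.par p = x then (1 : ZMod 2) else 0)
    · linear_combination z2_add_self (if M.par p = x then (1 : ZMod 2) else 0)

/-- a property of tree edges holds along `gam` -/
theorem sg_ne {e e' : LE} (h : sg e e' ≠ 0) : e' = e := by
  unfold sg at h
  by_contra hne
  simp [hne] at h

theorem sg_self (e : LE) : sg e e = 1 := by simp [sg]

theorem add_ne {c d : Chain} {e : LE} (h : (c + d) e ≠ 0) : c e ≠ 0 ∨ d e ≠ 0 := by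
  by_contra hn
  push Not at hn
  simp [hn.1, hn.2] at h

/-- the tree edges -/
def tree (e : LE) : Prop := ∃ p, box M.N p ∧ p ≠ M.r v ∧ e = M.pe p

theorem gam_tree {p : Pt} (hp : box M.N p) {e : LE} (h : M.gam p e ≠ 0) : M.tree e := by
  revert h
  refine M.ind (P := fun p => M.gam p e ≠ 0 → M.tree e) ?_ ?_ p hp
  · intro h; rw [gam_root] at h; exact absurd rfl h
  · intro p hp hne ih h
    rw [M.gam_step hp hne] at h
    rcases add_ne h with h | h
    · exact ⟨p, hp, hne, sg_ne h⟩
    · exact ih h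

/-- edge lies in the box -/
def ebox (e : LE) : Prop := box M.N (src e) ∧ box M.N (tgt e)

theorem ebox_pe {p : Pt} (hp : box M.N p) (hne : p ≠ M.r v) : M.ebox (M.pe p) := by
  have := M.par_box p hp hne
  rcases M.pe_ends p hp hne with ⟨h1, h2⟩ | ⟨h1, h2⟩ <;>
    exact ⟨by rw [‹src _ = _›]; assumption, by rw [‹tgt _ = _›]; assumption⟩

theorem tree_ebox {e : LE} (h : M.tree e) : M.ebox e := by
  obtain ⟨p, hp, hne, rfl⟩ := h; exact M.ebox_pe hp hne

/-- both end colours of an edge satisfy `P` -/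
def ecol (P : Set V) (e : LE) : Prop := M.col (src e) ∈ P ∧ M.col (tgt e) ∈ P

theorem ecol_pe {P : Set V} {p : Pt} (hp : box M.N p) (hne : p ≠ M.r v)
    (h1 : M.col p ∈ P) (h2 : M.col (M.par p) ∈ P) : M.ecol P (M.pe p) := by
  rcases M.pe_ends p hp hne with ⟨h3, h4⟩ | ⟨h3, h4⟩ <;> unfold ecol <;> rw [h3, h4]
  · exact ⟨h1, h2⟩
  · exact ⟨h2, h1⟩

theorem ecol_mono {P Q : Set V} (h : P ⊆ Q) {e : LE} (he : M.ecol P e) : M.ecol Q e :=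
  ⟨h he.1, h he.2⟩


theorem gam_col (T : STree G v tpar) {p : Pt} (hp : box M.N p) {w : V} (hw : w ∈ Anc tpar (M.col p)) {e : LE}
    (h : (M.gam p + M.gam (M.r w)) e ≠ 0) :
    M.ecol {g | g ∈ Anc tpar (M.col p) ∧ w ∈ Anc tpar g} e := by
  revert h hw
  refine M.ind (P := fun p => w ∈ Anc tpar (M.col p) → (M.gam p + M.gam (M.r w)) e ≠ 0 →
    M.ecol {g | g ∈ Anc tpar (M.col p) ∧ w ∈ Anc tpar g} e) ?_ ?_ p hp
  · intro hw h
    rw [M.col_r] at hw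
    have := T.Anc_root hw
    subst this
    exact absurd (z2_add_self _) h
  · intro p hp hne ih hw h
    by_cases hpw : p = M.r w
    · subst hpw; exact absurd (z2_add_self _) h
    by_cases hr : p = M.r (M.col p)
    · -- crossing edge
      have hc : M.col p ≠ v := by intro h; rw [h] at hr; exact hne hr
      have hcp : M.col (M.par p) = tpar (M.col p) := by
        conv_lhs => rw [hr]
        exact M.par_r _ hc
      have hw' : w ∈ Anc tpar (tpar (M.col p)) := by
        rcases Anc_cases hw with h | h
        · rw [h] at hpw; exact absurd hr hpw
        · exact h
      rw [M.gam_step hp hne, add_assoc] at h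
      rcases add_ne h with h | h
      · rw [sg_ne h]
        refine M.ecol_pe hp hne ⟨Anc_self _ _, hw⟩ ?_
        rw [hcp]
        exact ⟨Anc_tpar _ (Anc_self _ _), hw'⟩
      · refine M.ecol_mono ?_ (ih (by rw [hcp]; exact hw') h)
        rintro g ⟨h1, h2⟩
        rw [hcp] at h1
        exact ⟨Anc_tpar _ h1, h2⟩
    · have hcp := M.par_col p hp hr
      rw [hcp] at ih
      rw [M.gam_step hp hne, add_assoc] at h
      rcases add_ne h with h | h
      · rw [sg_ne h]
        refine M.ecol_pe hp hne ⟨Anc_self _ _, hw⟩ ?_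
        rw [hcp]
        exact ⟨Anc_self _ _, hw⟩
      · exact ih hw h

theorem gam_col0 (T : STree G v tpar) {p : Pt} (hp : box M.N p) {e : LE} (h : M.gam p e ≠ 0) :
    M.ecol (Anc tpar (M.col p)) e := by
  refine M.ecol_mono (fun g hg => hg.1) (M.gam_col T hp (w := v) (T.root_mem _) ?_)
  rw [gam_root]; simpa using h

/-- `pe` is injective -/
theorem pe_inj {p q : Pt} (hp : box M.N p) (hq : box M.N q) (hp' : p ≠ M.r v) (hq' : q ≠ M.r v)
    (h : M.pe p = M.pe q) : p = q := by
  have h1 := M.pe_ends p hp hp'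
  have h2 := M.pe_ends q hq hq'
  have h3 := M.par_rk p hp hp'
  have h4 := M.par_rk q hq hq'
  rw [h] at h1
  rcases h1 with ⟨a1, a2⟩ | ⟨a1, a2⟩ <;> rcases h2 with ⟨b1, b2⟩ | ⟨b1, b2⟩
  · rw [← a1, b1]
  · rw [← b2, a1] at h4; rw [← a2, b1] at h3; omega
  · rw [← b2, a1] at h4; rw [← a2, b1] at h3; omega
  · rw [← a1, b1]

theorem gam_r (T : STree G v tpar) {p : Pt} (hp : box M.N p) {g : V} (hg : g ≠ v) :
    M.gam p (M.pe (M.r g)) ≠ 0 ↔ g ∈ Anc tpar (M.col p) := by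
  have hrg : M.r g ≠ M.r v := fun h => hg (by rw [← M.col_r g, h, M.col_r])
  refine M.ind (P := fun p => M.gam p (M.pe (M.r g)) ≠ 0 ↔ g ∈ Anc tpar (M.col p)) ?_ ?_ p hp
  · rw [gam_root, M.col_r]
    simp only [Pi.zero_apply, ne_eq, not_true, false_iff]
    exact fun h => hg (T.Anc_root h)
  · intro p hp hne ih
    rw [M.gam_step hp hne, Pi.add_apply]
    by_cases hpr : p = M.r g
    · subst hpr
      have h0 : M.gam (M.par (M.r g)) (M.pe (M.r g)) = 0 := by
        by_contra h
        have := ih.1 h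
        rw [M.par_r g hg] at this
        have := T.lev_le this
        have := T.lev g hg
        omega
      rw [h0, sg_self, M.col_r]
      simp [Anc_self]
    · have : sg (M.pe p) (M.pe (M.r g)) = 0 := by
        by_contra h
        exact hpr (M.pe_inj hp (M.r_box g) hne hrg (sg_ne h).symm)
      rw [this, zero_add, ih]
      by_cases hr : p = M.r (M.col p)
      · have hc : M.col p ≠ v := by intro h; rw [h] at hr; exact hne hr
        have hcp : M.col (M.par p) = tpar (M.col p) := by
          conv_lhs => rw [hr]
          exact M.par_r _ hc
        rw [hcp]
        refine ⟨Anc_tpar _, fun h => ?_⟩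
        rcases Anc_cases h with h | h
        · rw [h] at hpr; exact absurd hr hpr
        · exact h
      · rw [M.par_col p hp hr]

/-- the tree lemma -/
theorem tree_cycle {c : Chain} (hc : ∀ p, vsum c p = 0) (ht : ∀ e, c e ≠ 0 → M.tree e) :
    c = 0 := by
  by_contra hne
  have hex : ∃ p, box M.N p ∧ p ≠ M.r v ∧ c (M.pe p) ≠ 0 := by
    by_contra hn
    push Not at hn
    apply hne
    funext e
    by_contra he
    obtain ⟨p, h1, h2, rfl⟩ := ht e he
    exact he (hn p h1 h2)
  have hfin : {p | box M.N p ∧ p ≠ M.r v ∧ c (M.pe p) ≠ 0}.Finite := by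
    refine Set.Finite.subset (Set.Finite.prod (Set.finite_Iic M.N) (Set.finite_Iic M.N)) ?_
    rintro ⟨a, b⟩ ⟨h, -⟩
    exact ⟨h.1, h.2⟩
  obtain ⟨p, ⟨hp, hpr, hpc⟩, hmax⟩ := Set.exists_max_image _ M.rk hfin hex
  have hend : src (M.pe p) = p ∨ tgt (M.pe p) = p := by
    rcases M.pe_ends p hp hpr with h | h
    · exact Or.inl h.1
    · exact Or.inr h.1
  have := vsum_single (c := c) hend (by
    intro e' he' hne'
    by_contra h
    obtain ⟨q, hq, hqr, rfl⟩ := ht e' h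
    have hpq : p ≠ q := by rintro rfl; exact hne' rfl
    have hm := hmax q ⟨hq, hqr, h⟩
    have h3 := M.par_rk q hq hqr
    have : M.par q = p := by
      rcases M.pe_ends q hq hqr with ⟨a, b⟩ | ⟨a, b⟩ <;> rcases he' with h' | h'
      · exact absurd (h'.symm.trans a) hpq
      · rw [← b, h']
      · rw [← b, h']
      · exact absurd (h'.symm.trans a) hpq
    rw [this] at h3
    omega)
  rw [hc] at this
  exact hpc this.symm

end LModel
end FF

namespace FF

/-- indicator of a face -/
noncomputable def ind1 (f : LF) : LF → ZMod 2 := fun f' => if f' = f then 1 else 0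

theorem bd_lo (i j : ℕ) : bd (ind1 (.lo i j)) = sg (.h i j) + sg (.v (i + 1) j) + sg (.d i j) := by
  funext e
  simp only [bd, ind1, sg, Pi.add_apply]
  rcases e with ⟨a, b⟩ | ⟨a, b⟩ | ⟨a, b⟩
  · rcases b with _ | b <;> simp [lf, rf]
  · rcases a with _ | a <;> simp [lf, rf]
  · simp [lf, rf]

theorem bd_up (i j : ℕ) : bd (ind1 (.up i j)) = sg (.v i j) + sg (.h i (j + 1)) + sg (.d i j) := by
  funext e
  simp only [bd, ind1, sg, Pi.add_apply]
  rcases e with ⟨a, b⟩ | ⟨a, b⟩ | ⟨a, b⟩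
  · rcases b with _ | b <;> simp [lf, rf]
  · rcases a with _ | a <;> simp [lf, rf]
  · simp [lf, rf]

/-- faces in the box -/
def fbox (N : ℕ) : LF → Prop
  | .out => False
  | .lo i j => i < N ∧ j < N
  | .up i j => i < N ∧ j < N

open Classical in
noncomputable def indB (N : ℕ) : LF → ZMod 2 := fun f => if fbox N f then 1 else 0

theorem telescope (μ : LE → ZMod 2) (N : ℕ)
    (hsq : ∀ i j, i < N → j < N → μ (.h i j) + μ (.h i (j + 1)) + μ (.v i j) + μ (.v (i + 1) j) = 0) :
    ∑ i ∈ Finset.range N, (μ (.h i 0) + μ (.h i N)) +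
      ∑ j ∈ Finset.range N, (μ (.v 0 j) + μ (.v N j)) = 0 := by
  have h1 : ∀ i K, (∑ j ∈ Finset.range K, (μ (.h i j) + μ (.h i (j + 1)))) = μ (.h i 0) + μ (.h i K) := by
    intro i K
    induction K with
    | zero => simp [z2_add_self]
    | succ K ih =>
      rw [Finset.sum_range_succ, ih]
      linear_combination z2_add_self (μ (.h i K))
  have h2 : ∀ j K, (∑ i ∈ Finset.range K, (μ (.v i j) + μ (.v (i + 1) j))) = μ (.v 0 j) + μ (.v K j) := by
    intro j K
    induction K with
    | zero => simp [z2_add_self]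
    | succ K ih =>
      rw [Finset.sum_range_succ, ih]
      linear_combination z2_add_self (μ (.v K j))
  simp only [← h1, ← h2]
  rw [Finset.sum_comm, ← Finset.sum_add_distrib]
  apply Finset.sum_eq_zero
  intro j hj
  rw [← Finset.sum_add_distrib]
  apply Finset.sum_eq_zero
  intro i hi
  have := hsq i j (Finset.mem_range.1 hi) (Finset.mem_range.1 hj)
  linear_combination this

theorem fup_zero (i j : ℕ) : fup 0 i j = 0 := by
  induction i with
  | zero => simp [fup]
  | succ i ih => simp [fup, ih]

theorem ffill_zero (f : LF) : ffill 0 f = 0 := by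
  rcases f with _ | ⟨i, j⟩ | ⟨i, j⟩ <;> simp [ffill, fup_zero]

namespace LModel
variable {V : Type} {G : SimpleGraph V} {v : V} {tpar : V → V} (M : LModel G v tpar)

noncomputable def cyc (e : LE) : Chain := sg e + M.gam (src e) + M.gam (tgt e)

theorem vsum_cyc {e : LE} (he : M.ebox e) (p : Pt) : vsum (M.cyc e) p = 0 := by
  unfold cyc
  rw [vsum_add, vsum_add, vsum_sg, M.vsum_gam he.1, M.vsum_gam he.2]
  linear_combination z2_add_self (if src e = p then (1 : ZMod 2) else 0) +
    z2_add_self (if tgt e = p then (1 : ZMod 2) else 0) +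
    z2_add_self (if M.r v = p then (1 : ZMod 2) else 0)

noncomputable def fil (e : LE) : LF → ZMod 2 := ffill (M.cyc e)

theorem bd_fil {e : LE} (he : M.ebox e) : bd (M.fil e) = M.cyc e :=
  bd_ffill _ (M.vsum_cyc he)

theorem cyc_tree {e : LE} (he : M.tree e) : M.cyc e = 0 := by
  obtain ⟨p, hp, hne, rfl⟩ := he
  unfold cyc
  have := M.gam_step hp hne
  rcases M.pe_ends p hp hne with ⟨h1, h2⟩ | ⟨h1, h2⟩
  · rw [h1, h2, this]; funext x
    simp only [Pi.add_apply, Pi.zero_apply]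
    linear_combination z2_add_self (sg (M.pe p) x) + z2_add_self (M.gam (M.par p) x)
  · rw [h1, h2, this]; funext x
    simp only [Pi.add_apply, Pi.zero_apply]
    linear_combination z2_add_self (sg (M.pe p) x) + z2_add_self (M.gam (M.par p) x)

theorem cyc_supp {e e' : LE} (he : M.ebox e) (h : M.cyc e e' ≠ 0) : e' = e ∨ M.tree e' := by
  unfold cyc at h
  rcases add_ne h with h | h
  · rcases add_ne h with h | h
    · exact Or.inl (sg_ne h)
    · exact Or.inr (M.gam_tree he.1 h)
  · exact Or.inr (M.gam_tree he.2 h)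

theorem cyc_self {e : LE} (he : M.ebox e) (h : ¬ M.tree e) : M.cyc e e = 1 := by
  unfold cyc
  have h1 : M.gam (src e) e = 0 := by
    by_contra h'; exact h (M.gam_tree he.1 h')
  have h2 : M.gam (tgt e) e = 0 := by
    by_contra h'; exact h (M.gam_tree he.2 h')
  simp [h1, h2, sg_self]

def hasF (g : V) (f : LF) : Prop := ∃ p, box M.N p ∧ M.col p = g ∧ atP f p

def rep (g : V) : LF := .up (M.r g).1 (M.r g).2
def rep' (g : V) : LF := .lo (M.r g).1 (M.r g).2

theorem hasF_rep (g : V) : M.hasF g (M.rep g) :=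
  ⟨M.r g, M.r_box g, M.col_r g, atP_src_l (.d (M.r g).1 (M.r g).2)⟩

theorem hasF_rep' (g : V) : M.hasF g (M.rep' g) :=
  ⟨M.r g, M.r_box g, M.col_r g, atP_src_r (.d (M.r g).1 (M.r g).2)⟩

def touch (c : Chain) : Set V := {g | ∃ e, c e ≠ 0 ∧ (M.col (src e) = g ∨ M.col (tgt e) = g)}

theorem untouched_pt {c : Chain} {p : Pt} (h : M.col p ∉ M.touch c) :
    ∀ e, (src e = p ∨ tgt e = p) → c e = 0 := by
  intro e he
  by_contra hc
  apply h
  refine ⟨e, hc, ?_⟩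
  rcases he with rfl | rfl
  · exact Or.inl rfl
  · exact Or.inr rfl

theorem side_const {s : LF → ZMod 2} {g : V} (hg : g ∉ M.touch (bd s)) {f : LF}
    (hf : M.hasF g f) : s f = s (M.rep g) := by
  obtain ⟨p, hp, hc, hf⟩ := hf
  suffices h : ∀ f, atP f p → s f = s (M.rep g) from h f hf
  clear hf f
  refine M.ind_blob (P := fun p => ∀ f, atP f p → s f = s (M.rep g)) ?_ ?_ p hp hc
  · intro f hf
    refine link s (M.r g) (M.untouched_pt (by rw [M.col_r]; exact hg)) hf ?_
    exact atP_src_l (.d (M.r g).1 (M.r g).2)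
  · intro p hp hne hc _ hcp ih f hf
    have hends := M.pe_ends p hp hne
    rw [← ih (lf (M.pe p)) ⟨M.pe p, by tauto, Or.inl rfl⟩]
    exact link s p (M.untouched_pt (by rw [hc]; exact hg)) hf ⟨M.pe p, by tauto, Or.inl rfl⟩

theorem side_adj {s : LF → ZMod 2} {g h : V} (hg : g ∉ M.touch (bd s)) (hh : h ∉ M.touch (bd s))
    (ha : G.Adj g h) : s (M.rep g) = s (M.rep h) := by
  obtain ⟨e, h1, h2, h3⟩ := M.adj g h ha
  rcases h3 with ⟨h3, h4⟩ | ⟨h3, h4⟩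
  · rw [← M.side_const hg ⟨_, h1, h3, atP_src_l e⟩, ← M.side_const hh ⟨_, h2, h4, atP_tgt_l e⟩]
  · rw [← M.side_const hh ⟨_, h1, h3, atP_src_l e⟩, ← M.side_const hg ⟨_, h2, h4, atP_tgt_l e⟩]

def cl (s : LF → ZMod 2) (i : ZMod 2) : Set V := {g | g ≠ v ∧ ∃ f, M.hasF g f ∧ s f = i}

theorem cl_sub (s : LF → ZMod 2) (i : ZMod 2) {g : V} (hg : g ∈ M.cl s i) :
    g ≠ v ∧ (g ∈ M.touch (bd s) ∨ s (M.rep g) = i) := by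
  obtain ⟨h1, f, h2, h3⟩ := hg
  refine ⟨h1, ?_⟩
  by_cases h : g ∈ M.touch (bd s)
  · exact Or.inl h
  · right; rw [← M.side_const h h2, h3]

theorem ebox_h {i j : ℕ} (hi : i < M.N) (hj : j ≤ M.N) : M.ebox (.h i j) :=
  ⟨⟨hi.le, hj⟩, ⟨hi, hj⟩⟩
theorem ebox_v {i j : ℕ} (hi : i ≤ M.N) (hj : j < M.N) : M.ebox (.v i j) :=
  ⟨⟨hi, hj.le⟩, ⟨hi, hj⟩⟩
theorem ebox_d {i j : ℕ} (hi : i < M.N) (hj : j < M.N) : M.ebox (.d i j) :=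
  ⟨⟨hi.le, hj.le⟩, ⟨hi, hj⟩⟩

theorem fil_sum {a b d : LE} (ha : M.ebox a) (hb : M.ebox b) (hd : M.ebox d) {s : LF → ZMod 2}
    (hs : s .out = 0) (h : M.cyc a + M.cyc b + M.cyc d = bd s) (f : LF) :
    M.fil a f + M.fil b f + M.fil d f = s f := by
  have := bd_unique (s := M.fil a + M.fil b + M.fil d) (t := s)
    (by rw [bd_add, bd_add, M.bd_fil ha, M.bd_fil hb, M.bd_fil hd, h]) f .out
  simp only [Pi.add_apply, hs, fil, ffill] at this
  rw [add_zero, add_zero, add_zero] at this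
  exact z2_add_eq_zero.1 this

theorem fil_lo {i j : ℕ} (hi : i < M.N) (hj : j < M.N) (f : LF) :
    M.fil (.h i j) f + M.fil (.v (i + 1) j) f + M.fil (.d i j) f = ind1 (.lo i j) f := by
  refine M.fil_sum (M.ebox_h hi hj.le) (M.ebox_v hi hj) (M.ebox_d hi hj) (by simp [ind1]) ?_ f
  rw [bd_lo]
  funext x
  simp only [cyc, src, tgt, Pi.add_apply]
  linear_combination z2_add_self (M.gam (i, j) x) + z2_add_self (M.gam (i+1, j) x)
    + z2_add_self (M.gam (i+1, j+1) x)

theorem fil_up {i j : ℕ} (hi : i < M.N) (hj : j < M.N) (f : LF) :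
    M.fil (.v i j) f + M.fil (.h i (j + 1)) f + M.fil (.d i j) f = ind1 (.up i j) f := by
  refine M.fil_sum (M.ebox_v hi.le hj) (M.ebox_h hi hj) (M.ebox_d hi hj) (by simp [ind1]) ?_ f
  rw [bd_up]
  funext x
  simp only [cyc, src, tgt, Pi.add_apply]
  linear_combination z2_add_self (M.gam (i, j) x) + z2_add_self (M.gam (i, j+1) x)
    + z2_add_self (M.gam (i+1, j+1) x)

theorem ring1_tree {i : ℕ} (hi : i < M.N) : M.tree (.h i 0) :=
  ⟨(i + 1, 0), ⟨hi, Nat.zero_le _⟩, (M.ring1 i hi).2, (M.ring1 i hi).1.symm⟩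

theorem ring2_tree {i : ℕ} (hi : i < M.N) : M.tree (.h i M.N) :=
  ⟨(i + 1, M.N), ⟨hi, le_rfl⟩, fun h => by
    have := (M.r_in v).2; rw [← h] at this; exact lt_irrefl _ this, (M.ring2 i hi).symm⟩

theorem ring3_tree {j : ℕ} (hj : j < M.N) : M.tree (.v 0 j) :=
  ⟨(0, j + 1), ⟨Nat.zero_le _, hj⟩, (M.ring3 j hj).2, (M.ring3 j hj).1.symm⟩

theorem ring4_tree {j : ℕ} (h0 : 0 < j) (hj : j < M.N) : M.tree (.v M.N j) :=
  ⟨(M.N, j), ⟨le_rfl, hj.le⟩, fun h => by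
    have := (M.r_in v).1; rw [← h] at this; exact lt_irrefl _ this, (M.ring4 j h0 hj).symm⟩

theorem e0_not_tree : ¬ M.tree (.v M.N 0) := by
  rintro ⟨p, hp, hne, he⟩
  have hN := M.N_pos
  have h := M.pe_ends p hp hne
  rw [← he] at h
  simp only [src, tgt] at h
  rcases h with ⟨h, -⟩ | ⟨h, -⟩
  · obtain ⟨n, hn⟩ : ∃ n, M.N = n + 1 := ⟨M.N - 1, by omega⟩
    have := (M.ring1 n (by omega)).1
    rw [← hn, h, ← he] at this
    cases this
  · by_cases h1 : 1 < M.N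
    · have := M.ring4 1 one_pos h1
      rw [show (1 : ℕ) = 0 + 1 from rfl, h, ← he] at this
      cases this
    · have hN1 : M.N = 1 := by omega
      have := M.ring2 0 (by omega)
      rw [hN1] at h this
      simp only [zero_add] at h this
      rw [h, ← he] at this
      cases this

theorem cyc_e0 : M.cyc (.v M.N 0) = bd (indB M.N) := by
  have hN := M.N_pos
  have hcb : M.ebox (.v M.N 0) := M.ebox_v le_rfl hN
  have key : M.cyc (.v M.N 0) + bd (indB M.N) = 0 := by
    apply M.tree_cycle
    · intro p; rw [vsum_add, M.vsum_cyc hcb, vsum_bd, add_zero]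
    · intro e he
      by_cases h0 : e = .v M.N 0
      · exfalso
        subst h0
        rw [Pi.add_apply, M.cyc_self hcb M.e0_not_tree] at he
        apply he
        obtain ⟨n, hn⟩ : ∃ n, M.N = n + 1 := ⟨M.N - 1, by omega⟩
        rw [hn]
        simp [bd, indB, lf, rf, fbox]
        decide
      rcases add_ne he with he | he
      · exact (M.cyc_supp hcb he).resolve_left h0
      · rcases e with ⟨i, j⟩ | ⟨i, j⟩ | ⟨i, j⟩
        · rcases j with _ | j
          · by_cases hi : i < M.N
            · exact M.ring1_tree hi
            · simp [bd, indB, lf, rf, fbox, hi] at he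
          · by_cases hi : i < M.N
            · by_cases hj : j + 1 = M.N
              · rw [hj]; exact M.ring2_tree hi
              · exfalso
                by_cases hj' : j + 1 < M.N
                · have : j < M.N := by omega
                  simp [bd, indB, lf, rf, fbox, hi, hj', this, z2_add_self] at he
                · have : ¬ j < M.N := by omega
                  simp [bd, indB, lf, rf, fbox, hj', this] at he
            · simp [bd, indB, lf, rf, fbox, hi] at he
        · rcases i with _ | i
          · by_cases hj : j < M.N
            · exact M.ring3_tree hj
            · simp [bd, indB, lf, rf, fbox, hj] at he
          · by_cases hj : j < M.N
            · by_cases hi : i + 1 = M.N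
              · rw [hi] at h0 ⊢
                refine M.ring4_tree (Nat.pos_of_ne_zero ?_) hj
                rintro rfl; exact h0 rfl
              · exfalso
                by_cases hi' : i + 1 < M.N
                · have : i < M.N := by omega
                  simp [bd, indB, lf, rf, fbox, hj, hi', this, z2_add_self] at he
                · have : ¬ i < M.N := by omega
                  simp [bd, indB, lf, rf, fbox, hi', this] at he
            · simp [bd, indB, lf, rf, fbox, hj] at he
        · exfalso
          apply he
          simp only [bd, indB, lf, rf, fbox]
          exact z2_add_self _
  funext e
  exact z2_add_eq_zero.1 (congrFun key e)

theorem fil_e0 (f : LF) (hf : fbox M.N f) : M.fil (.v M.N 0) f = 1 := by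
  have := bd_unique (s := M.fil (.v M.N 0)) (t := indB M.N)
    (by rw [M.bd_fil (M.ebox_v le_rfl M.N_pos), M.cyc_e0]) f .out
  have h1 : indB M.N f = 1 := by unfold indB; rw [if_pos hf]
  have h2 : indB M.N .out = 0 := by unfold indB; rw [if_neg (by simp [fbox])]
  have h3 : M.fil (.v M.N 0) .out = 0 := rfl
  rw [h1, h2, h3, add_zero] at this
  exact z2_add_eq_zero.1 this

theorem parity [Fintype V] (hV : 2 ≤ Fintype.card V) :
    ∃ e, M.ebox e ∧ ∀ i, Fintype.card V ≤ 3 * (M.cl (M.fil e) i).ncard + 1 := by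
  classical
  by_contra hcon
  push Not at hcon
  have hex : ∀ e, ∃ m : ZMod 2, M.ebox e → 3 * (M.cl (M.fil e) (m + 1)).ncard + 1 < Fintype.card V := by
    intro e
    by_cases he : M.ebox e
    · obtain ⟨i, hi⟩ := hcon e he
      refine ⟨i + 1, fun _ => ?_⟩
      rw [show i + 1 + 1 = i by linear_combination z2_add_self 1]
      exact hi
    · exact ⟨0, fun h => absurd h he⟩
  choose μ hμ using hex
  have hfull : ∀ S : Set V, (∀ g, g ≠ v → g ∈ S) → Fintype.card V ≤ S.ncard + 1 := by
    intro S hS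
    have h1 : (Set.univ : Set V) ⊆ S ∪ {v} := by
      intro g _
      by_cases h : g = v
      · right; exact h
      · left; exact hS g h
    have h2 := Set.ncard_le_ncard h1 (Set.toFinite _)
    have h3 := Set.ncard_union_le S {v}
    rw [Set.ncard_singleton] at h3
    rw [Set.ncard_univ, Nat.card_eq_fintype_card] at h2
    omega
  -- triangles
  have htri : ∀ a b d : LE, M.ebox a → M.ebox b → M.ebox d → ∀ f0,
      (∀ f, M.fil a f + M.fil b f + M.fil d f = ind1 f0 f) → μ a + μ b + μ d = 0 := by
    intro a b d ha hb hd f0 hs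
    by_contra hne
    have hone : μ a + μ b + μ d = 1 := (z2_cases _).resolve_left hne
    have hcov := hfull (M.cl (M.fil a) (μ a + 1) ∪ M.cl (M.fil b) (μ b + 1) ∪
      M.cl (M.fil d) (μ d + 1)) (by
      intro g hg
      obtain ⟨f, hf, hff⟩ : ∃ f, M.hasF g f ∧ f ≠ f0 := by
        by_cases h : M.rep g = f0
        · refine ⟨M.rep' g, M.hasF_rep' g, ?_⟩
          rw [← h]; simp [rep, rep']
        · exact ⟨_, M.hasF_rep g, h⟩
      have h0 := hs f
      simp only [ind1, hff, if_false] at h0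
      have hh : ∀ e, M.fil e f ≠ μ e → g ∈ M.cl (M.fil e) (μ e + 1) := by
        intro e he
        refine ⟨hg, f, hf, ?_⟩
        have := z2_ne_iff.1 he
        linear_combination this - z2_add_self (μ e)
      by_cases h1 : M.fil a f = μ a
      · by_cases h2 : M.fil b f = μ b
        · by_cases h3 : M.fil d f = μ d
          · rw [h1, h2, h3, hone] at h0; exact absurd h0 one_ne_zero
          · right; exact hh d h3
        · left; right; exact hh b h2
      · left; left; exact hh a h1)
    have h1 := hμ a ha
    have h2 := hμ b hb
    have h3 := hμ d hd
    have h4 := Set.ncard_union_le (M.cl (M.fil a) (μ a + 1) ∪ M.cl (M.fil b) (μ b + 1)) (M.cl (M.fil d) (μ d + 1))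
    have h5 := Set.ncard_union_le (M.cl (M.fil a) (μ a + 1)) (M.cl (M.fil b) (μ b + 1))
    omega
  have htreeμ : ∀ e, M.tree e → μ e = 0 := by
    intro e he
    rcases z2_cases (μ e) with h | h
    · exact h
    · exfalso
      have h1 := hμ e (M.tree_ebox he)
      rw [h, show (1 : ZMod 2) + 1 = 0 from rfl] at h1
      have := hfull (M.cl (M.fil e) 0) (by
        intro g hg
        refine ⟨hg, _, M.hasF_rep g, ?_⟩
        unfold fil
        rw [M.cyc_tree he, ffill_zero])
      omega
  have he0 : μ (.v M.N 0) = 1 := by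
    rcases z2_cases (μ (.v M.N 0)) with h | h
    · exfalso
      have h1 := hμ (.v M.N 0) (M.ebox_v le_rfl M.N_pos)
      rw [h, zero_add] at h1
      have := hfull (M.cl (M.fil (.v M.N 0)) 1) (by
        intro g hg
        exact ⟨hg, _, M.hasF_rep g, M.fil_e0 _ (M.r_in g)⟩)
      omega
    · exact h
  have htel := telescope μ M.N (by
    intro i j hi hj
    have h1 := htri _ _ _ (M.ebox_h hi hj.le) (M.ebox_v hi hj) (M.ebox_d hi hj) _ (M.fil_lo hi hj)
    have h2 := htri _ _ _ (M.ebox_v hi.le hj) (M.ebox_h hi hj) (M.ebox_d hi hj) _ (M.fil_up hi hj)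
    linear_combination h1 + h2 - z2_add_self (μ (.d i j)))
  rw [Finset.sum_eq_zero, zero_add, Finset.sum_eq_single 0] at htel
  · rw [he0, htreeμ _ (M.ring3_tree M.N_pos)] at htel
    exact absurd htel (by decide)
  · intro j hj hj0
    have hj := Finset.mem_range.1 hj
    rw [htreeμ _ (M.ring3_tree hj), htreeμ _ (M.ring4_tree (by omega) hj), add_zero]
  · intro h; exact absurd (Finset.mem_range.2 M.N_pos) h
  · intro i hi
    have hi := Finset.mem_range.1 hi
    rw [htreeμ _ (M.ring1_tree hi), htreeμ _ (M.ring2_tree hi), add_zero]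

end LModel
end FF

namespace FF

/-- a separating cycle consisting of two levelled parts -/
structure Sep {V : Type} (G : SimpleGraph V) (v : V) (C : Set V) (s : V → ZMod 2)
    (P1 P2 : Set V) : Prop where
  sub : ∀ g ∈ C, g ≠ v → g ∈ P1 ∨ g ∈ P2
  lev1 : ∀ g ∈ P1, ∀ h ∈ P1, G.dist v g = G.dist v h → g = h
  lev2 : ∀ g ∈ P2, ∀ h ∈ P2, G.dist v g = G.dist v h → g = h
  adj : ∀ g h, g ∉ C → h ∉ C → G.Adj g h → s g = s h

/-- closed side -/
def cside {V : Type} (v : V) (C : Set V) (s : V → ZMod 2) (i : ZMod 2) : Set V :=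
  {g | g ≠ v ∧ (g ∈ C ∨ s g = i)}

namespace LModel
variable {V : Type} {G : SimpleGraph V} {v : V} {tpar : V → V} (M : LModel G v tpar)

/-- lattice steps through colours in `T0` -/
def stp (T0 : Set V) (a b : Pt) : Prop :=
  ∃ e, M.ebox e ∧ ((src e = a ∧ tgt e = b) ∨ (src e = b ∧ tgt e = a)) ∧ M.ecol T0 e

theorem stp_symm (T0 : Set V) {a b : Pt} (h : M.stp T0 a b) : M.stp T0 b a := by
  obtain ⟨e, h1, h2, h3⟩ := h
  exact ⟨e, h1, h2.symm, h3⟩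

theorem stps_symm (T0 : Set V) {a b : Pt} (h : Relation.ReflTransGen (M.stp T0) a b) :
    Relation.ReflTransGen (M.stp T0) b a := by
  induction h with
  | refl => exact .refl
  | tail _ h ih => exact Relation.ReflTransGen.head (M.stp_symm _ h) ih

theorem stps_blob {T0 : Set V} {g : V} (hg : g ∈ T0) {p : Pt} (hp : box M.N p)
    (hc : M.col p = g) : Relation.ReflTransGen (M.stp T0) p (M.r g) := by
  refine M.ind_blob (P := fun p => Relation.ReflTransGen (M.stp T0) p (M.r g)) .refl ?_ p hp hc
  intro p hp hne hc _ hcp ih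
  refine Relation.ReflTransGen.head ⟨M.pe p, M.ebox_pe hp hne, ?_, ?_⟩ ih
  · rcases M.pe_ends p hp hne with h | h
    · exact Or.inl h
    · exact Or.inr ⟨h.2, h.1⟩
  · exact M.ecol_pe hp hne (by rw [hc]; exact hg) (by rw [hcp]; exact hg)

theorem stps_adj {T0 : Set V} {g h : V} (hg : g ∈ T0) (hh : h ∈ T0) (ha : G.Adj g h) :
    Relation.ReflTransGen (M.stp T0) (M.r g) (M.r h) := by
  obtain ⟨e, h1, h2, h3⟩ := M.adj g h ha
  rcases h3 with ⟨h3, h4⟩ | ⟨h3, h4⟩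
  · refine (M.stps_symm _ (M.stps_blob hg h1 h3)).trans
      (Relation.ReflTransGen.head ⟨e, ⟨h1, h2⟩, Or.inl ⟨rfl, rfl⟩, ?_⟩ (M.stps_blob hh h2 h4))
    unfold ecol; rw [h3, h4]; exact ⟨hg, hh⟩
  · refine (M.stps_symm _ (M.stps_blob hg h2 h4)).trans
      (Relation.ReflTransGen.head ⟨e, ⟨h1, h2⟩, Or.inr ⟨rfl, rfl⟩, ?_⟩ (M.stps_blob hh h1 h3))
    unfold ecol; rw [h3, h4]; exact ⟨hh, hg⟩

theorem chord (s : LF → ZMod 2) (T0 : Set V) {p q : Pt}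
    (hw : Relation.ReflTransGen (M.stp T0) p q)
    (hq : ∃ e, (src e = q ∨ tgt e = q) ∧ bd s e ≠ 0) :
    (∀ e, (src e = p ∨ tgt e = p) → bd s e = 0) → ∀ f0, atP f0 p →
    ∃ h D, box M.N h ∧ (∃ e, (src e = h ∨ tgt e = h) ∧ bd s e ≠ 0) ∧ M.col h ∈ T0 ∧
      (∀ x, vsum D x = (if p = x then 1 else 0) + (if h = x then 1 else 0)) ∧
      ∀ e, D e ≠ 0 → M.ecol T0 e ∧ s (lf e) = s f0 ∧ s (rf e) = s f0 := by
  induction hw using Relation.ReflTransGen.head_induction_on with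
  | refl =>
    intro hp
    obtain ⟨e, h1, h2⟩ := hq
    exact absurd (hp e h1) h2
  | head hstep _ ih =>
    rename_i p p1 _
    intro hp f0 hf0
    obtain ⟨e, he, hends, hcol⟩ := hstep
    have hep : src e = p ∨ tgt e = p := by tauto
    have hep1 : src e = p1 ∨ tgt e = p1 := by tauto
    have hlf : s (lf e) = s f0 := link s p hp ⟨e, hep, Or.inl rfl⟩ hf0
    have hrf : s (rf e) = s f0 := link s p hp ⟨e, hep, Or.inr rfl⟩ hf0
    have hvs : ∀ x, vsum (sg e) x = (if p = x then 1 else 0) + (if p1 = x then 1 else 0) := by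
      intro x
      rw [vsum_sg]
      rcases hends with ⟨h1, h2⟩ | ⟨h1, h2⟩ <;> rw [h1, h2]
      exact add_comm _ _
    have hsg : ∀ e', sg e e' ≠ 0 → M.ecol T0 e' ∧ s (lf e') = s f0 ∧ s (rf e') = s f0 := by
      intro e' h; rw [sg_ne h]; exact ⟨hcol, hlf, hrf⟩
    by_cases hon : ∃ e, (src e = p1 ∨ tgt e = p1) ∧ bd s e ≠ 0
    · refine ⟨p1, sg e, ?_, hon, ?_, hvs, hsg⟩
      · rcases hep1 with h | h <;> rw [← h]
        exacts [he.1, he.2]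
      · rcases hep1 with h | h <;> rw [← h]
        exacts [hcol.1, hcol.2]
    · push Not at hon
      obtain ⟨h, D, h1, h2, h3, h4, h5⟩ := ih hon (lf e) ⟨e, hep1, Or.inl rfl⟩
      refine ⟨h, sg e + D, h1, h2, h3, ?_, ?_⟩
      · intro x
        rw [vsum_add, hvs, h4]
        linear_combination z2_add_self (if p1 = x then (1 : ZMod 2) else 0)
      · intro e' h'
        rcases add_ne h' with h' | h'
        · exact hsg e' h'
        · rw [← hlf]; exact h5 e' h'

theorem touch_sub {c : Chain} {P : Set V} (h : ∀ e, c e ≠ 0 → M.ecol P e) {g : V}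
    (hg : g ∈ M.touch c) : g ∈ P := by
  obtain ⟨e, h1, h2⟩ := hg
  have := h e h1
  rcases h2 with rfl | rfl
  exacts [this.1, this.2]

theorem on_touch {c : Chain} {h : Pt} (hh : ∃ e, (src e = h ∨ tgt e = h) ∧ c e ≠ 0) :
    M.col h ∈ M.touch c := by
  obtain ⟨e, h1, h2⟩ := hh
  refine ⟨e, h2, ?_⟩
  rcases h1 with rfl | rfl
  exacts [Or.inl rfl, Or.inr rfl]

theorem vsum_bdadd (s : LF → ZMod 2) (a : ZMod 2) : bd (s + fun _ => a) = bd s := by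
  rw [bd_add, bd_const, add_zero]

theorem mk_sep {s : LF → ZMod 2} {P1 P2 : Set V}
    (h : ∀ e, bd s e ≠ 0 → M.ecol ({v} ∪ P1 ∪ P2) e)
    (lev1 : ∀ g ∈ P1, ∀ h ∈ P1, G.dist v g = G.dist v h → g = h)
    (lev2 : ∀ g ∈ P2, ∀ h ∈ P2, G.dist v g = G.dist v h → g = h) :
    Sep G v (M.touch (bd s)) (fun g => s (M.rep g)) P1 P2 where
  sub := by
    intro g hg hne
    rcases M.touch_sub h hg with (h | h) | h
    · exact absurd h hne
    · exact Or.inl h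
    · exact Or.inr h
  lev1 := lev1
  lev2 := lev2
  adj := fun g h hg hh ha => M.side_adj hg hh ha

theorem cl_cside (s : LF → ZMod 2) (i : ZMod 2) :
    M.cl s i ⊆ cside v (M.touch (bd s)) (fun g => s (M.rep g)) i :=
  fun _ hg => M.cl_sub s i hg

theorem not_cside {s : LF → ZMod 2} {i : ZMod 2} {g : V} (hg : g ∉ M.touch (bd s))
    (f : LF) (hf : M.hasF g f) (hs : s f ≠ i) :
    g ∉ cside v (M.touch (bd s)) (fun g => s (M.rep g)) i := by
  rintro ⟨_, h | h⟩
  · exact hg h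
  · exact hs ((M.side_const hg hf).trans h)

theorem reroute [Fintype V] (T : STree G v tpar) {e : LE} (he : M.ebox e) {px px' : Pt}
    (hends : (src e = px ∧ tgt e = px') ∨ (src e = px' ∧ tgt e = px))
    (hbig : ∀ i, Fintype.card V ≤ 3 * (M.cl (M.fil e) i).ncard + 1)
    {z z' u y w : V}
    (hzv : z ≠ v) (hzt : tpar z = v) (hz : z ∈ Anc tpar (M.col px)) (hzn : z ∉ Anc tpar (M.col px'))
    (hzv' : z' ≠ v) (hzt' : tpar z' = v) (hz' : z' ∈ Anc tpar (M.col px'))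
    (hzn' : z' ∉ Anc tpar (M.col px))
    (hu : u ∉ M.touch (M.cyc e)) (hy : y ∉ M.touch (M.cyc e)) (hau : G.Adj v u) (hay : G.Adj v y)
    (huy : M.fil e (M.rep u) ≠ M.fil e (M.rep y))
    (hw : w ∈ Anc tpar (M.col px)) (hwv : w ≠ v)
    {q : ℕ → V} {m : ℕ} (hm : 2 ≤ m) (hq1 : q 1 = y) (hqm : q m = w)
    (hqa : ∀ i, 1 ≤ i → i < m → G.Adj (q i) (q (i + 1)))
    (hqd : ∀ i, 1 ≤ i → i ≤ m → G.dist v (q i) = i)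
    (hqC : ∀ i, 1 ≤ i → i < m → q i ∉ M.touch (M.cyc e)) :
    ∃ C s P1 P2, Sep G v C s P1 P2 ∧ u ∉ cside v C s 1 ∧
      (z ∉ cside v C s 1 ∨ z' ∉ cside v C s 1) ∧
      Fintype.card V ≤ 6 * (cside v C s 1).ncard + 1 := by
  classical
  set s := M.fil e with hs
  have hbds : bd s = M.cyc e := M.bd_fil he
  have hpx : box M.N px := by rcases hends with h | h <;> [rw [← h.1]; rw [← h.2]]; exacts [he.1, he.2]
  have hpx' : box M.N px' := by rcases hends with h | h <;> [rw [← h.2]; rw [← h.1]]; exacts [he.2, he.1]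
  have hcyc : M.cyc e = sg e + M.gam px + M.gam px' := by
    unfold cyc
    rcases hends with ⟨h1, h2⟩ | ⟨h1, h2⟩ <;> rw [h1, h2]
    funext x; simp only [Pi.add_apply]; ring
  have hnt : ¬ M.tree e := by
    intro h
    apply huy
    have : ∀ f, s f = 0 := by intro f; rw [hs]; unfold fil; rw [M.cyc_tree h, ffill_zero]
    rw [this, this]
  have hrne : ∀ g, g ≠ v → M.r g ≠ M.r v := fun g hg h => hg (by rw [← M.col_r g, h, M.col_r])
  -- edges of the cycle at r g
  have honx : ∀ g, g ≠ v → g ∈ Anc tpar (M.col px) → g ∉ Anc tpar (M.col px') →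
      M.cyc e (M.pe (M.r g)) ≠ 0 := by
    intro g hg h1 h2
    have a1 := (M.gam_r T hpx hg).2 h1
    have a2 : M.gam px' (M.pe (M.r g)) = 0 := by
      by_contra h; exact h2 ((M.gam_r T hpx' hg).1 h)
    have a3 : sg e (M.pe (M.r g)) = 0 := by
      by_contra h; exact hnt ⟨_, M.r_box g, hrne g hg, (sg_ne h).symm⟩
    rw [hcyc]; simp only [Pi.add_apply, a2, a3, zero_add, add_zero]; exact a1
  have honx' : M.cyc e (M.pe (M.r z')) ≠ 0 := by
    have a1 := (M.gam_r T hpx' hzv').2 hz'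
    have a2 : M.gam px (M.pe (M.r z')) = 0 := by
      by_contra h; exact hzn' ((M.gam_r T hpx hzv').1 h)
    have a3 : sg e (M.pe (M.r z')) = 0 := by
      by_contra h; exact hnt ⟨_, M.r_box z', hrne z' hzv', (sg_ne h).symm⟩
    rw [hcyc]; simp only [Pi.add_apply, a2, a3, zero_add]; exact a1
  have hlevz := T.lev_one hzv hzt
  have hlevw : G.dist v w = m := by rw [← hqm]; exact hqd m (by omega) le_rfl
  have hzw : z ∈ Anc tpar w := T.comp hw hz (by omega)
  have hwn : w ∉ Anc tpar (M.col px') := fun h => hzn (Anc_trans h hzw)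
  have hC1 := honx z hzv hz hzn
  have hC2 := honx w hwv hw hwn
  -- the sides
  obtain ⟨α, hα⟩ : ∃ α, s (M.rep u) = α := ⟨_, rfl⟩
  have hσ : s (M.rep y) = α + 1 := by
    rw [hα] at huy
    have := z2_ne_iff.1 huy
    linear_combination this - z2_add_self α
  -- a face with the given value at both ends
  have hfaceα : ∀ g, g ≠ v → M.cyc e (M.pe (M.r g)) ≠ 0 → ∃ f, M.hasF g f ∧ s f = α := by
    intro g hg h
    rw [← hbds] at h
    have hat : src (M.pe (M.r g)) = M.r g ∨ tgt (M.pe (M.r g)) = M.r g := by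
      rcases M.pe_ends _ (M.r_box g) (hrne g hg) with h | h
      exacts [Or.inl h.1, Or.inr h.1]
    by_cases h1 : s (lf (M.pe (M.r g))) = α
    · exact ⟨_, ⟨M.r g, M.r_box g, M.col_r g, _, hat, Or.inl rfl⟩, h1⟩
    · refine ⟨_, ⟨M.r g, M.r_box g, M.col_r g, _, hat, Or.inr rfl⟩, ?_⟩
      have h2 : s (lf (M.pe (M.r g))) ≠ s (rf (M.pe (M.r g))) := fun hh => h (z2_add_eq_zero.2 hh)
      revert h1 h2
      generalize s (lf (M.pe (M.r g))) = a
      generalize s (rf (M.pe (M.r g))) = b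
      clear * -
      revert a b α; decide
  -- chords
  have hyoff : ∀ e', (src e' = M.r y ∨ tgt e' = M.r y) → bd s e' = 0 := by
    rw [hbds]; exact M.untouched_pt (by rw [M.col_r]; exact hy)
  have hatry : atP (M.rep y) (M.r y) := atP_src_l (.d (M.r y).1 (M.r y).2)
  have hparz : M.col (M.par (M.r z)) = v := by rw [M.par_r z hzv, hzt]
  obtain ⟨h1, D1, hb1, hon1, hc1, hv1, hD1⟩ := M.chord s {y, v} (p := M.r y) (q := M.par (M.r z))
    ((M.stps_adj (by simp) (by simp) hay.symm).trans
      (M.stps_symm _ (M.stps_blob (by simp) (M.par_box _ (M.r_box z) (hrne z hzv)) hparz)))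
    ⟨M.pe (M.r z), by
      rcases M.pe_ends _ (M.r_box z) (hrne z hzv) with h | h
      exacts [Or.inr h.2, Or.inl h.2], by rw [hbds]; exact hC1⟩ hyoff _ hatry
  set Q : Set V := {g | ∃ i, 1 ≤ i ∧ i ≤ m ∧ q i = g} with hQ
  have hQmem : ∀ i, 1 ≤ i → i ≤ m → q i ∈ Q := fun i h h' => ⟨i, h, h', rfl⟩
  have hwalk : ∀ i, 1 ≤ i → i ≤ m → Relation.ReflTransGen (M.stp Q) (M.r y) (M.r (q i)) := by
    intro i h1
    induction i, h1 using Nat.le_induction with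
    | base => intro _; rw [hq1]
    | succ i hi ih =>
      intro h
      exact (ih (by omega)).trans (M.stps_adj (hQmem i hi (by omega)) (hQmem _ (by omega) h)
        (hqa i hi (by omega)))
  obtain ⟨h2, D2, hb2, hon2, hc2, hv2, hD2⟩ := M.chord s Q (p := M.r y) (q := M.r w)
    (by rw [← hqm]; exact hwalk m (by omega) le_rfl)
    ⟨M.pe (M.r w), by
      rcases M.pe_ends _ (M.r_box w) (hrne w hwv) with h | h
      exacts [Or.inl h.1, Or.inr h.1], by rw [hbds]; exact hC2⟩ hyoff _ hatry
  have hcv : M.col h1 = v := by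
    have := M.on_touch hon1
    rw [hbds] at this
    rcases hc1 with h | h
    · rw [h] at this; exact absurd this hy
    · exact h
  have hcw : M.col h2 = w := by
    have := M.on_touch hon2
    rw [hbds] at this
    obtain ⟨i, hi1, hi2, hi3⟩ := hc2
    rcases Nat.lt_or_ge i m with h | h
    · rw [← hi3] at this; exact absurd this (hqC i hi1 h)
    · rw [← hi3, ← hqm]; congr 1; omega
  set D : Chain := D1 + D2 with hD
  have hDs : ∀ e', D e' ≠ 0 → s (lf e') = α + 1 ∧ s (rf e') = α + 1 := by
    intro e' h
    rw [← hσ]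
    rcases add_ne h with h | h
    exacts [(hD1 e' h).2, (hD2 e' h).2]
  have hvD : ∀ x, vsum D x = (if h1 = x then 1 else 0) + (if h2 = x then 1 else 0) := by
    intro x
    rw [hD, vsum_add, hv1, hv2]
    linear_combination z2_add_self (if M.r y = x then (1 : ZMod 2) else 0)
  set C' : Chain := D + (M.cyc e + (M.gam h1 + M.gam h2)) with hC'
  have hvC' : ∀ x, vsum C' x = 0 := by
    intro x
    rw [hC', vsum_add D, hvD, vsum_add, vsum_add, M.vsum_cyc he, M.vsum_gam hb1, M.vsum_gam hb2]
    linear_combination z2_add_self (if h1 = x then (1 : ZMod 2) else 0)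
      + z2_add_self (if h2 = x then (1 : ZMod 2) else 0)
      + z2_add_self (if M.r v = x then (1 : ZMod 2) else 0)
  set s' : LF → ZMod 2 := ffill C' + (fun _ => ffill C' (M.rep u)) with hs'
  have hbds' : bd s' = C' := by rw [hs', vsum_bdadd, bd_ffill _ hvC']
  have hs'u : s' (M.rep u) = 0 := by rw [hs']; exact z2_add_self _
  -- key claim
  have hkey : ∀ f, s f = α → s' f = 0 := by
    set X : LF → ZMod 2 := fun f => (s f + α + 1) * s' f with hX
    have hXu : X (M.rep u) = 0 := by simp [hX, hs'u]
    have hXy : X (M.rep y) = 0 := by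
      simp only [hX, hσ]
      linear_combination (s' (M.rep y)) * (z2_add_self α + z2_add_self 1)
    have hsupp : ∀ e', bd X e' ≠ 0 → e' = e ∨ M.tree e' := by
      intro e' h
      have hD0 : D e' = 0 := by
        by_contra hD0
        obtain ⟨a, b⟩ := hDs e' hD0
        apply h
        simp only [bd, hX, a, b]
        linear_combination (s' (lf e') + s' (rf e')) * (z2_add_self α + z2_add_self 1)
      by_contra hn
      push Not at hn
      have hc0 : M.cyc e e' = 0 := by
        by_contra h'
        rcases M.cyc_supp he h' with h' | h'
        exacts [hn.1 h', hn.2 h']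
      have hg1 : M.gam h1 e' = 0 := by
        by_contra h'; exact hn.2 (M.gam_tree hb1 h')
      have hg2 : M.gam h2 e' = 0 := by
        by_contra h'; exact hn.2 (M.gam_tree hb2 h')
      have e1 : s (lf e') = s (rf e') := by
        have := congrFun hbds e'
        rw [hc0] at this
        exact z2_add_eq_zero.1 this
      have e2 : s' (lf e') = s' (rf e') := by
        have := congrFun hbds' e'
        rw [hC'] at this
        simp only [Pi.add_apply, hD0, hc0, hg1, hg2, add_zero] at this
        exact z2_add_eq_zero.1 this
      apply h
      simp only [bd, hX, e1, e2]
      exact z2_add_self _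
    have hfin : ∀ f, X f = 0 := by
      rcases z2_cases (bd X e) with ha | ha
      · have : bd X = 0 := by
          apply M.tree_cycle (vsum_bd X)
          intro e' h
          rcases hsupp e' h with h' | h'
          · rw [h'] at h; exact absurd ha h
          · exact h'
        intro f
        rw [bd_conn X this f, ← bd_conn X this (M.rep u), hXu]
      · exfalso
        have : bd X + M.cyc e = 0 := by
          apply M.tree_cycle
          · intro p; rw [vsum_add, vsum_bd, M.vsum_cyc he, add_zero]
          · intro e' h
            by_cases hee : e' = e
            · rw [hee, Pi.add_apply, ha, M.cyc_self he hnt] at h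
              exact absurd (z2_add_self 1) h
            · rcases add_ne h with h | h
              · exact (hsupp e' h).resolve_left hee
              · exact (M.cyc_supp he h).resolve_left hee
        rw [← hbds, ← bd_add] at this
        have a1 := bd_conn _ this (M.rep u)
        rw [← bd_conn _ this (M.rep y)] at a1
        simp only [Pi.add_apply, hXu, hXy, zero_add] at a1
        exact huy a1
    intro f hf
    have := hfin f
    simp only [hX, hf] at this
    linear_combination this - (s' f) * z2_add_self α
  set sTT : LF → ZMod 2 := s + s' + (fun _ => α) with hsTT
  have hbdsTT : bd sTT = D + (M.gam h1 + M.gam h2) := by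
    rw [hsTT, vsum_bdadd, bd_add, hbds, hbds', hC']
    funext x
    simp only [Pi.add_apply]
    linear_combination z2_add_self (M.cyc e x)
  have hkeyTT : ∀ f, s f = α → sTT f = 0 := by
    intro f hf
    simp only [hsTT, Pi.add_apply, hkey f hf, hf, add_zero]
    exact z2_add_self α
  -- colours
  set Q' : Set V := {g | ∃ i, 1 ≤ i ∧ i < m ∧ q i = g} with hQ'
  have hQQ' : ∀ g ∈ Q, g ∈ Q' ∨ g = w := by
    rintro g ⟨i, a, b, rfl⟩
    rcases Nat.lt_or_ge i m with h | h
    · exact Or.inl ⟨i, a, h, rfl⟩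
    · right; rw [← hqm]; congr 1; omega
  have hyQ' : y ∈ Q' := ⟨1, le_rfl, by omega, hq1⟩
  have hlevQ' : ∀ g ∈ Q', ∀ h ∈ Q', G.dist v g = G.dist v h → g = h := by
    rintro _ ⟨i, a, b, rfl⟩ _ ⟨j, a', b', rfl⟩ hij
    rw [hqd i a b.le, hqd j a' b'.le] at hij; rw [hij]
  have hlevuu : G.dist v u = 1 := SimpleGraph.dist_eq_one_iff_adj.2 hau
  have hlevz' := T.lev_one hzv' hzt'
  have huQ' : ∀ g ∈ Q', G.dist v g = 1 → g = y := by
    intro g hg h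
    refine hlevQ' g hg y hyQ' ?_
    rw [h]; exact (SimpleGraph.dist_eq_one_iff_adj.2 hay).symm
  have hyu : u ≠ y := by rintro rfl; exact huy rfl
  have hzz' : z ≠ z' := by rintro rfl; exact hzn hz'
  have htz : ∀ g, g ≠ v → M.cyc e (M.pe (M.r g)) ≠ 0 → g ∈ M.touch (M.cyc e) := by
    intro g hg h
    refine ⟨_, h, ?_⟩
    rcases M.pe_ends _ (M.r_box g) (hrne g hg) with h | h
    · left; rw [h.1, M.col_r]
    · right; rw [h.1, M.col_r]
  have hzu : u ≠ z := by rintro rfl; exact hu (htz _ hzv hC1)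
  have hzu' : u ≠ z' := by rintro rfl; exact hu (htz _ hzv' honx')
  have hzy : z ≠ y := by rintro rfl; exact hy (htz _ hzv hC1)
  have hzy' : z' ≠ y := by rintro rfl; exact hy (htz _ hzv' honx')
  have huv : u ≠ v := hau.ne'
  have hfu : M.hasF u (M.rep u) := M.hasF_rep u
  obtain ⟨fz, hfz, hfzα⟩ := hfaceα z hzv hC1
  obtain ⟨fz', hfz', hfzα'⟩ := hfaceα z' hzv' honx'
  have hDcol : ∀ e', D e' ≠ 0 → M.ecol ({v} ∪ Q' ∪ {w}) e' := by
    intro e' h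
    rcases add_ne h with h | h
    · refine M.ecol_mono ?_ (hD1 e' h).1
      rintro g (rfl | rfl)
      · exact Or.inl (Or.inr hyQ')
      · exact Or.inl (Or.inl rfl)
    · refine M.ecol_mono ?_ (hD2 e' h).1
      intro g hg
      rcases hQQ' g hg with h | h
      · exact Or.inl (Or.inr h)
      · exact Or.inr h
  have hg1col : ∀ e', M.gam h1 e' ≠ 0 → M.ecol {v} e' := by
    intro e' h
    refine M.ecol_mono ?_ (M.gam_col0 T hb1 h)
    intro g hg; rw [hcv] at hg; exact T.Anc_root hg
  set P1 : Set V := Q' ∪ {g | g ∈ Anc tpar (M.col px) ∧ w ∈ Anc tpar g} with hP1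
  have hwP1 : w ∈ P1 := Or.inr ⟨hw, Anc_self _ _⟩
  have hcol' : ∀ e', bd s' e' ≠ 0 → M.ecol ({v} ∪ P1 ∪ Anc tpar (M.col px')) e' := by
    intro e' h
    have hre : bd s' e' = (D + M.gam h1 + sg e + M.gam px' + (M.gam px + M.gam (M.r w))
        + (M.gam h2 + M.gam (M.r w))) e' := by
      rw [hbds', hC', hcyc]
      simp only [Pi.add_apply]
      linear_combination (-1 : ZMod 2) * z2_add_self (M.gam (M.r w) e')
    rw [hre] at h
    rcases add_ne h with h | h
    · rcases add_ne h with h | h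
      · rcases add_ne h with h | h
        · rcases add_ne h with h | h
          · rcases add_ne h with h | h
            · refine M.ecol_mono ?_ (hDcol e' h)
              rintro g ((h | h) | rfl)
              · exact Or.inl (Or.inl h)
              · exact Or.inl (Or.inr (Or.inl h))
              · exact Or.inl (Or.inr hwP1)
            · exact M.ecol_mono (fun g hg => Or.inl (Or.inl hg)) (hg1col e' h)
          · rw [sg_ne h]
            have k1 : M.col px ∈ ({v} ∪ P1 ∪ Anc tpar (M.col px') : Set V) :=
              Or.inl (Or.inr (Or.inr ⟨Anc_self _ _, hw⟩))
            have k2 : M.col px' ∈ ({v} ∪ P1 ∪ Anc tpar (M.col px') : Set V) :=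
              Or.inr (Anc_self _ _)
            unfold ecol
            rcases hends with ⟨a, b⟩ | ⟨a, b⟩ <;> rw [a, b]
            exacts [⟨k1, k2⟩, ⟨k2, k1⟩]
        · exact M.ecol_mono (fun g hg => Or.inr hg) (M.gam_col0 T hpx' h)
      · exact M.ecol_mono (fun g hg => Or.inl (Or.inr (Or.inr hg))) (M.gam_col T hpx hw h)
    · refine M.ecol_mono ?_ (M.gam_col T hb2 (w := w) (by rw [hcw]; exact Anc_self _ _) h)
      rintro g ⟨a, b⟩
      rw [hcw] at a
      exact Or.inl (Or.inr (Or.inr ⟨Anc_trans hw a, b⟩))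
  have hcolTT : ∀ e', bd sTT e' ≠ 0 → M.ecol ({v} ∪ Q' ∪ Anc tpar w) e' := by
    intro e' h
    rw [hbdsTT] at h
    rcases add_ne h with h | h
    · refine M.ecol_mono ?_ (hDcol e' h)
      rintro g (h | rfl)
      · exact Or.inl h
      · exact Or.inr (Anc_self _ _)
    · rcases add_ne h with h | h
      · exact M.ecol_mono (fun g hg => Or.inl (Or.inl hg)) (hg1col e' h)
      · refine M.ecol_mono (fun g hg => Or.inr ?_) (M.gam_col0 T hb2 h)
        rw [hcw] at hg; exact hg
  have hlevP1 : ∀ g ∈ P1, ∀ h ∈ P1, G.dist v g = G.dist v h → g = h := by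
    have hx : ∀ g ∈ Q', G.dist v g < m := by
      rintro _ ⟨i, a, b, rfl⟩; rw [hqd i a b.le]; exact b
    have hx' : ∀ g, w ∈ Anc tpar g → m ≤ G.dist v g := by
      intro g hg; rw [← hlevw]; exact T.lev_le hg
    rintro g (hg | ⟨a, b⟩) h (hh | ⟨a', b'⟩) hgh
    · exact hlevQ' g hg h hh hgh
    · have := hx g hg; have := hx' h b'; omega
    · have := hx h hh; have := hx' g b; omega
    · exact T.lev_inj a a' hgh
  have hlevP1' : ∀ g ∈ P1, G.dist v g = 1 → g = y := by
    rintro g (hg | ⟨a, b⟩) h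
    · exact huQ' g hg h
    · have := T.lev_le b; omega
  have hsep' := M.mk_sep hcol' hlevP1 (fun g hg h hh => T.lev_inj hg hh)
  have hsep'' := M.mk_sep hcolTT hlevQ' (fun g hg h hh => T.lev_inj hg hh)
  -- counting
  have hcov : M.cl s (α + 1) ⊆ M.cl s' 1 ∪ M.cl sTT 1 := by
    rintro g ⟨hg, f, hf, hff⟩
    rcases z2_cases (s' f) with h | h
    · right
      refine ⟨hg, f, hf, ?_⟩
      simp only [hsTT, Pi.add_apply, hff, h]
      linear_combination z2_add_self α
    · left; exact ⟨hg, f, hf, h⟩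
  have hcard := hbig (α + 1)
  have k1 := Set.ncard_le_ncard hcov (Set.toFinite _)
  have k2 := Set.ncard_union_le (M.cl s' 1) (M.cl sTT 1)
  by_cases hc : Fintype.card V ≤ 6 * (M.cl s' 1).ncard + 1
  · refine ⟨_, _, _, _, hsep', ?_, Or.inl ?_, ?_⟩
    · refine M.not_cside ?_ _ hfu (by rw [hs'u]; exact zero_ne_one)
      intro h
      rcases hsep'.sub u h huv with h | h
      · exact hyu (hlevP1' u h hlevuu)
      · exact hzu' (T.lev_inj h hz' (by omega))
    · refine M.not_cside ?_ _ hfz (by rw [hkey _ hfzα]; exact zero_ne_one)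
      intro h
      rcases hsep'.sub z h hzv with h | h
      · exact hzy (hlevP1' z h hlevz)
      · exact hzn h
    · have := Set.ncard_le_ncard (M.cl_cside s' 1) (Set.toFinite _)
      omega
  · refine ⟨_, _, _, _, hsep'', ?_, Or.inr ?_, ?_⟩
    · refine M.not_cside ?_ _ hfu (by rw [hkeyTT _ hα]; exact zero_ne_one)
      intro h
      rcases hsep''.sub u h huv with h | h
      · exact hyu (huQ' u h hlevuu)
      · exact hzu (T.lev_inj h hzw (by omega))
    · refine M.not_cside ?_ _ hfz' (by rw [hkeyTT _ hfzα']; exact zero_ne_one)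
      intro h
      rcases hsep''.sub z' h hzv' with h | h
      · exact hzy' (huQ' z' h hlevz')
      · exact hzn' (Anc_trans hw h)
    · have := Set.ncard_le_ncard (M.cl_cside sTT 1) (Set.toFinite _)
      omega

end LModel
end FF

namespace FF
namespace LModel
variable {V : Type} {G : SimpleGraph V} {v : V} {tpar : V → V}

theorem sep_main [Fintype V] (M : LModel G v tpar) (hconn : G.Connected) (T : STree G v tpar) (hV : 2 ≤ Fintype.card V) :
    ∃ (x x' : V) (C : Set V) (s : V → ZMod 2), Sep G v C s (Anc tpar x) (Anc tpar x') ∧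
      (∀ i, Fintype.card V ≤ 3 * (cside v C s i).ncard + 1) ∧
      (v ∈ C → ∀ z, z ≠ v → z ∈ Anc tpar x → z ∉ Anc tpar x') ∧
      (∀ z z' u y w, G.Adj v z → G.Adj v z' → z ∈ Anc tpar x → z ∉ Anc tpar x' →
        z' ∈ Anc tpar x' → z' ∉ Anc tpar x → u ∉ C → y ∉ C → G.Adj v u → G.Adj v y →
        s u ≠ s y → w ∈ C → w ≠ v → G.dist y w + 1 = G.dist v w →
        ∃ C' s' P1 P2, Sep G v C' s' P1 P2 ∧ u ∉ cside v C' s' 1 ∧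
          (z ∉ cside v C' s' 1 ∨ z' ∉ cside v C' s' 1) ∧
          Fintype.card V ≤ 6 * (cside v C' s' 1).ncard + 1) := by
  classical
  obtain ⟨e, he, hbig⟩ := M.parity hV
  have hbd := M.bd_fil he
  have hcol : ∀ e', bd (M.fil e) e' ≠ 0 →
      M.ecol ({v} ∪ Anc tpar (M.col (src e)) ∪ Anc tpar (M.col (tgt e))) e' := by
    intro e' h
    rw [hbd] at h
    unfold cyc at h
    rcases add_ne h with h | h
    · rcases add_ne h with h | h
      · rw [sg_ne h]
        exact ⟨Or.inl (Or.inr (Anc_self _ _)), Or.inr (Anc_self _ _)⟩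
      · exact M.ecol_mono (fun g hg => Or.inl (Or.inr hg)) (M.gam_col0 T he.1 h)
    · exact M.ecol_mono (fun g hg => Or.inr hg) (M.gam_col0 T he.2 h)
  refine ⟨M.col (src e), M.col (tgt e), M.touch (bd (M.fil e)), fun g => M.fil e (M.rep g),
    M.mk_sep hcol (fun g hg h hh => T.lev_inj hg hh) (fun g hg h hh => T.lev_inj hg hh), ?_, ?_, ?_⟩
  · intro i
    have h1 := hbig i
    have h2 := Set.ncard_le_ncard (M.cl_cside (M.fil e) i) (Set.toFinite _)
    omega
  · intro hvC z hz hx hx'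
    have hvn : ∀ g, z ∈ Anc tpar g → g ≠ v := by
      rintro g h rfl; exact hz (T.Anc_root h)
    have : ∀ e', bd (M.fil e) e' ≠ 0 → M.ecol {g | g ≠ v} e' := by
      intro e' h
      have hre : bd (M.fil e) e' = (sg e + (M.gam (src e) + M.gam (M.r z))
        + (M.gam (tgt e) + M.gam (M.r z))) e' := by
        rw [hbd]; unfold cyc
        simp only [Pi.add_apply]
        linear_combination (-1 : ZMod 2) * z2_add_self (M.gam (M.r z) e')
      rw [hre] at h
      rcases add_ne h with h | h
      · rcases add_ne h with h | h
        · rw [sg_ne h]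
          exact ⟨hvn _ hx, hvn _ hx'⟩
        · exact M.ecol_mono (fun g hg => hvn g hg.2) (M.gam_col T he.1 hx h)
      · exact M.ecol_mono (fun g hg => hvn g hg.2) (M.gam_col T he.2 hx' h)
    exact M.touch_sub this hvC rfl
  · intro z z' u y w hz hz' hzx hzx' hzx2 hzx2' hu hy hau hay hsuy hw hwv hyw
    -- choose w of minimal level
    obtain ⟨w0, ⟨hw0C, hw0v, hyw0⟩, hmin⟩ := Set.exists_min_image
      {w | w ∈ M.touch (bd (M.fil e)) ∧ w ≠ v ∧ G.dist y w + 1 = G.dist v w} (fun w => G.dist v w)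
      (Set.toFinite _) ⟨w, hw, hwv, hyw⟩
    have htz : ∀ z, G.Adj v z → tpar z = v := by
      intro z hz
      have h1 := SimpleGraph.dist_eq_one_iff_adj.2 hz
      have h2 := T.lev z hz.ne'
      have h3 : G.dist v (tpar z) = 0 := by omega
      exact ((hconn v (tpar z)).dist_eq_zero_iff.1 h3).symm
    obtain ⟨p, hp⟩ := (hconn y w0).exists_walk_length_eq_dist
    set m := G.dist v w0 with hm
    have hplen : p.length + 1 = m := by omega
    have hlevy := SimpleGraph.dist_eq_one_iff_adj.2 hay
    have hne : y ≠ w0 := by rintro rfl; exact hy hw0C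
    have hpd : ∀ i, i ≤ p.length → G.dist v (p.getVert i) = i + 1 ∧
        G.dist y (p.getVert i) = i := by
      intro i hi
      have a1 : G.dist y (p.getVert i) ≤ i := by
        have := SimpleGraph.dist_le (p.take i)
        rw [SimpleGraph.Walk.take_length] at this
        omega
      have a2 : G.dist (p.getVert i) w0 ≤ p.length - i := by
        have := SimpleGraph.dist_le (p.drop i)
        rw [SimpleGraph.Walk.drop_length] at this
        exact this
      have a3 : G.dist v w0 ≤ G.dist v (p.getVert i) + G.dist (p.getVert i) w0 :=
        hconn.dist_triangle
      have a4 : G.dist v (p.getVert i) ≤ G.dist v y + G.dist y (p.getVert i) :=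
        hconn.dist_triangle
      omega
    have hqC : ∀ i, 1 ≤ i → i < m → p.getVert (i - 1) ∉ M.touch (M.cyc e) := by
      intro i h1 h2 h3
      rw [← hbd] at h3
      have hd := hpd (i - 1) (by omega)
      have hnv : p.getVert (i - 1) ≠ v := by
        intro h
        rw [h, SimpleGraph.dist_self] at hd; omega
      have := hmin _ ⟨h3, hnv, by omega⟩
      omega
    have hmm : 2 ≤ m := by
      have : 0 < G.dist y w0 := (hconn y w0).pos_dist_of_ne hne
      omega
    have hqa : ∀ i, 1 ≤ i → i < m → G.Adj (p.getVert (i - 1)) (p.getVert (i + 1 - 1)) := by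
      intro i h1 h2
      have := p.adj_getVert_succ (i := i - 1) (by omega)
      rwa [show i - 1 + 1 = i + 1 - 1 by omega] at this
    have hqm : p.getVert (m - 1) = w0 := by
      rw [← hplen]; simp
    have hu' : u ∉ M.touch (M.cyc e) := by rw [← hbd]; exact hu
    have hy' : y ∉ M.touch (M.cyc e) := by rw [← hbd]; exact hy
    have hS := M.mk_sep hcol (fun g hg h hh => T.lev_inj hg hh) (fun g hg h hh => T.lev_inj hg hh)
    rcases hS.sub w0 hw0C hw0v with hwx | hwx
    · exact M.reroute T he (Or.inl ⟨rfl, rfl⟩) hbig hz.ne' (htz z hz) hzx hzx' hz'.ne' (htz z' hz')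
        hzx2 hzx2' hu' hy' hau hay hsuy hwx hw0v (q := fun i => p.getVert (i - 1)) hmm (by simp)
        hqm hqa (fun i h1 h2 => by have := (hpd (i - 1) (by omega)).1; simp only [this]; omega) hqC
    · obtain ⟨C', s', P1, P2, r1, r2, r3, r4⟩ :=
        M.reroute T he (Or.inr ⟨rfl, rfl⟩) hbig hz'.ne' (htz z' hz') hzx2 hzx2' hz.ne' (htz z hz)
        hzx hzx' hu' hy' hau hay hsuy hwx hw0v (q := fun i => p.getVert (i - 1)) hmm (by simp)
        hqm hqa (fun i h1 h2 => by have := (hpd (i - 1) (by omega)).1; simp only [this]; omega) hqC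
      exact ⟨C', s', P1, P2, r1, r2, r3.symm, r4⟩

end LModel
end FF

namespace FF

/-- face families with Euler's inequality -/
def EulerFam {V : Type} [Fintype V] (G : SimpleGraph V) : Prop :=
  ∃ (ι : Type) (_ : Fintype ι) (D : ι → Set (Sym2 V)),
    G.edgeSet.ncard + 2 ≤ Fintype.card ι + Fintype.card V ∧
    (∀ i, D i ⊆ G.edgeSet) ∧
    (∀ i g, Even {E | E ∈ D i ∧ g ∈ E}.ncard) ∧
    (∀ E, {i | E ∈ D i}.ncard ≤ 2) ∧
    (2 ≤ Fintype.card ι → ∀ i, (D i).Nonempty) ∧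
    (3 ≤ Fintype.card ι → Function.Injective D)

namespace LModel
variable {V : Type} {G : SimpleGraph V} {v : V} {tpar : V → V}

theorem blob_sum (M : LModel G v tpar) (c : Chain) (hc : ∀ p, vsum c p = 0)
    (hbox : ∀ e, c e ≠ 0 → M.ebox e) (D : Finset (Sym2 V)) (κ : Sym2 V → LE)
    (hκ : ∀ E ∈ D, s(M.col (src (κ E)), M.col (tgt (κ E))) = E)
    (hloop : ∀ E ∈ D, ¬ E.IsDiag)
    (hcD : ∀ E ∈ D, c (κ E) ≠ 0)
    (hDc : ∀ e, c e ≠ 0 → M.col (src e) ≠ M.col (tgt e) →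
      s(M.col (src e), M.col (tgt e)) ∈ D ∧ κ s(M.col (src e), M.col (tgt e)) = e) (g : V) :
    Even {E | E ∈ D ∧ g ∈ E}.ncard := by
  classical
  set B : Finset Pt := ((Finset.range (M.N + 1)) ×ˢ (Finset.range (M.N + 1))).filter
    (fun p => M.col p = g) with hB
  have hmB : ∀ p, p ∈ B ↔ box M.N p ∧ M.col p = g := by
    intro p
    simp only [hB, Finset.mem_filter, Finset.mem_product, Finset.mem_range, box]
    constructor <;> rintro ⟨⟨a, b⟩, d⟩ <;> exact ⟨⟨by omega, by omega⟩, d⟩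
  set U : Finset LE := B.biUnion inc with hU
  have h0 : ∑ p ∈ B, vsum c p = 0 := Finset.sum_eq_zero (fun p _ => hc p)
  have h1 : ∀ p ∈ B, vsum c p = ∑ e ∈ U, c e * ((if src e = p then 1 else 0) + (if tgt e = p then 1 else 0)) := by
    intro p hp
    unfold vsum
    have hsub : inc p ⊆ U := Finset.subset_biUnion_of_mem inc hp
    rw [← Finset.sum_subset hsub]
    · apply Finset.sum_congr rfl
      intro e he
      have h3 := src_ne_tgt e
      rcases (mem_inc e p).1 he with h | h
      · have : tgt e ≠ p := by rw [← h]; exact h3.symm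
        simp [h, this]
      · have : src e ≠ p := by rw [← h]; exact h3
        simp [h, this]
    · intro e _ he
      rw [mem_inc] at he
      push Not at he
      simp [he.1, he.2]
  rw [Finset.sum_congr rfl h1, Finset.sum_comm] at h0
  have h2 : ∀ e ∈ U, ∑ p ∈ B, c e * ((if src e = p then (1 : ZMod 2) else 0) + (if tgt e = p then 1 else 0))
      = c e * ((if src e ∈ B then 1 else 0) + (if tgt e ∈ B then 1 else 0)) := by
    intro e _
    rw [← Finset.mul_sum, Finset.sum_add_distrib, Finset.sum_ite_eq, Finset.sum_ite_eq]
  rw [Finset.sum_congr rfl h2] at h0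
  set D' : Finset (Sym2 V) := D.filter (fun E => g ∈ E) with hD'
  have hinj : Set.InjOn κ D' := by
    intro E hE E' hE' h
    rw [← hκ E (Finset.mem_filter.1 hE).1, h, hκ E' (Finset.mem_filter.1 hE').1]
  have hval : ∀ E ∈ D', κ E ∈ U ∧ c (κ E) * ((if src (κ E) ∈ B then 1 else 0) + (if tgt (κ E) ∈ B then 1 else 0)) = 1 := by
    intro E hE
    obtain ⟨hE1, hE2⟩ := Finset.mem_filter.1 hE
    have hk := hκ E hE1
    have hc1 := hcD E hE1
    have hb := hbox _ hc1
    have hc2 : c (κ E) = 1 := (z2_cases _).resolve_left hc1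
    have hd := hloop E hE1
    rw [← hk, Sym2.mk_isDiag_iff] at hd
    rw [← hk, Sym2.mem_iff] at hE2
    rcases hE2 with h | h
    · have a1 : src (κ E) ∈ B := (hmB _).2 ⟨hb.1, h.symm⟩
      have a2 : tgt (κ E) ∉ B := fun hh => hd (by rw [((hmB _).1 hh).2, h])
      exact ⟨Finset.mem_biUnion.2 ⟨_, a1, (mem_inc _ _).2 (Or.inl rfl)⟩, by simp [a1, a2, hc2]⟩
    · have a1 : tgt (κ E) ∈ B := (hmB _).2 ⟨hb.2, h.symm⟩
      have a2 : src (κ E) ∉ B := fun hh => hd (by rw [((hmB _).1 hh).2, h])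
      exact ⟨Finset.mem_biUnion.2 ⟨_, a1, (mem_inc _ _).2 (Or.inr rfl)⟩, by simp [a1, a2, hc2]⟩
  rw [← Finset.sum_subset (s₁ := D'.image κ)] at h0
  · rw [Finset.sum_image hinj, Finset.sum_congr rfl (fun E hE => (hval E hE).2)] at h0
    rw [Finset.sum_const, nsmul_eq_mul, mul_one] at h0
    have : {E | E ∈ D ∧ g ∈ E}.ncard = D'.card := by
      rw [← Set.ncard_coe_finset]; congr 1; ext E; simp [hD']
    rw [this]
    exact (ZMod.natCast_eq_zero_iff_even).1 h0
  · intro e he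
    obtain ⟨E, hE, rfl⟩ := Finset.mem_image.1 he
    exact (hval E hE).1
  · intro e _ he
    by_contra hne
    have hce : c e ≠ 0 := by intro h; rw [h, zero_mul] at hne; exact hne rfl
    have hb := hbox e hce
    have hcol : M.col (src e) ≠ M.col (tgt e) := by
      intro h
      apply hne
      have : (src e ∈ B) ↔ (tgt e ∈ B) := by
        rw [hmB, hmB, h]; simp [hb.1, hb.2]
      simp only [this]
      rw [z2_add_self, mul_zero]
    obtain ⟨k1, k2⟩ := hDc e hce hcol
    apply he
    refine Finset.mem_image.2 ⟨_, ?_, k2⟩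
    rw [hD', Finset.mem_filter]
    refine ⟨k1, ?_⟩
    rw [Sym2.mem_iff]
    by_contra hg
    push Not at hg
    apply hne
    have a1 : src e ∉ B := fun h => hg.1 ((hmB _).1 h).2.symm
    have a2 : tgt e ∉ B := fun h => hg.2 ((hmB _).1 h).2.symm
    simp [a1, a2]

theorem euler_fam [Fintype V] (M : LModel G v tpar) (T : STree G v tpar) : EulerFam G := by
  classical
  -- tree edges
  set TE : Set (Sym2 V) := (fun g => s(g, tpar g)) '' {g | g ≠ v} with hTE
  have hTEsub : TE ⊆ G.edgeSet := by
    rintro _ ⟨g, hg, rfl⟩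
    exact (T.adj g hg).symm
  have hTEinj : Set.InjOn (fun g => s(g, tpar g)) {g | g ≠ v} := by
    intro g hg h hh heq
    simp only [Sym2.eq_iff] at heq
    rcases heq with h1 | h1
    · exact h1.1
    · have := T.lev g hg
      have := T.lev h hh
      rw [h1.2] at *
      rw [← h1.1] at *
      omega
  have hTEcard : TE.ncard + 1 = Fintype.card V := by
    rw [hTE, Set.ncard_image_of_injOn hTEinj]
    have : {g | g ≠ v} = ({v} : Set V)ᶜ := by ext; simp
    rw [this]
    have := Set.ncard_add_ncard_compl ({v} : Set V)
    rw [Set.ncard_singleton, Nat.card_eq_fintype_card] at this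
    omega
  -- tree edges of the lattice with two colours
  have htwo : ∀ e, M.tree e → M.col (src e) ≠ M.col (tgt e) →
      ∃ g, g ≠ v ∧ e = M.pe (M.r g) ∧ s(M.col (src e), M.col (tgt e)) = s(g, tpar g) := by
    rintro e ⟨p, hp, hne, rfl⟩ hcol
    by_cases hr : p = M.r (M.col p)
    · have hv : M.col p ≠ v := by intro h; rw [h] at hr; exact hne hr
      refine ⟨M.col p, hv, by rw [← hr], ?_⟩
      have hpar : M.col (M.par p) = tpar (M.col p) := by
        conv_lhs => rw [hr]
        exact M.par_r _ hv
      rcases M.pe_ends p hp hne with ⟨a, b⟩ | ⟨a, b⟩ <;> rw [a, b, hpar]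
      exact Sym2.eq_swap
    · exfalso
      have := M.par_col p hp hr
      rcases M.pe_ends p hp hne with ⟨a, b⟩ | ⟨a, b⟩ <;> rw [a, b, this] at hcol <;> exact hcol rfl
  have hrne : ∀ g, g ≠ v → M.r g ≠ M.r v := fun g hg h => hg (by rw [← M.col_r g, h, M.col_r])
  have hpeg : ∀ g, g ≠ v → s(M.col (src (M.pe (M.r g))), M.col (tgt (M.pe (M.r g)))) = s(g, tpar g) := by
    intro g hg
    rcases M.pe_ends _ (M.r_box g) (hrne g hg) with ⟨a, b⟩ | ⟨a, b⟩ <;>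
      rw [a, b, M.col_r, M.par_r g hg]
    exact Sym2.eq_swap
  -- κ
  have hκex : ∀ E : Sym2 V, ∃ e, E ∈ G.edgeSet → M.ebox e ∧ s(M.col (src e), M.col (tgt e)) = E ∧
      (∀ g, g ≠ v → E = s(g, tpar g) → e = M.pe (M.r g)) := by
    intro E
    by_cases hE : E ∈ TE
    · obtain ⟨g, hg, rfl⟩ := hE
      refine ⟨M.pe (M.r g), fun _ => ⟨M.ebox_pe (M.r_box g) (hrne g hg), hpeg g hg, ?_⟩⟩
      intro h hh heq
      rw [hTEinj hg hh heq]
    · induction E using Sym2.ind with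
      | _ a b =>
        by_cases hab : G.Adj a b
        · obtain ⟨e, h1, h2, h3⟩ := M.adj a b hab
          refine ⟨e, fun _ => ⟨⟨h1, h2⟩, ?_, fun g hg h => absurd ⟨g, hg, h.symm⟩ hE⟩⟩
          rcases h3 with ⟨h3, h4⟩ | ⟨h3, h4⟩ <;> rw [h3, h4]
          exact Sym2.eq_swap
        · exact ⟨.h 0 0, fun h => absurd h hab⟩
  choose κ hκ using hκex
  have hndiag : ∀ E ∈ G.edgeSet, ¬ E.IsDiag := fun E hE => G.not_isDiag_of_mem_edgeSet hE
  let K := {E : Sym2 V // E ∈ G.edgeSet ∧ E ∉ TE}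
  have hKcard : Fintype.card K + TE.ncard = G.edgeSet.ncard := by
    have h1 : Fintype.card K = (G.edgeSet \ TE).ncard := by
      rw [← Nat.card_eq_fintype_card, ← Nat.card_coe_set_eq]
      rfl
    rw [h1]
    exact Set.ncard_sdiff_add_ncard_of_subset hTEsub (Set.toFinite _)
  have hKnt : ∀ k : K, ¬ M.tree (κ k.1) := by
    intro k ht
    obtain ⟨h1, h2, h3⟩ := hκ k.1 k.2.1
    have hd := hndiag k.1 k.2.1
    rw [← h2, Sym2.mk_isDiag_iff] at hd
    obtain ⟨g, hg, _, h5⟩ := htwo _ ht hd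
    exact k.2.2 ⟨g, hg, by rw [← h2, h5]⟩
  have hKinj : ∀ k k' : K, κ k.1 = κ k'.1 → k = k' := by
    intro k k' h
    apply Subtype.ext
    rw [← (hκ k.1 k.2.1).2.1, h, (hκ k'.1 k'.2.1).2.1]
  let σ : LF → (K → ZMod 2) := fun f k => M.fil (κ k.1) f
  let ι := {ρ : K → ZMod 2 // ∃ f, σ f = ρ}
  let X : ι → LF → ZMod 2 := fun ρ f => if σ f = ρ.1 then 1 else 0
  let D : ι → Set (Sym2 V) := fun ρ => {E | E ∈ G.edgeSet ∧ bd (X ρ) (κ E) ≠ 0}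
  have hsupp : ∀ ρ e, bd (X ρ) e ≠ 0 → M.tree e ∨ ∃ k : K, e = κ k.1 := by
    intro ρ e he
    have hne : σ (lf e) ≠ σ (rf e) := by
      intro h
      apply he
      simp only [bd, X, h]
      exact z2_add_self _
    obtain ⟨k, hk⟩ := Function.ne_iff.1 hne
    have hc : M.cyc (κ k.1) e ≠ 0 := by
      rw [← M.bd_fil (hκ k.1 k.2.1).1]
      intro h; exact hk (z2_add_eq_zero.1 h)
    rcases M.cyc_supp (hκ k.1 k.2.1).1 hc with h | h
    · exact Or.inr ⟨k, h⟩
    · exact Or.inl h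
  -- vanishing on D means vanishing
  have hvan : ∀ c : Chain, (∀ p, vsum c p = 0) → (∀ e, c e ≠ 0 → M.tree e ∨ ∃ k : K, e = κ k.1) →
      (∀ E ∈ G.edgeSet, c (κ E) = 0) → c = 0 := by
    intro c h1 h2 h3
    apply M.tree_cycle h1
    intro e he
    rcases h2 e he with h | ⟨k, rfl⟩
    · exact h
    · exact absurd (h3 k.1 k.2.1) he
  refine ⟨ι, inferInstance, D, ?_, fun ρ E hE => hE.1, ?_, ?_, ?_, ?_⟩
  · -- Euler
    let F : (Option K → ZMod 2) → (ι → ZMod 2) := fun a ρ => a none + ∑ k, a (some k) * ρ.1 k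
    have hF : Function.Injective F := by
      intro a b hab
      have hf : ∀ f, (a none + b none) + ∑ k, (a (some k) + b (some k)) * M.fil (κ k.1) f = 0 := by
        intro f
        have := congrFun hab ⟨σ f, f, rfl⟩
        simp only [F, σ] at this
        have e1 : ∑ k, (a (some k) + b (some k)) * M.fil (κ k.1) f =
          ∑ k, a (some k) * M.fil (κ k.1) f + ∑ k, b (some k) * M.fil (κ k.1) f := by
          rw [← Finset.sum_add_distrib]; apply Finset.sum_congr rfl; intros; ring
        rw [e1]
        have e2 := z2_add_eq_zero.2 this
        linear_combination e2
      have hk : ∀ k0, a (some k0) = b (some k0) := by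
        intro k0
        have h1 := hf (lf (κ k0.1))
        have h2 := hf (rf (κ k0.1))
        have h3 : ∑ k, (a (some k) + b (some k)) * M.cyc (κ k.1) (κ k0.1) = 0 := by
          have : ∀ k : K, M.cyc (κ k.1) (κ k0.1) = M.fil (κ k.1) (lf (κ k0.1)) + M.fil (κ k.1) (rf (κ k0.1)) := by
            intro k; rw [← M.bd_fil (hκ k.1 k.2.1).1]; rfl
          simp only [this, mul_add]
          rw [Finset.sum_add_distrib]
          linear_combination h1 + h2 - z2_add_self (a none + b none)
        rw [Finset.sum_eq_single k0] at h3
        · rw [M.cyc_self (hκ k0.1 k0.2.1).1 (hKnt k0), mul_one] at h3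
          exact z2_add_eq_zero.1 h3
        · intro k _ hne
          have : M.cyc (κ k.1) (κ k0.1) = 0 := by
            by_contra h
            rcases M.cyc_supp (hκ k.1 k.2.1).1 h with h | h
            · exact hne (hKinj _ _ h).symm
            · exact hKnt k0 h
          rw [this, mul_zero]
        · intro h; exact absurd (Finset.mem_univ _) h
      have h0 : a none = b none := by
        have := hf .out
        simp only [hk, z2_add_self, zero_mul, Finset.sum_const_zero, add_zero] at this
        exact z2_add_eq_zero.1 this
      funext o
      rcases o with _ | k
      exacts [h0, hk k]
    have := Fintype.card_le_of_injective F hF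
    rw [Fintype.card_fun, Fintype.card_fun, ZMod.card, Fintype.card_option] at this
    have := (Nat.pow_le_pow_iff_right (by norm_num)).1 this
    omega
  · intro ρ g
    have := M.blob_sum (bd (X ρ)) (vsum_bd _) (by
      intro e he
      rcases hsupp ρ e he with h | ⟨k, rfl⟩
      · exact M.tree_ebox h
      · exact (hκ k.1 k.2.1).1) (Set.toFinite (D ρ)).toFinset κ
      (by intro E hE; rw [Set.Finite.mem_toFinset] at hE; exact (hκ E hE.1).2.1)
      (by intro E hE; rw [Set.Finite.mem_toFinset] at hE; exact hndiag E hE.1)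
      (by intro E hE; rw [Set.Finite.mem_toFinset] at hE; exact hE.2)
      (by
        intro e he hcol
        have hkey : ∃ E ∈ G.edgeSet, κ E = e ∧ s(M.col (src e), M.col (tgt e)) = E := by
          rcases hsupp ρ e he with h | ⟨k, rfl⟩
          · obtain ⟨g, hg, h1, h2⟩ := htwo e h hcol
            have hE : s(g, tpar g) ∈ G.edgeSet := hTEsub ⟨g, hg, rfl⟩
            exact ⟨_, hE, by rw [h1]; exact (hκ _ hE).2.2 g hg rfl, h2⟩
          · exact ⟨k.1, k.2.1, rfl, (hκ k.1 k.2.1).2.1⟩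
        obtain ⟨E, h1, h2, h3⟩ := hkey
        rw [h3, Set.Finite.mem_toFinset]
        exact ⟨⟨h1, by rw [h2]; exact he⟩, h2⟩) g
    simpa only [Set.Finite.mem_toFinset] using this
  · intro E
    have : {ρ | E ∈ D ρ} ⊆ ({⟨σ (lf (κ E)), _, rfl⟩, ⟨σ (rf (κ E)), _, rfl⟩} : Set ι) := by
      rintro ρ ⟨_, h⟩
      by_contra hn
      apply h
      simp only [Set.mem_insert_iff, Set.mem_singleton_iff, not_or] at hn
      have a1 : σ (lf (κ E)) ≠ ρ.1 := fun h => hn.1 (Subtype.ext h.symm)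
      have a2 : σ (rf (κ E)) ≠ ρ.1 := fun h => hn.2 (Subtype.ext h.symm)
      simp [bd, X, a1, a2]
    refine (Set.ncard_le_ncard this (Set.toFinite _)).trans ?_
    exact (Set.ncard_insert_le _ _).trans (by rw [Set.ncard_singleton])
  · intro hc ρ
    by_contra hn
    rw [Set.not_nonempty_iff_eq_empty] at hn
    have h0 := hvan (bd (X ρ)) (vsum_bd _) (hsupp ρ) (by
      intro E hE
      by_contra h
      have : E ∈ D ρ := ⟨hE, h⟩
      rw [hn] at this; exact this)
    have h1 : ∀ ρ' : ι, ρ' = ρ := by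
      rintro ⟨_, f', rfl⟩
      obtain ⟨f, hf⟩ := ρ.2
      have := (bd_conn _ h0 f').trans (bd_conn _ h0 f).symm
      simp only [X, hf, if_true] at this
      by_contra hne
      have : σ f' ≠ ρ.1 := fun h => hne (Subtype.ext h)
      simp [this] at *
    have : Fintype.card ι ≤ 1 := Fintype.card_le_one_iff.2 (fun a b => (h1 a).trans (h1 b).symm)
    omega
  · intro hc ρ ρ' hD
    by_contra hne
    have hb : ∀ E ∈ G.edgeSet, bd (X ρ) (κ E) = bd (X ρ') (κ E) := by
      intro E hE
      have h1 : (bd (X ρ) (κ E) ≠ 0) ↔ (bd (X ρ') (κ E) ≠ 0) := by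
        have : E ∈ D ρ ↔ E ∈ D ρ' := by rw [hD]
        simpa [D, hE] using this
      rcases z2_cases (bd (X ρ) (κ E)) with a | a <;> rcases z2_cases (bd (X ρ') (κ E)) with b | b <;>
        simp_all
    have h0 := hvan (bd (X ρ + X ρ')) (vsum_bd _) (by
      intro e he
      rw [bd_add] at he
      rcases add_ne he with h | h
      exacts [hsupp _ _ h, hsupp _ _ h]) (by
      intro E hE
      rw [bd_add, Pi.add_apply, hb E hE, z2_add_self])
    have h1 : ∀ ρ'' : ι, ρ'' = ρ ∨ ρ'' = ρ' := by
      rintro ⟨_, f', rfl⟩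
      obtain ⟨f, hf⟩ := ρ.2
      have := (bd_conn _ h0 f').trans (bd_conn _ h0 f).symm
      have hne' : ρ.1 ≠ ρ'.1 := fun h => hne (Subtype.ext h)
      simp only [Pi.add_apply, X, hf, if_true, hne', if_false, add_zero] at this
      by_contra hn
      push Not at hn
      have a1 : σ f' ≠ ρ.1 := fun h => hn.1 (Subtype.ext h)
      have a2 : σ f' ≠ ρ'.1 := fun h => hn.2 (Subtype.ext h)
      simp [a1, a2] at this
    have : Fintype.card ι ≤ 2 := by
      have h2 : (Finset.univ : Finset ι) ⊆ {ρ, ρ'} := by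
        intro x _
        rcases h1 x with h | h <;> simp [h]
      have := Finset.card_le_card h2
      have h3 := Finset.card_le_two (a := ρ) (b := ρ')
      rw [Finset.card_univ] at this
      omega
    omega

end LModel
end FF

namespace FF

def C4Free {V : Type} (G : SimpleGraph V) : Prop :=
  ∀ a b c d, G.Adj a b → G.Adj b c → G.Adj c d → G.Adj d a → a = c ∨ b = d

theorem c4free_of {V : Type} (G : SimpleGraph V)
    (hC4 : ∀ (v : V) (c : G.Walk v v), c.IsCycle → c.length ≠ 4) : C4Free G := by
  intro a b c d h1 h2 h3 h4
  by_contra hn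
  push Not at hn
  refine hC4 a (.cons h1 (.cons h2 (.cons h3 (.cons h4 .nil)))) ?_ rfl
  rw [SimpleGraph.Walk.cons_isCycle_iff]
  have := h1.ne; have := h2.ne; have := h3.ne; have := h4.ne
  refine ⟨?_, ?_⟩
  · simp [SimpleGraph.Walk.isPath_def]
    grind
  · simp [Sym2.eq_iff]
    grind

/-- edges in no triangle -/
def E0 {V : Type} (G : SimpleGraph V) : Set (Sym2 V) :=
  {E | E ∈ G.edgeSet ∧ ∀ a b c, G.Adj a b → G.Adj b c → G.Adj c a → E ≠ s(a, b)}

theorem even_set {V : Type} [Fintype V] {G : SimpleGraph V} (h4 : C4Free G) (D : Set (Sym2 V))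
    (hD : D ⊆ G.edgeSet) (hev : ∀ g, Even {E | E ∈ D ∧ g ∈ E}.ncard) (hne : D.Nonempty) :
    (∃ a b c, G.Adj a b ∧ G.Adj b c ∧ G.Adj c a ∧ D = {s(a, b), s(b, c), s(c, a)}) ∨
      5 ≤ D.ncard := by
  classical
  have key : ∀ g x, s(g, x) ∈ D → ∃ y, y ≠ x ∧ s(g, y) ∈ D := by
    intro g x hx
    by_contra hn
    push Not at hn
    have : {E | E ∈ D ∧ g ∈ E} = {s(g, x)} := by
      ext E
      simp only [Set.mem_setOf_eq, Set.mem_singleton_iff]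
      constructor
      · rintro ⟨h1, h2⟩
        obtain ⟨y, rfl⟩ := Sym2.mem_iff_exists.mp h2
        by_contra h3
        exact hn y (fun h => h3 (by rw [h])) h1
      · rintro rfl
        exact ⟨hx, Sym2.mem_mk_left _ _⟩
    have h2 := hev g
    rw [this, Set.ncard_singleton] at h2
    exact absurd h2 (by decide)
  have adj : ∀ a b, s(a, b) ∈ D → G.Adj a b := fun a b h => hD h
  have five : ∀ E1 E2 E3 E4 E5 : Sym2 V, E1 ∈ D → E2 ∈ D → E3 ∈ D → E4 ∈ D → E5 ∈ D →
      [E1, E2, E3, E4, E5].Nodup → 5 ≤ D.ncard := by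
    intro E1 E2 E3 E4 E5 h1 h2 h3 h4 h5 hnd
    have hs : (([E1, E2, E3, E4, E5].toFinset : Finset (Sym2 V)) : Set (Sym2 V)) ⊆ D := by
      intro E hE
      simp at hE
      rcases hE with rfl | rfl | rfl | rfl | rfl <;> assumption
    have := Set.ncard_le_ncard hs (Set.toFinite _)
    rw [Set.ncard_coe_finset, List.toFinset_card_of_nodup hnd] at this
    simpa using this
  have tri : ∀ a b c, s(a, b) ∈ D → s(b, c) ∈ D → s(c, a) ∈ D →
      ((∃ a b c, G.Adj a b ∧ G.Adj b c ∧ G.Adj c a ∧ D = {s(a, b), s(b, c), s(c, a)}) ∨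
      5 ≤ D.ncard) := by
    intro a b c hab hbc hca
    by_cases hE : ∀ E ∈ D, E = s(a, b) ∨ E = s(b, c) ∨ E = s(c, a)
    · left
      refine ⟨a, b, c, adj _ _ hab, adj _ _ hbc, adj _ _ hca, ?_⟩
      ext E
      constructor
      · intro h; simpa using hE E h
      · intro h
        simp at h
        rcases h with rfl | rfl | rfl <;> assumption
    · right
      push Not at hE
      obtain ⟨E, hE, n1, n2, n3⟩ := hE
      have hp : ∃ p q, E = s(p, q) ∧ p ≠ a ∧ p ≠ b ∧ p ≠ c := by
        induction E with
        | _ p q =>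
          have := (adj _ _ hE).ne
          by_cases h : p ≠ a ∧ p ≠ b ∧ p ≠ c
          · exact ⟨p, q, rfl, h⟩
          · refine ⟨q, p, Sym2.eq_swap, ?_⟩
            simp only [ne_eq, Sym2.eq_iff] at n1 n2 n3
            grind
      obtain ⟨p, q, rfl, h1, h2, h3⟩ := hp
      obtain ⟨y, hy, hyD⟩ := key p q hE
      have := (adj _ _ hab).ne
      have := (adj _ _ hbc).ne
      have := (adj _ _ hca).ne
      refine five _ _ _ _ _ hab hbc hca hE hyD ?_
      simp [Sym2.eq_iff]
      grind
  obtain ⟨E, hE⟩ := hne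
  induction E with
  | _ a b =>
  obtain ⟨c, hcb, hac⟩ := key a b hE
  obtain ⟨x, hxa, hbx⟩ := key b a (by rw [Sym2.eq_swap]; exact hE)
  by_cases hxc : x = c
  · subst hxc
    exact tri a b x hE hbx (by rw [Sym2.eq_swap]; exact hac)
  obtain ⟨d, hda, hcd⟩ := key c a (by rw [Sym2.eq_swap]; exact hac)
  by_cases hdb : d = b
  · subst hdb
    exact tri a d c hE (by rw [Sym2.eq_swap]; exact hcd) (by rw [Sym2.eq_swap]; exact hac)
  by_cases hdx : d = x
  · subst hdx
    rcases h4 a b d c (adj _ _ hE) (adj _ _ hbx) (adj _ _ hcd).symm (adj _ _ hac).symm with h | h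
    · exact absurd h.symm hxa
    · exact absurd h.symm hcb
  obtain ⟨y, hyc, hdy⟩ := key d c (by rw [Sym2.eq_swap]; exact hcd)
  right
  have := (adj _ _ hE).ne
  have := (adj _ _ hac).ne
  have := (adj _ _ hbx).ne
  have := (adj _ _ hcd).ne
  refine five _ _ _ _ _ hE hac hbx hcd hdy ?_
  simp [Sym2.eq_iff]
  grind

theorem euler_bound {V : Type} [Fintype V] {G : SimpleGraph V} (h4 : C4Free G)
    (hE : EulerFam G) : G.edgeSet.ncard ≤ Fintype.card V ∨
      7 * G.edgeSet.ncard + 30 + 2 * (E0 G).ncard ≤ 15 * Fintype.card V := by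
  classical
  obtain ⟨ι, _, D, h1, h2, h3, h5, h6, h7⟩ := hE
  by_cases hf : Fintype.card ι ≤ 2
  · left; omega
  right
  have hne := h6 (by omega)
  have hinj := h7 (by omega)
  let Tr : ι → Prop := fun i => ∃ a b c, G.Adj a b ∧ G.Adj b c ∧ G.Adj c a ∧
    D i = {s(a, b), s(b, c), s(c, a)}
  have hTr : ∀ i, Tr i → (D i).ncard = 3 := by
    rintro i ⟨a, b, c, ha, hb, hc, h⟩
    rw [h, Set.ncard_eq_three]
    refine ⟨_, _, _, ?_, ?_, ?_, rfl⟩ <;> (have := ha.ne; have := hb.ne; have := hc.ne; simp [Sym2.eq_iff]; grind)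
  have hcard : ∀ i, 5 ≤ (D i).ncard + (if Tr i then 2 else 0) := by
    intro i
    rcases even_set h4 (D i) (h2 i) (h3 i) (hne i) with h | h
    · have := hTr i h
      have h' : Tr i := h
      simp [h', this]
    · omega
  have dc : ∀ (s : Finset ι), ∑ i ∈ s, (D i).ncard =
      ∑ E ∈ G.edgeSet.toFinset, (s.filter (fun i => E ∈ D i)).card := by
    intro s
    have : ∀ i, (D i).ncard = (G.edgeSet.toFinset.filter (fun E => E ∈ D i)).card := by
      intro i
      rw [← Set.ncard_coe_finset]
      congr 1
      ext E
      simp only [Finset.coe_filter, Set.mem_setOf_eq, Set.mem_toFinset]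
      exact ⟨fun h => ⟨h2 i h, h⟩, fun h => h.2⟩
    simp_rw [this]
    exact Finset.sum_card_bipartiteAbove_eq_sum_card_bipartiteBelow _
  have hecard : G.edgeSet.toFinset.card = G.edgeSet.ncard := by
    rw [Set.ncard_eq_toFinset_card']
  have s1 : ∑ i : ι, (D i).ncard ≤ 2 * G.edgeSet.ncard := by
    rw [dc Finset.univ]
    have : ∀ E ∈ G.edgeSet.toFinset, (Finset.univ.filter (fun i => E ∈ D i)).card ≤ 2 := by
      intro E _
      have := h5 E
      rw [← Set.ncard_coe_finset]
      simpa using this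
    have := Finset.sum_le_card_nsmul _ _ _ this
    rw [smul_eq_mul, hecard] at this
    omega
  have s2 : 5 * Fintype.card ι ≤ ∑ i : ι, (D i).ncard + 2 * (Finset.univ.filter Tr).card := by
    have := Finset.sum_le_sum (s := Finset.univ) (fun i _ => hcard i)
    have h8 : ∑ i : ι, (if Tr i then 2 else 0) = 2 * (Finset.univ.filter Tr).card := by
      rw [Finset.card_filter, Finset.mul_sum]
      exact Finset.sum_congr rfl (fun i _ => by split_ifs <;> rfl)
    rw [Finset.sum_add_distrib, h8] at this
    simp only [Finset.sum_const, smul_eq_mul, Finset.card_univ] at this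
    omega
  have s3 : 3 * (Finset.univ.filter Tr).card + (E0 G).ncard ≤ G.edgeSet.ncard := by
    have a1 : ∑ i ∈ Finset.univ.filter Tr, (D i).ncard = 3 * (Finset.univ.filter Tr).card := by
      rw [Finset.sum_congr rfl (fun i hi => hTr i (Finset.mem_filter.mp hi).2)]
      simp [mul_comm]
    rw [← a1, dc]
    have a2 : ∀ E ∈ G.edgeSet.toFinset,
        ((Finset.univ.filter Tr).filter (fun i => E ∈ D i)).card ≤ if E ∈ E0 G then 0 else 1 := by
      intro E hE
      split_ifs with h
      · rw [Nat.le_zero, Finset.card_eq_zero, Finset.filter_eq_empty_iff]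
        intro i hi hEi
        obtain ⟨a, b, c, ha, hb, hc, hD⟩ := (Finset.mem_filter.mp hi).2
        rw [hD] at hEi
        simp at hEi
        rcases hEi with rfl | rfl | rfl
        · exact h.2 a b c ha hb hc rfl
        · exact h.2 b c a hb hc ha rfl
        · exact h.2 c a b hc ha hb rfl
      · rw [Finset.card_le_one]
        have norm : ∀ i, Tr i → ∀ x y, s(x, y) ∈ D i → ∃ z, G.Adj x y ∧ G.Adj y z ∧ G.Adj z x ∧
            D i = {s(x, y), s(y, z), s(z, x)} := by
          rintro i ⟨a, b, c, ha, hb, hc, hD⟩ x y hxy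
          rw [hD] at hxy ⊢
          simp only [Set.mem_insert_iff, Set.mem_singleton_iff, Sym2.eq_iff] at hxy
          rcases hxy with (⟨rfl, rfl⟩ | ⟨rfl, rfl⟩) | (⟨rfl, rfl⟩ | ⟨rfl, rfl⟩) | (⟨rfl, rfl⟩ | ⟨rfl, rfl⟩)
          · exact ⟨c, ha, hb, hc, rfl⟩
          · refine ⟨c, ha.symm, hc.symm, hb.symm, ?_⟩
            ext E; simp [Sym2.eq_swap]; grind
          · refine ⟨a, hb, hc, ha, ?_⟩
            ext E; simp; grind
          · refine ⟨a, hb.symm, ha.symm, hc.symm, ?_⟩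
            ext E; simp [Sym2.eq_swap]; grind
          · refine ⟨b, hc, ha, hb, ?_⟩
            ext E; simp; grind
          · refine ⟨b, hc.symm, hb.symm, ha.symm, ?_⟩
            ext E; simp [Sym2.eq_swap]; grind
        intro i hi j hj
        simp only [Finset.mem_filter, Finset.mem_univ, true_and] at hi hj
        induction E with
        | _ x y =>
        obtain ⟨z, k1, k2, k3, k4⟩ := norm i hi.1 x y hi.2
        obtain ⟨z', l1, l2, l3, l4⟩ := norm j hj.1 x y hj.2
        apply hinj
        rcases h4 x z y z' k3.symm k2.symm l2 l3 with h | h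
        · exact absurd h k1.ne
        · rw [k4, l4, h]
    have a3 := Finset.sum_le_sum a2
    have a4 : ∑ E ∈ G.edgeSet.toFinset, (if E ∈ E0 G then 0 else 1) + (E0 G).ncard = G.edgeSet.ncard := by
      have : (E0 G).ncard = ∑ E ∈ G.edgeSet.toFinset, (if E ∈ E0 G then 1 else 0) := by
        rw [← Finset.sum_filter, Finset.sum_const, smul_eq_mul, mul_one, ← Set.ncard_coe_finset]
        congr 1
        ext E
        simp only [Finset.coe_filter, Set.mem_setOf_eq, Set.mem_toFinset]
        exact ⟨fun h => ⟨h.1, h⟩, fun h => h.2⟩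
      rw [this, ← Finset.sum_add_distrib, ← hecard, Finset.card_eq_sum_ones]
      apply Finset.sum_congr rfl
      intro E _
      split_ifs <;> rfl
    omega
  omega

end FF

namespace FF

def ladj (a b : Pt) : Prop := ∃ e, (src e = a ∧ tgt e = b) ∨ (src e = b ∧ tgt e = a)

theorem ladj_symm {a b : Pt} (h : ladj a b) : ladj b a := by
  obtain ⟨e, h⟩ := h; exact ⟨e, h.symm⟩

theorem ladj_ne {a b : Pt} (h : ladj a b) : a ≠ b := by
  obtain ⟨e, h⟩ := h
  rintro rfl
  rcases h with h | h <;> exact src_ne_tgt e (h.1.trans h.2.symm)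

theorem ladj_h (i j : ℕ) : ladj (i, j) (i + 1, j) := ⟨.h i j, Or.inl ⟨rfl, rfl⟩⟩
theorem ladj_v (i j : ℕ) : ladj (i, j) (i, j + 1) := ⟨.v i j, Or.inl ⟨rfl, rfl⟩⟩

def gg (S : Set Pt) : SimpleGraph Pt where
  Adj a b := a ∈ S ∧ b ∈ S ∧ ladj a b
  symm := ⟨fun _ _ h => ⟨h.2.1, h.1, ladj_symm h.2.2⟩⟩
  loopless := ⟨fun _ h => ladj_ne h.2.2 rfl⟩

theorem gg_mono {S T : Set Pt} (h : S ⊆ T) : gg S ≤ gg T :=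
  fun _ _ h' => ⟨h h'.1, h h'.2.1, h'.2.2⟩

def ib (N : ℕ) (p : Pt) : Prop := 1 ≤ p.1 ∧ p.1 < N ∧ 1 ≤ p.2 ∧ p.2 < N

structure Blobs {V : Type} (G : SimpleGraph V) (N : ℕ) (B : V → Set Pt) : Prop where
  inb : ∀ g p, p ∈ B g → ib N p
  disj : ∀ g h p, p ∈ B g → p ∈ B h → g = h
  ne : ∀ g, (B g).Nonempty
  conn : ∀ g p q, p ∈ B g → q ∈ B g → (gg (B g)).Reachable p q
  adj : ∀ g h, G.Adj g h → ∃ p ∈ B g, ∃ q ∈ B h, ladj p q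

theorem ib_conn {N : ℕ} {P : Pt → Prop} {p : Pt} (hp : ib N p) (h0 : P p)
    (hs : ∀ a b, ib N a → ib N b → ladj a b → P a → P b) : ∀ q, ib N q → P q := by
  have hi : ∀ i j, ib N (1, j) → ib N (i + 1, j) → (P (1, j) ↔ P (i + 1, j)) := by
    intro i j h1
    induction i with
    | zero => intro _; rfl
    | succ i ih =>
      intro h2
      have h3 : ib N (i + 1, j) := by simp [ib] at h2 ⊢; omega
      rw [ih h3]
      exact ⟨hs _ _ h3 h2 (ladj_h _ _), hs _ _ h2 h3 (ladj_symm (ladj_h _ _))⟩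
  have hj : ∀ j, ib N (1, 1) → ib N (1, j + 1) → (P (1, 1) ↔ P (1, j + 1)) := by
    intro j h1
    induction j with
    | zero => intro _; rfl
    | succ j ih =>
      intro h2
      have h3 : ib N (1, j + 1) := by simp [ib] at h2 ⊢; omega
      rw [ih h3]
      exact ⟨hs _ _ h3 h2 (ladj_v _ _), hs _ _ h2 h3 (ladj_symm (ladj_v _ _))⟩
  have all : ∀ q, ib N q → (P (1, 1) ↔ P q) := by
    rintro ⟨i, j⟩ hq
    have hq' := hq
    simp only [ib] at hq'
    obtain ⟨i, rfl⟩ := Nat.exists_eq_add_of_le' hq'.1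
    obtain ⟨j, rfl⟩ := Nat.exists_eq_add_of_le' hq'.2.2.1
    rw [hj j (by simp only [ib]; omega) (by simp only [ib]; omega),
      hi i (j + 1) (by simp only [ib]; omega) hq]
  intro q hq
  exact (all q hq).mp ((all p hp).mpr h0)

theorem ib_finite (N : ℕ) : {p | ib N p}.Finite := by
  refine ((Set.finite_Iic N).prod (Set.finite_Iic N)).subset ?_
  rintro ⟨i, j⟩ h
  simp only [Set.mem_ofPred_eq, ib] at h
  simp only [Set.mem_prod, Set.mem_Iic]
  omega

theorem grow {V : Type} [Nonempty V] {G : SimpleGraph V} {N : ℕ} {B : V → Set Pt}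
    (hB : Blobs G N B) :
    ∃ B', Blobs G N B' ∧ ∀ p, ib N p → ∃ g, p ∈ B' g := by
  classical
  induction hn : ({p | ib N p ∧ ∀ g, p ∉ B g} : Set Pt).ncard using Nat.strong_induction_on
    generalizing B with
  | _ n ih =>
  by_cases hall : ∀ p, ib N p → ∃ g, p ∈ B g
  · exact ⟨B, hB, hall⟩
  have : ∃ a b, ib N a ∧ ib N b ∧ ladj a b ∧ (∃ g, a ∈ B g) ∧ ∀ g, b ∉ B g := by
    by_contra hno
    push Not at hno
    apply hall
    obtain ⟨g⟩ := ‹Nonempty V›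
    obtain ⟨p, hp⟩ := hB.ne g
    refine ib_conn (P := fun p => ∃ g, p ∈ B g) (hB.inb _ _ hp) ⟨g, hp⟩ ?_
    intro a b ha hb hab hg
    exact hno a b ha hb hab hg
  obtain ⟨a, b, ha, hb, hab, ⟨g, hg⟩, hbn⟩ := this
  let B' : V → Set Pt := fun h => if h = g then insert b (B g) else B h
  have hB'g : B' g = insert b (B g) := by simp [B']
  have hB'h : ∀ h, h ≠ g → B' h = B h := fun h hh => by simp [B', hh]
  have hsub : ∀ h, B h ⊆ B' h := by
    intro h
    by_cases hh : h = g
    · rw [hh, hB'g]; exact Set.subset_insert _ _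
    · rw [hB'h h hh]
  have hmem : ∀ h p, p ∈ B' h → (p = b ∧ h = g) ∨ p ∈ B h := by
    intro h p hp
    by_cases hh : h = g
    · subst hh; rw [hB'g] at hp
      rcases hp with hp | hp
      · exact Or.inl ⟨hp, rfl⟩
      · exact Or.inr hp
    · rw [hB'h h hh] at hp; exact Or.inr hp
  have hbg : b ∈ B' g := by rw [hB'g]; exact Set.mem_insert _ _
  refine ih _ ?_ (B := B') ?_ rfl
  · rw [← hn]
    apply Set.ncard_lt_ncard
    · refine ⟨?_, ?_⟩
      · rintro p ⟨h1, h2⟩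
        exact ⟨h1, fun h hp => h2 h (hsub h hp)⟩
      · intro h
        exact (h ⟨hb, hbn⟩).2 g hbg
    · exact (ib_finite N).subset (fun p hp => hp.1)
  · constructor
    · intro h p hp
      rcases hmem h p hp with ⟨rfl, rfl⟩ | h1
      · exact hb
      · exact hB.inb _ _ h1
    · intro h h' p hp hp'
      rcases hmem h p hp with ⟨rfl, rfl⟩ | h1 <;> rcases hmem h' p hp' with ⟨h3, h4⟩ | h2
      · exact h4.symm
      · exact absurd h2 (hbn _)
      · subst h3; exact absurd h1 (hbn _)
      · exact hB.disj _ _ _ h1 h2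
    · intro h; exact (hB.ne h).mono (hsub h)
    · intro h
      have key : ∀ p, p ∈ B' h → ∃ q ∈ B h, (gg (B' h)).Reachable p q := by
        intro p hp
        rcases hmem h p hp with ⟨rfl, rfl⟩ | h1
        · exact ⟨a, hg, SimpleGraph.Adj.reachable ⟨hp, hsub _ hg, ladj_symm hab⟩⟩
        · exact ⟨p, h1, .rfl⟩
      intro p q hp hq
      obtain ⟨p', h1, h2⟩ := key p hp
      obtain ⟨q', h3, h4⟩ := key q hq
      exact h2.trans (((hB.conn h p' q' h1 h3).mono (gg_mono (hsub h))).trans h4.symm)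
    · intro h h' hh
      obtain ⟨p, hp, q, hq, hpq⟩ := hB.adj h h' hh
      exact ⟨p, hsub _ hp, q, hsub _ hq, hpq⟩

/-- rank function inside a connected set of lattice points -/
theorem blob_par (S : Set Pt) (r : Pt) (hr : r ∈ S) (hc : ∀ p ∈ S, (gg S).Reachable p r) (p : Pt)
    (hp : p ∈ S) (hne : p ≠ r) :
    ∃ e q, ((src e = p ∧ tgt e = q) ∨ (tgt e = p ∧ src e = q)) ∧ q ∈ S ∧
      (gg S).dist q r < (gg S).dist p r := by
  obtain ⟨w, hw⟩ := (hc p hp).exists_walk_length_eq_dist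
  cases w with
  | nil => exact absurd rfl hne
  | @cons _ q _ h w =>
    obtain ⟨e, he⟩ := h.2.2
    refine ⟨e, q, ?_, h.2.1, ?_⟩
    · rcases he with he | he
      · exact Or.inl he
      · exact Or.inr ⟨he.2, he.1⟩
    · have := SimpleGraph.dist_le w
      simp at hw
      omega

open Classical in
theorem model_of_blobs {V : Type} {G : SimpleGraph V} {v : V} {tpar : V → V}
    (T : STree G v tpar) {N : ℕ} {B : V → Set Pt} (hB0 : Blobs G N B) :
    Nonempty (LModel G v tpar) := by
  haveI : Nonempty V := ⟨v⟩
  obtain ⟨B, hB, hall⟩ := grow hB0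
  obtain ⟨p0, hp0⟩ := hB.ne v
  have hN : 2 ≤ N := by have := hB.inb _ _ hp0; simp only [ib] at this; omega
  -- roots
  have hroot : ∀ g, ∃ r e q, r ∈ B g ∧ (g ≠ v → ((src e = r ∧ tgt e = q) ∨ (tgt e = r ∧ src e = q)) ∧
      q ∈ B (tpar g)) := by
    intro g
    by_cases hg : g = v
    · obtain ⟨p, hp⟩ := hB.ne g
      exact ⟨p, .h 0 0, p, hp, fun h => absurd hg h⟩
    · obtain ⟨p, hp, q, hq, e, he⟩ := hB.adj g (tpar g) (T.adj g hg).symm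
      refine ⟨p, e, q, hp, fun _ => ⟨?_, hq⟩⟩
      rcases he with he | he
      · exact Or.inl he
      · exact Or.inr ⟨he.2, he.1⟩
  choose r re rq hr hrq using hroot
  have hcol : ∃ col : Pt → V, (∀ p, ib N p → p ∈ B (col p)) ∧ ∀ p, ¬ ib N p → col p = col (1, 1) := by
    have h11 : ib N (1, 1) := by simp only [ib]; omega
    obtain ⟨g0, hg0⟩ := hall _ h11
    choose f hf using hall
    refine ⟨fun p => if h : ib N p then f p h else f _ h11, ?_, ?_⟩
    · intro p hp; simp only [hp, dif_pos]; exact hf p hp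
    · intro p hp; simp [hp, h11]
  obtain ⟨col, hcol, hcol'⟩ := hcol
  have hcolB : ∀ p g, p ∈ B g → col p = g := fun p g h =>
    hB.disj _ _ _ (hcol p (hB.inb _ _ h)) h
  have hstep : ∀ p, ∃ e q, ib N p → p ≠ r (col p) →
      ((src e = p ∧ tgt e = q) ∨ (tgt e = p ∧ src e = q)) ∧ q ∈ B (col p) ∧
      (gg (B (col p))).dist q (r (col p)) < (gg (B (col p))).dist p (r (col p)) := by
    intro p
    by_cases h : ib N p ∧ p ≠ r (col p)
    · obtain ⟨e, q, h1⟩ := blob_par (B (col p)) (r (col p)) (hr _)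
        (fun x hx => hB.conn _ _ _ hx (hr _)) p (hcol p h.1) h.2
      exact ⟨e, q, fun _ _ => h1⟩
    · exact ⟨.h 0 0, p, fun h1 h2 => absurd ⟨h1, h2⟩ h⟩
  choose se sq hs using hstep
  let dep : Pt → ℕ := fun p => (gg (B (col p))).dist p (r (col p))
  obtain ⟨m, hm⟩ : ∃ m, ∀ p, ib N p → dep p < m := by
    obtain ⟨m, hm⟩ := ((ib_finite N).image dep).bddAbove
    exact ⟨m + 1, fun p hp => Nat.lt_succ_of_le (hm ⟨p, hp, rfl⟩)⟩
  let irk : Pt → ℕ := fun p => m * G.dist v (col p) + dep p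
  obtain ⟨K, hK⟩ : ∃ K, ∀ p, ib N p → irk p < K := by
    obtain ⟨m, hm⟩ := ((ib_finite N).image irk).bddAbove
    exact ⟨m + 1, fun p hp => Nat.lt_succ_of_le (hm ⟨p, hp, rfl⟩)⟩
  let ring : Pt → LE × Pt := fun p =>
    if p = (0, 0) then (.d 0 0, (1, 1))
    else if p.1 = 0 then (.v 0 (p.2 - 1), (0, p.2 - 1))
    else if p.2 = 0 then (.h (p.1 - 1) 0, (p.1 - 1, 0))
    else if p.2 = N then (.h (p.1 - 1) N, (p.1 - 1, N))
    else (.v N p.2, (N, p.2 + 1))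
  let rrk : Pt → ℕ := fun p => K + (if p.1 = N ∧ 0 < p.2 ∧ p.2 < N then 3 * N - p.2 else p.1 + p.2)
  let st : Pt → LE × Pt := fun p => if ib N p then
    (if p = r (col p) then (re (col p), rq (col p)) else (se p, sq p)) else ring p
  have hrib : ∀ g, ib N (r g) := fun g => hB.inb _ _ (hr g)
  have hcolr : ∀ g, col (r g) = g := fun g => hcolB _ _ (hr g)
  -- full analysis of a step
  have main : ∀ p, box N p → p ≠ r v →
      ((src (st p).1 = p ∧ tgt (st p).1 = (st p).2) ∨ (tgt (st p).1 = p ∧ src (st p).1 = (st p).2)) ∧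
      box N (st p).2 ∧
      (if ib N (st p).2 then irk (st p).2 else rrk (st p).2) < (if ib N p then irk p else rrk p) ∧
      (p ≠ r (col p) → col (st p).2 = col p) := by
    intro p hp hpv
    by_cases hi : ib N p
    · by_cases hpr : p = r (col p)
      · have hcv : col p ≠ v := fun h => hpv (by rw [← h]; exact hpr)
        have e1 : st p = (re (col p), rq (col p)) := by simp only [st, hi, if_true]; rw [if_pos hpr]
        obtain ⟨h1, h2⟩ := hrq (col p) hcv
        rw [e1]
        have h3 : ib N (rq (col p)) := hB.inb _ _ h2
        have h3' := h3
        simp only [ib] at h3'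
        refine ⟨by rw [← hpr] at h1; exact h1, ⟨by dsimp only; omega, by dsimp only; omega⟩, ?_, fun h => absurd hpr h⟩
        simp only [h3, hi, if_true, irk, hcolB _ _ h2]
        have := hm _ h3
        rw [T.lev _ hcv, mul_add]
        omega
      · have e1 : st p = (se p, sq p) := by simp only [st, hi, if_true]; rw [if_neg hpr]
        obtain ⟨h1, h2, h4⟩ := hs p hi hpr
        rw [e1]
        have h3 : ib N (sq p) := hB.inb _ _ h2
        have h3' := h3
        simp only [ib] at h3'
        refine ⟨h1, ⟨by dsimp only; omega, by dsimp only; omega⟩, ?_, fun _ => hcolB _ _ h2⟩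
        simp only [h3, hi, if_true, irk, dep, hcolB _ _ h2]
        omega
    · have e1 : st p = ring p := by simp only [st, hi, if_false]
      rw [e1]
      obtain ⟨i, j⟩ := p
      have hp1 : i ≤ N := hp.1
      have hp2 : j ≤ N := hp.2
      by_cases h0 : (i, j) = (0, 0)
      · rw [Prod.mk.injEq] at h0
        obtain ⟨rfl, rfl⟩ := h0
        have h11 : ib N (1, 1) := by simp only [ib]; omega
        have e2 : ring (0, 0) = (.d 0 0, (1, 1)) := by simp [ring]
        rw [e2]
        refine ⟨Or.inl ⟨rfl, rfl⟩, ⟨by simp; omega, by simp; omega⟩, ?_, fun _ => (hcol' _ hi).symm⟩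
        rw [if_pos h11, if_neg hi]
        have := hK _ h11
        simp only [rrk]
        omega
      have fin : ∀ (e : LE) (q : Pt), ring (i, j) = (e, q) → ((src e = (i, j) ∧ tgt e = q) ∨ (tgt e = (i, j) ∧ src e = q)) →
          box N q → ¬ ib N q → rrk q < rrk (i, j) → (((src (ring (i, j)).1 = (i, j) ∧ tgt (ring (i, j)).1 = (ring (i, j)).2) ∨ (tgt (ring (i, j)).1 = (i, j) ∧ src (ring (i, j)).1 = (ring (i, j)).2)) ∧
      box N (ring (i, j)).2 ∧
      (if ib N (ring (i, j)).2 then irk (ring (i, j)).2 else rrk (ring (i, j)).2) < (if ib N (i, j) then irk (i, j) else rrk (i, j)) ∧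
      ((i, j) ≠ r (col (i, j)) → col (ring (i, j)).2 = col (i, j))) := by
        intro e q h1 h2 h3 h4 h5
        rw [h1]
        refine ⟨h2, h3, ?_, fun _ => ?_⟩
        · rw [if_neg h4, if_neg hi]; exact h5
        · rw [hcol' _ h4, hcol' _ hi]
      have hi' := hi
      simp only [ib] at hi'
      by_cases h1 : i = 0
      · subst h1
        obtain ⟨j, rfl⟩ : ∃ k, j = k + 1 := ⟨j - 1, by
          have : j ≠ 0 := fun h => h0 (by rw [h])
          omega⟩
        refine fin (.v 0 j) (0, j) (by simp [ring]) (Or.inr ⟨rfl, rfl⟩) ⟨by simp, by simp; omega⟩ (by simp [ib]) ?_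
        simp only [rrk]
        rw [if_neg (by omega), if_neg (by omega)]
        omega
      obtain ⟨i, rfl⟩ : ∃ k, i = k + 1 := ⟨i - 1, by omega⟩
      by_cases h2 : j = 0
      · subst h2
        refine fin (.h i 0) (i, 0) (by simp [ring]) (Or.inr ⟨rfl, rfl⟩) ⟨by simp; omega, by simp⟩ (by simp [ib]) ?_
        simp only [rrk]
        rw [if_neg (by omega), if_neg (by omega)]
        omega
      by_cases h3 : j = N
      · subst h3
        refine fin (.h i j) (i, j) (by simp [ring, h2]) (Or.inr ⟨rfl, rfl⟩) ⟨by simp; omega, by simp⟩ (by simp [ib]) ?_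
        simp only [rrk]
        rw [if_neg (by omega), if_neg (by omega)]
        omega
      have h4 : i + 1 = N := by omega
      refine fin (.v N j) (N, j + 1) (by simp [ring, h2, h3]) (Or.inl ⟨by rw [h4]; rfl, rfl⟩) ⟨by simp, by simp; omega⟩ (by simp [ib]) ?_
      simp only [rrk]
      split_ifs <;> omega
  refine ⟨⟨N, by omega, col, fun p => (st p).2, fun p => (st p).1, r, fun p => if ib N p then irk p else rrk p, ?_, hcolr, ?_, ?_, ?_, ?_, ?_, ?_, ?_, ?_, ?_, ?_⟩⟩
  · intro g
    have := hrib g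
    simp only [ib] at this
    omega
  · intro p h1 h2; exact (main p h1 h2).1
  · intro p h1 h2; exact (main p h1 h2).2.1
  · intro p h1 h2; exact (main p h1 h2).2.2.1
  · intro p h1 h2
    by_cases h3 : p = r v
    · exact absurd (by rw [h3, hcolr]) h2
    · exact (main p h1 h3).2.2.2 h2
  · intro g hg
    have : st (r g) = (re g, rq g) := by
      simp only [st, hrib g, if_true, hcolr g]
    simp only [this]
    exact hcolB _ _ (hrq g hg).2
  · intro g h hgh
    obtain ⟨p, hp, q, hq, e, he⟩ := hB.adj g h hgh
    have h1 := hB.inb _ _ hp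
    have h2 := hB.inb _ _ hq
    simp only [ib] at h1 h2
    refine ⟨e, ?_, ?_, ?_⟩
    · rcases he with he | he <;> rw [he.1] <;> exact ⟨by omega, by omega⟩
    · rcases he with he | he <;> rw [he.2] <;> exact ⟨by omega, by omega⟩
    · rcases he with he | he <;> rw [he.1, he.2, hcolB _ _ hp, hcolB _ _ hq] <;> simp
  · intro i hi
    have h1 : ¬ ib N (i + 1, 0) := by simp [ib]
    refine ⟨by simp only [st, h1, if_false]; simp [ring], fun h => h1 (by rw [h]; exact hrib v)⟩
  · intro i hi
    have h1 : ¬ ib N (i + 1, N) := by simp [ib]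
    simp only [st, h1, if_false]; simp [ring, show N ≠ 0 by omega]
  · intro i hi
    have h1 : ¬ ib N (0, i + 1) := by simp [ib]
    refine ⟨by simp only [st, h1, if_false]; simp [ring], fun h => h1 (by rw [h]; exact hrib v)⟩
  · intro j h0 hj
    have h1 : ¬ ib N (N, j) := by simp [ib]
    simp only [st, h1, if_false]; simp [ring, show N ≠ 0 by omega, show j ≠ 0 by omega, show j ≠ N by omega]

end FF

namespace FF

/-- lattice points near a point of the plane -/
def nearU (δ : ℝ) (x : ℝ × ℝ) : Set Pt := {p | |(p.1 : ℝ) * δ - x.1| < δ ∧ |(p.2 : ℝ) * δ - x.2| < δ}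

theorem nearU_close {δ : ℝ} {a b : ℕ} {x : ℝ} (h1 : |(a : ℝ) * δ - x| < δ)
    (h2 : |(b : ℝ) * δ - x| < δ) : a ≤ b + 1 := by
  have hδ : 0 < δ := lt_of_le_of_lt (abs_nonneg _) h1
  rw [abs_lt] at h1 h2
  have : ((a : ℝ) - b - 2) * δ < 0 := by nlinarith
  have : (a : ℝ) - b - 2 < 0 := by
    by_contra h
    push Not at h
    nlinarith
  have : (a : ℝ) < b + 2 := by linarith
  have : a < b + 2 := by exact_mod_cast this
  omega

theorem line_reach {S : Set Pt} {a b c d : ℕ} (h1 : (a, c) ∈ S) (h2 : (b, d) ∈ S)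
    (h : (a = b ∧ c ≤ d + 1 ∧ d ≤ c + 1) ∨ (c = d ∧ a ≤ b + 1 ∧ b ≤ a + 1)) :
    (gg S).Reachable (a, c) (b, d) := by
  by_cases he : (a, c) = (b, d)
  · rw [he]
  have : ladj (a, c) (b, d) := by
    rw [Prod.mk.injEq] at he
    rcases h with ⟨rfl, h3, h4⟩ | ⟨rfl, h3, h4⟩
    · rcases lt_trichotomy c d with h | h | h
      · obtain rfl : d = c + 1 := by omega
        exact ladj_v _ _
      · exact absurd ⟨rfl, h⟩ he
      · obtain rfl : c = d + 1 := by omega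
        exact ladj_symm (ladj_v _ _)
    · rcases lt_trichotomy a b with h | h | h
      · obtain rfl : b = a + 1 := by omega
        exact ladj_h _ _
      · exact absurd ⟨h, rfl⟩ he
      · obtain rfl : a = b + 1 := by omega
        exact ladj_symm (ladj_h _ _)
  exact SimpleGraph.Adj.reachable ⟨h1, h2, this⟩

theorem nearU_conn {δ : ℝ} {x : ℝ × ℝ} {S : Set Pt} (hS : nearU δ x ⊆ S) {p q : Pt}
    (hp : p ∈ nearU δ x) (hq : q ∈ nearU δ x) : (gg S).Reachable p q := by
  obtain ⟨a, c⟩ := p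
  obtain ⟨b, d⟩ := q
  have h3 : (b, c) ∈ nearU δ x := ⟨hq.1, hp.2⟩
  refine (line_reach (hS hp) (hS h3) (Or.inr ⟨rfl, nearU_close hp.1 hq.1, nearU_close hq.1 hp.1⟩)).trans
    (line_reach (hS h3) (hS hq) (Or.inl ⟨rfl, nearU_close hp.2 hq.2, nearU_close hq.2 hp.2⟩))

theorem nearU_floor {δ : ℝ} (hδ : 0 < δ) {x : ℝ × ℝ} (h1 : 0 ≤ x.1) (h2 : 0 ≤ x.2) :
    (⌊x.1 / δ⌋₊, ⌊x.2 / δ⌋₊) ∈ nearU δ x := by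
  have key : ∀ y : ℝ, 0 ≤ y → |(⌊y / δ⌋₊ : ℝ) * δ - y| < δ := by
    intro y hy
    have a1 := Nat.floor_le (div_nonneg hy hδ.le)
    have a2 := Nat.lt_floor_add_one (y / δ)
    rw [le_div_iff₀ hδ] at a1
    rw [div_lt_iff₀ hδ] at a2
    rw [abs_lt]
    constructor <;> nlinarith
  exact ⟨key _ h1, key _ h2⟩

def tube (δ : ℝ) (γ : ℝ → ℝ × ℝ) : Set Pt := {p | ∃ t ∈ Set.Icc (0 : ℝ) (1 / 2), p ∈ nearU δ (γ t)}

theorem tube_conn {δ : ℝ} (hδ : 0 < δ) {γ : ℝ → ℝ × ℝ} (hγ : Continuous γ)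
    (hpos : ∀ t ∈ Set.Icc (0 : ℝ) (1 / 2), 0 ≤ (γ t).1 ∧ 0 ≤ (γ t).2) {p q : Pt}
    (hp : p ∈ tube δ γ) (hq : q ∈ tube δ γ) : (gg (tube δ γ)).Reachable p q := by
  obtain ⟨t, ht, hp⟩ := hp
  obtain ⟨t', ht', hq⟩ := hq
  have hsub : ∀ t ∈ Set.Icc (0 : ℝ) (1 / 2), nearU δ (γ t) ⊆ tube δ γ := fun t ht p hp => ⟨t, ht, hp⟩
  have hne : ∀ t ∈ Set.Icc (0 : ℝ) (1 / 2), ∃ p, p ∈ nearU δ (γ t) :=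
    fun t ht => ⟨_, nearU_floor hδ (hpos t ht).1 (hpos t ht).2⟩
  refine IsPreconnected.induction₂ (isPreconnected_Icc (a := (0 : ℝ)) (b := 1 / 2))
    (fun t t' => ∀ p ∈ nearU δ (γ t), ∀ q ∈ nearU δ (γ t'), (gg (tube δ γ)).Reachable p q)
    ?_ ?_ ?_ ht ht' p hp q hq
  · intro x hx
    obtain ⟨p0, hp0⟩ := hne x hx
    have : ∀ᶠ y in nhds x, p0 ∈ nearU δ (γ y) := by
      have c1 : Continuous fun y => |(p0.1 : ℝ) * δ - (γ y).1| := by fun_prop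
      have c2 : Continuous fun y => |(p0.2 : ℝ) * δ - (γ y).2| := by fun_prop
      have e1 := c1.continuousAt.eventually_lt continuousAt_const hp0.1
      have e2 := c2.continuousAt.eventually_lt continuousAt_const hp0.2
      filter_upwards [e1, e2] with y h1 h2
      exact ⟨h1, h2⟩
    filter_upwards [nhdsWithin_le_nhds this, self_mem_nhdsWithin] with y hy hy' p hp q hq
    exact (nearU_conn (hsub x hx) hp hp0).trans (nearU_conn (hsub y hy') hy hq)
  · intro a b c ha hb hc h1 h2 p hp q hq
    obtain ⟨r, hr⟩ := hne b hb
    exact (h1 p hp r hr).trans (h2 r hr q hq)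
  · intro a b ha hb h p hp q hq
    exact (h q hq p hp).symm

def comp (S T : Set Pt) (b : Pt) : Set Pt := {p | p ∈ S \ T ∧ (gg (S \ T)).Reachable b p}

theorem comp_conn {S T : Set Pt} {b : Pt} {p q : Pt} (hp : p ∈ comp S T b) (hq : q ∈ comp S T b) :
    (gg (comp S T b)).Reachable p q := by
  obtain ⟨w⟩ := hp.2.symm.trans hq.2
  clear hq
  induction w with
  | nil => exact .rfl
  | cons h w ih =>
    have h' : _ ∈ comp S T b := ⟨h.2.1, hp.2.trans h.reachable⟩
    exact SimpleGraph.Reachable.trans (SimpleGraph.Adj.reachable ⟨hp, h', h.2.2⟩) (ih h')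

theorem comp_touch {S T : Set Pt} {b p q : Pt} (hp : p ∈ comp S T b) (hq : q ∈ T)
    (h : (gg S).Reachable p q) : ∃ p' ∈ comp S T b, ∃ q' ∈ T, ladj p' q' := by
  obtain ⟨w⟩ := h
  induction w with
  | nil => exact absurd hq hp.1.2
  | @cons p r _ h w ih =>
    by_cases hr : r ∈ T
    · exact ⟨p, hp, r, hr, h.2.2⟩
    · have h1 : r ∈ S \ T := ⟨h.2.1, hr⟩
      exact ih ⟨h1, hp.2.trans (SimpleGraph.Adj.reachable ⟨hp.1, h1, h.2.2⟩)⟩ hq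

open Filter Topology in
theorem ev_sep {A B : Set (ℝ × ℝ)} (hA : IsCompact A) (hB : IsCompact B) (h : Disjoint A B) :
    ∀ᶠ δ in 𝓝[>] (0 : ℝ), ∀ x ∈ A, ∀ y ∈ B, 2 * δ ≤ dist x y := by
  obtain ⟨r, hr, hrr⟩ := Metric.exists_pos_forall_lt_edist hA hB.isClosed h
  have : (0 : ℝ) < r / 2 := by positivity
  filter_upwards [nhdsWithin_le_nhds (Iio_mem_nhds this)] with δ hδ x hx y hy
  have h1 := hrr x hx y hy
  rw [edist_nndist, ENNReal.coe_lt_coe] at h1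
  have h2 : (r : ℝ) < dist x y := by rw [← coe_nndist]; exact_mod_cast h1
  simp only [Set.mem_Iio] at hδ
  linarith

open Filter Topology in
theorem blobs_exist {V : Type} [Finite V] {G : SimpleGraph V} (E : PlaneEmbedding G)
    (hnb : ∀ g, ∃ h, G.Adj g h) : ∃ N B, Blobs G N B := by
  classical
  let A : V → V → Set (ℝ × ℝ) := fun g h => E.arc g h '' Set.Icc 0 (1 / 2)
  have hI : ∀ t ∈ Set.Icc (0 : ℝ) (1 / 2), t ∈ Set.Icc (0 : ℝ) 1 := fun t ht => ⟨ht.1, by linarith [ht.2]⟩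
  have hAc : ∀ g h, G.Adj g h → IsCompact (A g h) := fun g h hgh =>
    isCompact_Icc.image (E.arc_cont hgh)
  have hAend : ∀ g h, G.Adj g h → E.pos h ∉ A g h := by
    rintro g h hgh ⟨t, ht, he⟩
    rw [← E.arc_one hgh] at he
    have := E.arc_injOn hgh (hI t ht) ⟨zero_le_one, le_rfl⟩ he
    have := ht.2
    norm_num at *
    linarith
  have hAd : ∀ g h g' h', G.Adj g h → G.Adj g' h' → g ≠ g' → s(g, h) ≠ s(g', h') →
      Disjoint (A g h) (A g' h') := by
    intro g h g' h' h1 h2 h3 h4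
    rw [Set.disjoint_left]
    intro x hx hx'
    have hsub : ∀ g h, A g h ⊆ E.arc g h '' Set.Icc 0 1 := by
      rintro g h _ ⟨t, ht, rfl⟩
      exact ⟨t, hI t ht, rfl⟩
    have := E.arc_meet h1 h2 h4 ⟨hsub _ _ hx, hsub _ _ hx'⟩
    have e1 : x = E.pos g := by
      rcases this.1 with h | h
      · exact h
      · exact absurd (by rw [Set.mem_singleton_iff] at h; rw [← h]; exact hx) (hAend _ _ h1)
    have e2 : x = E.pos g' := by
      rcases this.2 with h | h
      · exact h
      · exact absurd (by rw [Set.mem_singleton_iff] at h; rw [← h]; exact hx') (hAend _ _ h2)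
    exact h3 (E.pos_inj (e1.symm.trans e2))
  -- choose the mesh
  have ev1 : ∀ᶠ δ in 𝓝[>] (0 : ℝ), ∀ g h g' h', G.Adj g h → G.Adj g' h' → g ≠ g' →
      s(g, h) ≠ s(g', h') → ∀ x ∈ A g h, ∀ y ∈ A g' h', 2 * δ ≤ dist x y := by
    simp only [eventually_all]
    intro g h g' h'
    intro h1 h2 h3 h4
    exact ev_sep (hAc _ _ h1) (hAc _ _ h2) (hAd _ _ _ _ h1 h2 h3 h4)
  have ev2 : ∀ᶠ δ in 𝓝[>] (0 : ℝ), ∀ g h, G.Adj g h → ∀ x ∈ A g h, ∀ y ∈ ({E.pos h} : Set (ℝ × ℝ)),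
      2 * δ ≤ dist x y := by
    simp only [eventually_all]
    intro g h
    intro h1
    exact ev_sep (hAc _ _ h1) isCompact_singleton (Set.disjoint_singleton_right.mpr (hAend _ _ h1))
  have ev3 : ∀ᶠ δ in 𝓝[>] (0 : ℝ), δ < 1 := nhdsWithin_le_nhds (Iio_mem_nhds one_pos)
  obtain ⟨δ, hs1, hs2, hδ1, hδ⟩ := (ev1.and (ev2.and (ev3.and self_mem_nhdsWithin))).exists
  replace hδ : 0 < δ := hδ
  -- bound
  have evR : ∀ᶠ R in atTop, ∀ g h, G.Adj g h → ∀ x ∈ A g h, ‖x‖ ≤ R := by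
    simp only [eventually_all]
    intro g h h1
    obtain ⟨R, hR⟩ := (hAc _ _ h1).isBounded.exists_norm_le
    filter_upwards [eventually_ge_atTop R] with R' hR' x hx
    exact (hR x hx).trans hR'
  obtain ⟨R, hR⟩ := evR.exists
  let γ : V → V → ℝ → ℝ × ℝ := fun g h t => ((E.arc g h t).1 + (R + 2), (E.arc g h t).2 + (R + 2))
  have hγc : ∀ g h, G.Adj g h → Continuous (γ g h) := by
    intro g h h1
    have := E.arc_cont h1
    fun_prop
  have hγb : ∀ g h, G.Adj g h → ∀ t ∈ Set.Icc (0 : ℝ) (1 / 2),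
      (2 ≤ (γ g h t).1 ∧ (γ g h t).1 ≤ 2 * R + 2) ∧ (2 ≤ (γ g h t).2 ∧ (γ g h t).2 ≤ 2 * R + 2) := by
    intro g h h1 t ht
    have h2 := hR g h h1 _ ⟨t, ht, rfl⟩
    have h3 := (norm_fst_le (E.arc g h t)).trans h2
    have h4 := (norm_snd_le (E.arc g h t)).trans h2
    rw [Real.norm_eq_abs, abs_le] at h3 h4
    simp only [γ]
    refine ⟨⟨?_, ?_⟩, ?_, ?_⟩ <;> linarith
  let S : V → V → Set Pt := fun g h => tube δ (γ g h)
  have hSc : ∀ g h, G.Adj g h → ∀ p ∈ S g h, ∀ q ∈ S g h, (gg (S g h)).Reachable p q := by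
    intro g h h1 p hp q hq
    refine tube_conn hδ (hγc g h h1) ?_ hp hq
    intro t ht
    have := hγb g h h1 t ht
    exact ⟨by linarith [this.1.1], by linarith [this.2.1]⟩
  have close : ∀ (p : Pt) (x y : ℝ × ℝ), p ∈ nearU δ (x.1 + (R + 2), x.2 + (R + 2)) →
      p ∈ nearU δ (y.1 + (R + 2), y.2 + (R + 2)) → dist x y < 2 * δ := by
    intro p x y h1 h2
    have a1 := h1.1; have a2 := h1.2; have b1 := h2.1; have b2 := h2.2
    rw [abs_lt] at a1 a2 b1 b2
    simp only at a1 a2 b1 b2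
    rw [Prod.dist_eq, max_lt_iff, Real.dist_eq, Real.dist_eq, abs_lt, abs_lt]
    refine ⟨⟨?_, ?_⟩, ?_, ?_⟩ <;> linarith
  have hSd : ∀ g h g' h' p, G.Adj g h → G.Adj g' h' → g ≠ g' → s(g, h) ≠ s(g', h') →
      p ∈ S g h → p ∉ S g' h' := by
    rintro g h g' h' p h1 h2 h3 h4 ⟨t, ht, hp⟩ ⟨t', ht', hp'⟩
    have := hs1 g h g' h' h1 h2 h3 h4 _ ⟨t, ht, rfl⟩ _ ⟨t', ht', rfl⟩
    exact absurd (close p _ _ hp hp') (not_lt.mpr this)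
  let b : V → Pt := fun g => (⌊((E.pos g).1 + (R + 2)) / δ⌋₊, ⌊((E.pos g).2 + (R + 2)) / δ⌋₊)
  have h00 : (0 : ℝ) ∈ Set.Icc (0 : ℝ) (1 / 2) := by constructor <;> norm_num
  have hbU : ∀ g, b g ∈ nearU δ ((E.pos g).1 + (R + 2), (E.pos g).2 + (R + 2)) := by
    intro g
    obtain ⟨h, h1⟩ := hnb g
    have h2 := hγb g h h1 0 h00
    simp only [γ, E.arc_zero h1] at h2
    exact nearU_floor hδ (by linarith [h2.1.1]) (by linarith [h2.2.1])
  have hbS : ∀ g h, G.Adj g h → b g ∈ S g h := by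
    intro g h h1
    refine ⟨0, h00, ?_⟩
    simp only [γ, E.arc_zero h1]
    exact hbU g
  have hbS' : ∀ g h, G.Adj g h → b h ∉ S g h := by
    rintro g h h1 ⟨t, ht, hp⟩
    have := hs2 g h h1 _ ⟨t, ht, rfl⟩ _ rfl
    exact absurd (close _ _ _ hp (hbU h)) (not_lt.mpr this)
  have htouch : ∀ g h, G.Adj g h → ∃ p, p ∈ S g h ∧ p ∈ S h g := by
    intro g h h1
    have h12 : (1 / 2 : ℝ) ∈ Set.Icc (0 : ℝ) (1 / 2) := by constructor <;> norm_num
    have h2 := hγb g h h1 _ h12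
    refine ⟨_, ⟨1 / 2, h12, nearU_floor hδ (by linarith [h2.1.1]) (by linarith [h2.2.1])⟩, ⟨1 / 2, h12, ?_⟩⟩
    have : γ h g (1 / 2) = γ g h (1 / 2) := by
      simp only [γ, E.arc_symm h1]
      norm_num
    rw [this]
    exact nearU_floor hδ (by linarith [h2.1.1]) (by linarith [h2.2.1])
  obtain ⟨n, ⟨ord⟩⟩ := Finite.exists_equiv_fin V
  let P : V → V → Set Pt := fun g h => if ord g < ord h then S g h else comp (S g h) (S h g) (b g)
  have hP1 : ∀ g h, ord g < ord h → P g h = S g h := fun g h h1 => by simp only [P, h1, if_true]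
  have hP2 : ∀ g h, ord g < ord h → P h g = comp (S h g) (S g h) (b h) :=
    fun g h h1 => by simp only [P, not_lt.mpr h1.le, if_false]
  have hord : ∀ g h, G.Adj g h → ord g < ord h ∨ ord h < ord g := fun g h h1 =>
    lt_or_gt_of_ne (fun h => h1.ne (ord.injective h))
  have hPS : ∀ g h, G.Adj g h → P g h ⊆ S g h := by
    intro g h h1
    rcases hord g h h1 with h2 | h2
    · rw [hP1 g h h2]
    · rw [hP2 h g h2]; exact fun p hp => hp.1.1
  have hbP : ∀ g h, G.Adj g h → b g ∈ P g h := by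
    intro g h h1
    rcases hord g h h1 with h2 | h2
    · rw [hP1 g h h2]; exact hbS g h h1
    · rw [hP2 h g h2]; exact ⟨⟨hbS g h h1, hbS' h g h1.symm⟩, .rfl⟩
  have hPc : ∀ g h, G.Adj g h → ∀ p ∈ P g h, ∀ q ∈ P g h, (gg (P g h)).Reachable p q := by
    intro g h h1 p hp q hq
    rcases hord g h h1 with h2 | h2
    · rw [hP1 g h h2] at hp hq ⊢; exact hSc g h h1 p hp q hq
    · rw [hP2 h g h2] at hp hq ⊢; exact comp_conn hp hq
  have hPadj : ∀ g h, ord g < ord h → G.Adj g h → ∃ p ∈ P g h, ∃ q ∈ P h g, ladj p q := by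
    intro g h h2 h1
    obtain ⟨x, hx1, hx2⟩ := htouch g h h1
    have hbc := hbP h g h1.symm
    rw [hP1 g h h2]
    rw [hP2 g h h2] at hbc ⊢
    obtain ⟨p', h3, q', h4, h5⟩ := comp_touch hbc hx1 (hSc h g h1.symm _ (hbS h g h1.symm) _ hx2)
    exact ⟨q', h4, p', h3, ladj_symm h5⟩
  let B : V → Set Pt := fun g => {p | ∃ h, G.Adj g h ∧ p ∈ P g h}
  have hPB : ∀ g h, G.Adj g h → P g h ⊆ B g := fun g h h1 p hp => ⟨h, h1, hp⟩
  obtain ⟨N, hN⟩ := exists_nat_gt ((2 * R + 3) / δ)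
  rw [div_lt_iff₀ hδ] at hN
  refine ⟨N, B, ?_, ?_, ?_, ?_, ?_⟩
  · rintro g p ⟨h, h1, hp⟩
    obtain ⟨t, ht, h2, h3⟩ := hPS g h h1 hp
    have h4 := hγb g h h1 t ht
    rw [abs_lt] at h2 h3
    have pos : ∀ a : ℕ, 0 < (a : ℝ) * δ → 1 ≤ a := by
      intro a ha
      by_contra hn
      have : a = 0 := by omega
      subst this
      simp at ha
    have lt : ∀ a : ℕ, (a : ℝ) * δ < N * δ → a < N := by
      intro a ha
      exact_mod_cast lt_of_mul_lt_mul_right ha hδ.le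
    refine ⟨pos _ ?_, lt _ ?_, pos _ ?_, lt _ ?_⟩
    · linarith [h4.1.1]
    · linarith [h4.1.2]
    · linarith [h4.2.1]
    · linarith [h4.2.2]
  · rintro g g' p ⟨h, h1, hp⟩ ⟨h', h1', hp'⟩
    by_contra hne
    by_cases hs : s(g, h) = s(g', h')
    · rw [Sym2.eq_iff] at hs
      rcases hs with ⟨h2, -⟩ | ⟨rfl, rfl⟩
      · exact hne h2
      · rcases hord g h h1 with h2 | h2
        · rw [hP1 g h h2] at hp
          rw [hP2 g h h2] at hp'
          exact hp'.1.2 hp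
        · rw [hP2 h g h2] at hp
          rw [hP1 h g h2] at hp'
          exact hp.1.2 hp'
    · exact hSd g h g' h' p h1 h1' hne hs (hPS _ _ h1 hp) (hPS _ _ h1' hp')
  · intro g
    obtain ⟨h, h1⟩ := hnb g
    exact ⟨b g, h, h1, hbP g h h1⟩
  · rintro g p q ⟨h, h1, hp⟩ ⟨h', h1', hq⟩
    exact ((hPc g h h1 p hp _ (hbP g h h1)).mono (gg_mono (hPB g h h1))).trans
      ((hPc g h' h1' _ (hbP g h' h1') q hq).mono (gg_mono (hPB g h' h1')))
  · intro g h h1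
    rcases hord g h h1 with h2 | h2
    · obtain ⟨p, hp, q, hq, h3⟩ := hPadj g h h2 h1
      exact ⟨p, hPB _ _ h1 hp, q, hPB _ _ h1.symm hq, h3⟩
    · obtain ⟨p, hp, q, hq, h3⟩ := hPadj h g h2 h1.symm
      exact ⟨q, hPB _ _ h1 hq, p, hPB _ _ h1.symm hp, ladj_symm h3⟩

theorem model_exists {V : Type} [Fintype V] {G : SimpleGraph V} (hconn : G.Connected)
    (hpl : IsPlanar G) (hn : 2 ≤ Fintype.card V) {v : V} {tpar : V → V} (T : STree G v tpar) :
    Nonempty (LModel G v tpar) := by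
  obtain ⟨E⟩ := hpl
  have : Nontrivial V := Fintype.one_lt_card_iff_nontrivial.mp hn
  obtain ⟨N, B, hB⟩ := blobs_exist E (fun g => hconn.preconnected.exists_adj_of_nontrivial g)
  exact model_of_blobs T hB

end FF

namespace FF
variable {V : Type} {G : SimpleGraph V} {v : V}

theorem burned_mono (P : ℕ → Set V) {s t : ℕ} (h : s ≤ t) : burnedSet G v P s ⊆ burnedSet G v P t := by
  induction h with
  | refl => exact subset_rfl
  | step _ ih => exact ih.trans Set.subset_union_left

theorem burned_reach (hconn : G.Connected) (P : ℕ → Set V) (t : ℕ) : ∀ x ∈ burnedSet G v P t,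
    x = v ∨ ∃ n, G.Adj v n ∧ n ∉ P 0 ∧ G.dist n x + 1 ≤ t := by
  induction t with
  | zero => intro x hx; exact Or.inl hx
  | succ t ih =>
    rintro x (hx | ⟨⟨u, hu, hux⟩, hP⟩)
    · rcases ih x hx with h | ⟨n, h1, h2, h3⟩
      · exact Or.inl h
      · exact Or.inr ⟨n, h1, h2, by omega⟩
    · right
      rcases ih u hu with rfl | ⟨n, h1, h2, h3⟩
      · exact ⟨x, hux, hP 0 (Nat.zero_le _), by simp⟩
      · refine ⟨n, h1, h2, ?_⟩
        have := hconn.dist_triangle (u := n) (v := u) (w := x)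
        rw [SimpleGraph.dist_eq_one_iff_adj.mpr hux] at this
        omega

theorem sn_ge [Fintype V] (hconn : G.Connected) (S D : Set V) (τ : V → ℕ) (hvS : v ∉ S)
    (hbd : ∀ w ∈ S, ∀ x, x ∉ S → G.Adj x w → w ∈ D)
    (hvD : v ∉ D)
    (hbudget : ∀ t, {w | w ∈ D ∧ τ w = t}.ncard ≤ 2)
    (htime : ∀ w ∈ D, τ w + 1 ≤ G.dist v w ∨ (τ w ≤ G.dist v w ∧
      ∀ n, G.Adj v n → G.dist n w + 1 = G.dist v w → n ∈ D ∧ τ n = 0)) :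
    S.ncard ≤ sn G (fun _ => 2) v := by
  let P : ℕ → Set V := fun t => {w | w ∈ D ∧ τ w = t}
  have hdis : ∀ t, Disjoint (P t) (burnedSet G v P t) := by
    intro t
    rw [Set.disjoint_left]
    rintro w ⟨hw, rfl⟩ hb
    rcases burned_reach hconn P _ w hb with rfl | ⟨n, h1, h2, h3⟩
    · exact hvD hw
    have h4 := hconn.dist_triangle (u := v) (v := n) (w := w)
    rw [SimpleGraph.dist_eq_one_iff_adj.mpr h1] at h4
    rcases htime w hw with h | ⟨h, h5⟩
    · omega
    · exact h2 (h5 n h1 (by omega))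
  have hsafe : ∀ t, ∀ w ∈ S, w ∉ burnedSet G v P t := by
    intro t
    induction t with
    | zero => intro w hw h; rw [show w = v from h] at hw; exact hvS hw
    | succ t ih =>
      intro w hw hb
      have hb' := hb
      rcases hb with h | ⟨⟨u, hu, huw⟩, hP⟩
      · exact ih w hw h
      have hwD := hbd w hw u (fun h => ih u h hu) huw
      by_cases ht : τ w ≤ t
      · exact hP _ ht ⟨hwD, rfl⟩
      · exact Set.disjoint_left.mp (hdis (τ w)) ⟨hwD, rfl⟩ (burned_mono P (by omega) hb')
  have hval : ValidStrategy G (fun _ => 2) v P := fun t => ⟨Set.toFinite _, hbudget t, hdis t⟩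
  refine le_trans ?_ (le_csSup ?_ ⟨P, hval, rfl⟩)
  · rw [Nat.card_coe_set_eq]
    exact Set.ncard_le_ncard (fun w hw t => hsafe t w hw) (Set.toFinite _)
  · refine ⟨Fintype.card V, ?_⟩
    rintro _ ⟨P, -, rfl⟩
    rw [Nat.card_coe_set_eq, ← Nat.card_eq_fintype_card]
    exact Set.ncard_le_card _

theorem two_le_dist (hconn : G.Connected) {w : V} (h1 : w ≠ v) (h2 : ¬ G.Adj v w) : 2 ≤ G.dist v w := by
  have a := hconn.pos_dist_of_ne (Ne.symm h1)
  have b : G.dist v w ≠ 1 := fun h => h2 (SimpleGraph.dist_eq_one_iff_adj.mp h)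
  omega

theorem ncard_le_two_of {S : Set V} {a b : V} (h : S ⊆ {a, b}) : S.ncard ≤ 2 :=
  (Set.ncard_le_ncard h (Set.toFinite _)).trans ((Set.ncard_insert_le a {b}).trans (by simp))

theorem ncard_le_one_of [Finite V] {S : Set V} (h : ∀ a ∈ S, ∀ b ∈ S, a = b) : S.ncard ≤ 1 :=
  (Set.ncard_le_one (Set.toFinite _)).mpr h

theorem ncard_le_two_lev [Finite V] {S P1 P2 : Set V} (h : S ⊆ P1 ∪ P2)
    (h1 : ∀ a ∈ P1, ∀ b ∈ P1, a = b) (h2 : ∀ a ∈ P2, ∀ b ∈ P2, a = b) : S.ncard ≤ 2 := by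
  have a1 := Set.ncard_le_ncard h (Set.toFinite _)
  have a2 := Set.ncard_union_le P1 P2
  have := ncard_le_one_of h1
  have := ncard_le_one_of h2
  omega

/-- small degree -/
theorem sn_small [Fintype V] (hconn : G.Connected) (hd : {n | G.Adj v n}.ncard ≤ 2) :
    Fintype.card V ≤ sn G (fun _ => 2) v + 1 := by
  have h := sn_ge (v := v) hconn ({v}ᶜ) {n | G.Adj v n} (fun _ => 0) (by simp) (by
    intro w hw x hx hxw
    simp at hx; subst hx; exact hxw) (by simp) (by
    intro t
    refine le_trans (Set.ncard_le_ncard (fun w hw => hw.1) (Set.toFinite _)) hd) (by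
    intro w hw
    left
    rw [SimpleGraph.dist_eq_one_iff_adj.mpr hw])
  rw [Set.ncard_compl, Set.ncard_singleton, Nat.card_eq_fintype_card] at h
  omega

theorem sn_pos [Fintype V] (hconn : G.Connected) (hn : 2 ≤ Fintype.card V) :
    1 ≤ sn G (fun _ => 2) v := by
  have : Nontrivial V := Fintype.one_lt_card_iff_nontrivial.mp hn
  obtain ⟨w, hw⟩ := exists_ne v
  have h := sn_ge (v := v) hconn {w} {w} (fun _ => 0) (by simpa using hw.symm) (by
    intro w hw x hx hxw
    exact hw) (by simpa using hw.symm) (by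
    intro t
    refine (Set.ncard_le_ncard (t := {w}) (fun w hw => hw.1) (Set.toFinite _)).trans ?_
    simp) (by
    rintro x rfl
    left
    have := hconn.pos_dist_of_ne (Ne.symm hw)
    omega)
  simpa using h

theorem sn_sep [Fintype V] (hconn : G.Connected) {C : Set V} {s : V → ZMod 2} {P1 P2 : Set V}
    (hS : Sep G v C s P1 P2) (i : ZMod 2)
    (hnb : {n | G.Adj v n ∧ n ∈ cside v C s i}.ncard ≤ 2) :
    (cside v C s i).ncard ≤ sn G (fun _ => 2) v := by
  refine sn_ge hconn _ {w | w ∈ cside v C s i ∧ (w ∈ C ∨ G.Adj v w)} (fun w => G.dist v w - 1)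
    (fun h => h.1 rfl) ?_ (fun h => h.1.1 rfl) ?_ ?_
  · intro w hw x hx hxw
    refine ⟨hw, ?_⟩
    by_cases hxv : x = v
    · subst hxv; exact Or.inr hxw
    left
    by_contra hwC
    apply hx
    refine ⟨hxv, ?_⟩
    by_cases hxC : x ∈ C
    · exact Or.inl hxC
    · right
      rw [hS.adj x w hxC hwC hxw]
      exact hw.2.resolve_left hwC
  · intro t
    rcases Nat.eq_zero_or_pos t with rfl | ht
    · refine (Set.ncard_le_ncard ?_ (Set.toFinite _)).trans hnb
      rintro w ⟨⟨h1, h2⟩, h3⟩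
      refine ⟨?_, h1⟩
      by_contra h
      have := two_le_dist hconn h1.1 h
      omega
    · refine ncard_le_two_lev (P1 := {w | w ∈ P1 ∧ G.dist v w = t + 1})
        (P2 := {w | w ∈ P2 ∧ G.dist v w = t + 1}) ?_ ?_ ?_
      · rintro w ⟨⟨h1, h2⟩, h3⟩
        have hd : G.dist v w = t + 1 := by omega
        have hC : w ∈ C := by
          rcases h2 with h | h
          · exact h
          · rw [SimpleGraph.dist_eq_one_iff_adj.mpr h] at hd; omega
        rcases hS.sub w hC h1.1 with h | h
        · exact Or.inl ⟨h, hd⟩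
        · exact Or.inr ⟨h, hd⟩
      · exact fun a ha b hb => hS.lev1 a ha.1 b hb.1 (ha.2.trans hb.2.symm)
      · exact fun a ha b hb => hS.lev2 a ha.1 b hb.1 (ha.2.trans hb.2.symm)
  · rintro w ⟨h1, -⟩
    left
    have := hconn.pos_dist_of_ne (Ne.symm h1.1)
    omega

theorem card_diff_one [Finite V] (C : Set V) (s : V → ZMod 2) (i : ZMod 2) (b : V) :
    (cside v C s i).ncard ≤ {g | g ≠ v ∧ g ≠ b ∧ (g ∈ C ∨ s g = i)}.ncard + 1 := by
  have h : cside v C s i ⊆ insert b {g | g ≠ v ∧ g ≠ b ∧ (g ∈ C ∨ s g = i)} := by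
    intro g hg
    by_cases h : g = b
    · exact Or.inl h
    · exact Or.inr ⟨hg.1, h, hg.2⟩
  exact (Set.ncard_le_ncard h (Set.toFinite _)).trans (Set.ncard_insert_le _ _)

def outer (G : SimpleGraph V) (v c : V) : Set V := {n | G.Adj c n ∧ n ≠ v ∧ ¬ G.Adj v n}

/-- burning a separator neighbour -/
theorem sn_pair [Fintype V] (hconn : G.Connected) {C : Set V} {s : V → ZMod 2} {tpar : V → V}
    (T : STree G v tpar) {x1 x2 : V}
    (hS : Sep G v C s (Anc tpar x1) (Anc tpar x2)) {a c : V} {u : ZMod 2 → V}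
    (hvC : v ∈ C) (hva : G.Adj v a) (hvc : G.Adj v c) (haC : a ∈ C) (hac : a ≠ c)
    (hc2 : c ∈ Anc tpar x2)
    (hN : ∀ n, G.Adj v n → n = a ∨ n = c ∨ (n ∉ C ∧ n = u (s n)))
    (hR : ∀ w ∈ C, w ≠ v → w ∈ Anc tpar x1 → ∀ n, G.Adj v n → G.dist n w + 1 = G.dist v w → n = a)
    (hout : (outer G v c).ncard ≤ 4) :
    ∃ i, (cside v C s i).ncard ≤ sn G (fun _ => 2) v + 1 := by
  classical
  let L : ZMod 2 → Set V := fun i => {n | n ∈ outer G v c ∧ n ∉ C ∧ s n = i}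
  let Q : Set V := {n | n ∈ C ∧ n ∈ Anc tpar x2 ∧ G.dist v n = 2}
  have hQ1 : Q.ncard ≤ 1 := ncard_le_one_of (fun p hp q hq =>
    hS.lev2 p hp.2.1 q hq.2.1 (hp.2.2.trans hq.2.2.symm))
  have hdc : G.dist v c = 1 := SimpleGraph.dist_eq_one_iff_adj.mpr hvc
  have hQo : Q ⊆ outer G v c := by
    rintro n ⟨h1, h2, h3⟩
    have hnv : n ≠ v := by rintro rfl; simp at h3
    have h4 : tpar n = c := by
      have := T.lev n hnv
      apply hS.lev2 (tpar n) (Anc_trans h2 ⟨1, rfl⟩) _ hc2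
      omega
    refine ⟨by rw [← h4]; exact T.adj n hnv, hnv, fun h => ?_⟩
    rw [SimpleGraph.dist_eq_one_iff_adj.mpr h] at h3
    omega
  have hsum : (L 0).ncard + (L 1).ncard + Q.ncard ≤ 4 := by
    rw [← Set.ncard_union_eq, ← Set.ncard_union_eq]
    · refine (Set.ncard_le_ncard ?_ (Set.toFinite _)).trans hout
      rintro n ((h | h) | h)
      exacts [h.1, h.1, hQo h]
    · rw [Set.disjoint_left]
      rintro n (h | h) h'
      · exact h.2.1 h'.1
      · exact h.2.1 h'.1
    · rw [Set.disjoint_left]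
      intro n h h'
      have := h.2.2.symm.trans h'.2.2
      exact absurd this (by decide)
  obtain ⟨i, hi⟩ : ∃ i, (L i).ncard + Q.ncard ≤ 2 := by
    by_cases h : (L 0).ncard + Q.ncard ≤ 2
    · exact ⟨0, h⟩
    · exact ⟨1, by omega⟩
  refine ⟨i, (card_diff_one C s i c).trans (Nat.succ_le_succ ?_)⟩
  set S : Set V := {g | g ≠ v ∧ g ≠ c ∧ (g ∈ C ∨ s g = i)} with hSdef
  refine sn_ge hconn S {g | g ∈ S ∧ (g ∈ C ∨ G.Adj v g ∨ G.Adj c g)}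
    (fun g => if G.Adj v g then 0 else if g ∈ C then
      (if g ∈ Anc tpar x1 then G.dist v g else G.dist v g - 1) else 1)
    (fun h => h.1 rfl) ?_ (fun h => h.1.1 rfl) ?_ ?_
  · intro w hw x hx hxw
    refine ⟨hw, ?_⟩
    by_cases hxv : x = v
    · subst hxv; exact Or.inr (Or.inl hxw)
    by_cases hxc : x = c
    · subst hxc; exact Or.inr (Or.inr hxw)
    left
    by_contra hwC
    apply hx
    refine ⟨hxv, hxc, ?_⟩
    by_cases hxC : x ∈ C
    · exact Or.inl hxC
    · right
      rw [hS.adj x w hxC hwC hxw]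
      exact hw.2.2.resolve_left hwC
  · intro t
    rcases Nat.eq_zero_or_pos t with rfl | ht
    · refine ncard_le_two_of (a := a) (b := u i) ?_
      rintro g ⟨⟨h1, h2⟩, h3⟩
      by_cases hg : G.Adj v g
      · rcases hN g hg with h | h | ⟨h, h'⟩
        · exact Or.inl h
        · exact absurd h h1.2.1
        · right
          rw [h1.2.2.resolve_left h] at h'
          exact h'
      · exfalso
        have := two_le_dist hconn h1.1 hg
        simp only [hg, if_false] at h3
        split_ifs at h3 <;> omega
    rcases Nat.lt_or_ge t 2 with h | ht2
    · obtain rfl : t = 1 := by omega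
      have : {w | w ∈ {g | g ∈ S ∧ (g ∈ C ∨ G.Adj v g ∨ G.Adj c g)} ∧ (if G.Adj v w then 0 else if w ∈ C then
          (if w ∈ Anc tpar x1 then G.dist v w else G.dist v w - 1) else 1) = 1} ⊆ L i ∪ Q := by
        rintro g ⟨⟨h1, h2⟩, h3⟩
        by_cases hg : G.Adj v g
        · simp [hg] at h3
        have hd := two_le_dist hconn h1.1 hg
        simp only [hg, if_false] at h3
        by_cases hgC : g ∈ C
        · simp only [hgC, if_true] at h3
          by_cases hg1 : g ∈ Anc tpar x1
          · simp only [hg1, if_true] at h3; omega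
          · simp only [hg1, if_false] at h3
            exact Or.inr ⟨hgC, (hS.sub g hgC h1.1).resolve_left hg1, by omega⟩
        · refine Or.inl ⟨⟨(h2.resolve_left hgC).resolve_left hg, h1.1, hg⟩, hgC, h1.2.2.resolve_left hgC⟩
      exact (Set.ncard_le_ncard this (Set.toFinite _)).trans ((Set.ncard_union_le _ _).trans hi)
    · refine ncard_le_two_lev (P1 := {w | w ∈ Anc tpar x1 ∧ G.dist v w = t})
        (P2 := {w | w ∈ Anc tpar x2 ∧ G.dist v w = t + 1}) ?_ ?_ ?_
      · rintro g ⟨⟨h1, h2⟩, h3⟩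
        by_cases hg : G.Adj v g
        · simp only [hg, if_true] at h3; omega
        simp only [hg, if_false] at h3
        by_cases hgC : g ∈ C
        · simp only [hgC, if_true] at h3
          by_cases hg1 : g ∈ Anc tpar x1
          · simp only [hg1, if_true] at h3; exact Or.inl ⟨hg1, h3⟩
          · simp only [hg1, if_false] at h3
            exact Or.inr ⟨(hS.sub g hgC h1.1).resolve_left hg1, by omega⟩
        · simp only [hgC, if_false] at h3; omega
      · exact fun a ha b hb => hS.lev1 a ha.1 b hb.1 (ha.2.trans hb.2.symm)
      · exact fun a ha b hb => hS.lev2 a ha.1 b hb.1 (ha.2.trans hb.2.symm)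
  · rintro g ⟨h1, h2⟩
    by_cases hg : G.Adj v g
    · left
      simp [hg]
      exact hconn.pos_dist_of_ne (Ne.symm h1.1)
    have hd := two_le_dist hconn h1.1 hg
    simp only [hg, if_false]
    by_cases hgC : g ∈ C
    · simp only [hgC, if_true]
      by_cases hg1 : g ∈ Anc tpar x1
      · right
        simp only [hg1, if_true]
        refine ⟨le_rfl, fun n h3 h4 => ?_⟩
        rw [hR g hgC h1.1 hg1 n h3 h4]
        exact ⟨⟨⟨hva.ne', hac, Or.inl haC⟩, Or.inl haC⟩, by simp [hva]⟩
      · left; simp only [hg1, if_false]; omega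
    · left; simp only [hgC, if_false]; omega

/-- burning a neighbour off the separator -/
theorem sn_off [Fintype V] (hconn : G.Connected) {C : Set V} {s : V → ZMod 2} {P1 P2 : Set V}
    (hS : Sep G v C s P1 P2) {z z' b : V}
    (hvz : G.Adj v z) (hvz' : G.Adj v z') (hzC : z ∈ C) (hzC' : z' ∈ C)
    (hbC : b ∉ C)
    (hN : ∀ n, G.Adj v n → n = z ∨ n = z' ∨ n = b ∨ (n ∉ C ∧ s n ≠ s b))
    (hR : ∀ w ∈ C, w ≠ v → ∀ n, G.Adj v n → G.dist n w + 1 = G.dist v w → n = z ∨ n = z')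
    (hout : (outer G v b).ncard ≤ 2) :
    ∃ i, (cside v C s i).ncard ≤ sn G (fun _ => 2) v + 1 := by
  classical
  refine ⟨s b, (card_diff_one C s (s b) b).trans (Nat.succ_le_succ ?_)⟩
  set S : Set V := {g | g ≠ v ∧ g ≠ b ∧ (g ∈ C ∨ s g = s b)} with hSdef
  have hNS : ∀ n, G.Adj v n → n ∈ S → n = z ∨ n = z' := by
    intro n h1 h2
    rcases hN n h1 with h | h | h | h
    · exact Or.inl h
    · exact Or.inr h
    · exact absurd h h2.2.1
    · exact absurd (h2.2.2.resolve_left h.1) h.2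
  refine sn_ge hconn S {g | g ∈ S ∧ (g ∈ C ∨ G.Adj b g)}
    (fun g => if G.Adj v g then 0 else if g ∈ C then G.dist v g else 1)
    (fun h => h.1 rfl) ?_ (fun h => h.1.1 rfl) ?_ ?_
  · intro w hw x hx hxw
    refine ⟨hw, ?_⟩
    by_cases hxv : x = v
    · subst hxv
      left
      rcases hNS w hxw hw with rfl | rfl <;> assumption
    by_cases hxc : x = b
    · subst hxc; exact Or.inr hxw
    left
    by_contra hwC
    apply hx
    refine ⟨hxv, hxc, ?_⟩
    by_cases hxC : x ∈ C
    · exact Or.inl hxC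
    · right
      rw [hS.adj x w hxC hwC hxw]
      exact hw.2.2.resolve_left hwC
  · intro t
    rcases Nat.eq_zero_or_pos t with rfl | ht
    · refine ncard_le_two_of (a := z) (b := z') ?_
      rintro g ⟨⟨h1, h2⟩, h3⟩
      by_cases hg : G.Adj v g
      · exact hNS g hg h1
      · exfalso
        have := two_le_dist hconn h1.1 hg
        simp only [hg, if_false] at h3
        split_ifs at h3
        omega
    rcases Nat.lt_or_ge t 2 with h | ht2
    · obtain rfl : t = 1 := by omega
      refine (Set.ncard_le_ncard ?_ (Set.toFinite _)).trans hout
      rintro g ⟨⟨h1, h2⟩, h3⟩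
      by_cases hg : G.Adj v g
      · simp [hg] at h3
      have hd := two_le_dist hconn h1.1 hg
      simp only [hg, if_false] at h3
      by_cases hgC : g ∈ C
      · simp only [hgC, if_true] at h3
        omega
      · exact ⟨h2.resolve_left hgC, h1.1, hg⟩
    · refine ncard_le_two_lev (P1 := {w | w ∈ P1 ∧ G.dist v w = t})
        (P2 := {w | w ∈ P2 ∧ G.dist v w = t}) ?_ ?_ ?_
      · rintro g ⟨⟨h1, h2⟩, h3⟩
        by_cases hg : G.Adj v g
        · simp only [hg, if_true] at h3; omega
        simp only [hg, if_false] at h3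
        by_cases hgC : g ∈ C
        · simp only [hgC, if_true] at h3
          rcases hS.sub g hgC h1.1 with h | h
          · exact Or.inl ⟨h, h3⟩
          · exact Or.inr ⟨h, h3⟩
        · simp only [hgC, if_false] at h3; omega
      · exact fun a ha b hb => hS.lev1 a ha.1 b hb.1 (ha.2.trans hb.2.symm)
      · exact fun a ha b hb => hS.lev2 a ha.1 b hb.1 (ha.2.trans hb.2.symm)
  · rintro g ⟨h1, h2⟩
    by_cases hg : G.Adj v g
    · left
      simp [hg]
      exact hconn.pos_dist_of_ne (Ne.symm h1.1)
    have hd := two_le_dist hconn h1.1 hg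
    simp only [hg, if_false]
    by_cases hgC : g ∈ C
    · right
      simp only [hgC, if_true]
      refine ⟨le_rfl, fun n h3 h4 => ?_⟩
      rcases hR g hgC h1.1 n h3 h4 with rfl | rfl
      · exact ⟨⟨⟨hvz.ne', fun h => hbC (h ▸ hzC), Or.inl hzC⟩, Or.inl hzC⟩, by simp [hvz]⟩
      · exact ⟨⟨⟨hvz'.ne', fun h => hbC (h ▸ hzC'), Or.inl hzC'⟩, Or.inl hzC'⟩, by simp [hvz']⟩
    · left; simp only [hgC, if_false]; omega

end FF

namespace FF
variable {V : Type} {G : SimpleGraph V} {v : V}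

theorem exists_pred (hconn : G.Connected) {n w : V} (h : n ≠ w) :
    ∃ x, G.Adj x w ∧ G.dist n w = G.dist n x + 1 := by
  obtain ⟨p, hp⟩ := (hconn.preconnected w n).exists_walk_length_eq_dist
  cases p with
  | nil => exact absurd rfl h
  | @cons _ x _ hx p =>
    refine ⟨x, hx.symm, ?_⟩
    have h1 := SimpleGraph.dist_le p
    have h2 := hconn.dist_triangle (u := n) (v := x) (w := w)
    rw [SimpleGraph.dist_eq_one_iff_adj.mpr hx.symm] at h2
    rw [SimpleGraph.dist_comm] at h1
    rw [SimpleGraph.Walk.length_cons, SimpleGraph.dist_comm] at hp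
    omega

theorem tree_exists [Finite V] (hconn : G.Connected) (pr : V → ℕ) :
    ∃ tpar, STree G v tpar ∧ ∀ w f, f ∈ Anc tpar w → G.Adj v f → ∀ n, G.Adj v n →
      G.dist n w + 1 = G.dist v w → pr n ≤ pr f := by
  classical
  have key : ∀ w, ∃ x, (w = v → x = v) ∧ (w ≠ v → G.Adj x w ∧ G.dist v w = G.dist v x + 1 ∧
      ∀ n, G.Adj v n → G.dist n w + 1 = G.dist v w → x = v ∨
        ∃ n', G.Adj v n' ∧ pr n ≤ pr n' ∧ G.dist n' x + 1 = G.dist v x) := by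
    intro w
    by_cases hw : w = v
    · exact ⟨v, fun _ => rfl, fun h => absurd hw h⟩
    suffices h : ∃ x, G.Adj x w ∧ G.dist v w = G.dist v x + 1 ∧
      ∀ n, G.Adj v n → G.dist n w + 1 = G.dist v w → x = v ∨
        ∃ n', G.Adj v n' ∧ pr n ≤ pr n' ∧ G.dist n' x + 1 = G.dist v x by
      obtain ⟨x, hx⟩ := h
      exact ⟨x, fun h => absurd h hw, fun _ => hx⟩
    by_cases hadj : G.Adj v w
    · refine ⟨v, hadj, ?_, fun _ _ _ => Or.inl rfl⟩
      rw [SimpleGraph.dist_eq_one_iff_adj.mpr hadj, SimpleGraph.dist_self]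
    have hne : {n | G.Adj v n ∧ G.dist n w + 1 = G.dist v w}.Nonempty := by
      obtain ⟨x, h1, h2⟩ := exists_pred hconn hw
      refine ⟨x, h1.symm, ?_⟩
      rw [SimpleGraph.dist_comm, SimpleGraph.dist_comm (u := v), h2]
    obtain ⟨n0, ⟨h1, h2⟩, h3⟩ := Set.exists_max_image _ pr (Set.toFinite _) hne
    have hn0 : n0 ≠ w := by rintro rfl; exact hadj h1
    obtain ⟨x, h4, h5⟩ := exists_pred hconn hn0
    have a1 := hconn.dist_triangle (u := v) (v := n0) (w := x)
    have a2 := hconn.dist_triangle (u := v) (v := x) (w := w)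
    rw [SimpleGraph.dist_eq_one_iff_adj.mpr h1] at a1
    rw [SimpleGraph.dist_eq_one_iff_adj.mpr h4] at a2
    exact ⟨x, h4, by omega, fun n h6 h7 => Or.inr ⟨n0, h1, h3 n ⟨h6, h7⟩, by omega⟩⟩
  choose tpar h0 h1 using key
  have T : STree G v tpar := ⟨h0 v rfl, fun g hg => (h1 g hg).1, fun g hg => (h1 g hg).2.1⟩
  refine ⟨tpar, T, fun w => ?_⟩
  refine T.ind (P := fun w => ∀ f, f ∈ Anc tpar w → G.Adj v f → ∀ n, G.Adj v n →
      G.dist n w + 1 = G.dist v w → pr n ≤ pr f) ?_ ?_ w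
  · intro f hf hvf
    rw [T.Anc_root hf] at hvf
    exact absurd rfl hvf.ne
  · intro g hg ih f hf hvf n hn hd
    rcases Anc_cases hf with rfl | hf
    · rw [SimpleGraph.dist_eq_one_iff_adj.mpr hvf] at hd
      have : n = f := hconn.dist_eq_zero_iff.mp (by omega)
      rw [this]
    · rcases (h1 g hg).2.2 n hn hd with h | ⟨n', h2, h3, h4⟩
      · rw [h] at hf
        rw [T.Anc_root hf] at hvf
        exact absurd rfl hvf.ne
      · exact h3.trans (ih f hf hvf n' h2 h4)

theorem Sep.swap {C : Set V} {s : V → ZMod 2} {P1 P2 : Set V} (h : Sep G v C s P1 P2) :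
    Sep G v C s P2 P1 :=
  ⟨fun g h1 h2 => (h.sub g h1 h2).symm, h.lev2, h.lev1, h.adj⟩

/-- neighbours on the separator -/
theorem Sep.nb_le [Finite V] {C : Set V} {s : V → ZMod 2} {P1 P2 : Set V} (h : Sep G v C s P1 P2) :
    {n | G.Adj v n ∧ n ∈ C}.ncard ≤ 2 := by
  refine ncard_le_two_lev (P1 := {w | w ∈ P1 ∧ G.Adj v w}) (P2 := {w | w ∈ P2 ∧ G.Adj v w}) ?_ ?_ ?_
  · rintro n ⟨h1, h2⟩
    rcases h.sub n h2 h1.ne' with h3 | h3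
    · exact Or.inl ⟨h3, h1⟩
    · exact Or.inr ⟨h3, h1⟩
  · intro a ha b hb
    refine h.lev1 a ha.1 b hb.1 ?_
    rw [SimpleGraph.dist_eq_one_iff_adj.mpr ha.2, SimpleGraph.dist_eq_one_iff_adj.mpr hb.2]
  · intro a ha b hb
    refine h.lev2 a ha.1 b hb.1 ?_
    rw [SimpleGraph.dist_eq_one_iff_adj.mpr ha.2, SimpleGraph.dist_eq_one_iff_adj.mpr hb.2]

/-- either one side is cheap, or we are in the balanced degree-four situation -/
theorem Sep.dichotomy [Finite V] {C : Set V} {s : V → ZMod 2} {P1 P2 : Set V}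
    (hS : Sep G v C s P1 P2) (hd : {n | G.Adj v n}.ncard ≤ 4) :
    (∃ i, {n | G.Adj v n ∧ n ∈ cside v C s i}.ncard ≤ 2) ∨
    ({n | G.Adj v n}.ncard = 4 ∧ v ∈ C ∧ ∃ (z z' : V) (u : ZMod 2 → V), z ≠ z' ∧ G.Adj v z ∧ G.Adj v z' ∧ z ∈ C ∧ z' ∈ C ∧
      z ∈ P1 ∧ z ∉ P2 ∧ z' ∈ P2 ∧ z' ∉ P1 ∧ (∀ i : ZMod 2, G.Adj v (u i) ∧ u i ∉ C ∧ s (u i) = i) ∧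
      ∀ n, G.Adj v n → n = z ∨ n = z' ∨ (n ∉ C ∧ n = u (s n))) := by
  classical
  by_cases hvC : v ∈ C
  swap
  · left
    refine ⟨s v + 1, (Set.ncard_le_ncard ?_ (Set.toFinite _)).trans hS.nb_le⟩
    rintro n ⟨h1, h2⟩
    refine ⟨h1, ?_⟩
    by_contra hn
    have h3 := h2.2.resolve_left hn
    rw [hS.adj n v hn hvC h1.symm] at h3
    simp at h3
  by_cases hex : ∃ i, {n | G.Adj v n ∧ n ∈ cside v C s i}.ncard ≤ 2
  · exact Or.inl hex
  right
  push Not at hex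
  set K := {n | G.Adj v n ∧ n ∈ C} with hK
  let F : ZMod 2 → Set V := fun i => {n | G.Adj v n ∧ n ∉ C ∧ s n = i}
  have hKF : ∀ i, 3 ≤ K.ncard + (F i).ncard := by
    intro i
    refine le_trans (hex i) ((Set.ncard_le_ncard ?_ (Set.toFinite _)).trans (Set.ncard_union_le K (F i)))
    rintro n ⟨h1, h2⟩
    by_cases hn : n ∈ C
    · exact Or.inl ⟨h1, hn⟩
    · exact Or.inr ⟨h1, hn, h2.2.resolve_left hn⟩
  have hsum : K.ncard + (F 0).ncard + (F 1).ncard = {n | G.Adj v n}.ncard := by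
    rw [← Set.ncard_union_eq, ← Set.ncard_union_eq]
    · congr 1
      ext n
      constructor
      · rintro ((h | h) | h)
        exacts [h.1, h.1, h.1]
      · intro h
        by_cases hn : n ∈ C
        · exact Or.inl (Or.inl ⟨h, hn⟩)
        · rcases z2_cases (s n) with h2 | h2
          · exact Or.inl (Or.inr ⟨h, hn, h2⟩)
          · exact Or.inr ⟨h, hn, h2⟩
    · rw [Set.disjoint_left]
      rintro n (h | h) h'
      · exact h'.2.1 h.2
      · have := h.2.2.symm.trans h'.2.2
        exact absurd this (by decide)
    · rw [Set.disjoint_left]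
      intro n h h'
      exact h'.2.1 h.2
  have hK2 : K.ncard ≤ 2 := hS.nb_le
  have h0 := hKF 0
  have h1 := hKF 1
  have hK2 : K.ncard = 2 := by omega
  have hF : ∀ i, (F i).ncard = 1 := by
    intro i
    rcases z2_cases i with rfl | rfl <;> omega
  refine ⟨by omega, hvC, ?_⟩
  have hu : ∀ i, ∃ u, F i = {u} := fun i => Set.ncard_eq_one.mp (hF i)
  choose u hu using hu
  have hum : ∀ i, u i ∈ F i := fun i => by rw [hu i]; rfl
  obtain ⟨z, z', hne, hzz⟩ := Set.ncard_eq_two.mp hK2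
  have hz : z ∈ K := by rw [hzz]; simp
  have hz' : z' ∈ K := by rw [hzz]; simp
  have hN : ∀ n, G.Adj v n → n = z ∨ n = z' ∨ (n ∉ C ∧ n = u (s n)) := by
    intro n hn
    by_cases hC : n ∈ C
    · have : n ∈ K := ⟨hn, hC⟩
      rw [hzz] at this
      rcases this with h | h
      · exact Or.inl h
      · exact Or.inr (Or.inl h)
    · right; right
      have : n ∈ F (s n) := ⟨hn, hC, rfl⟩
      rw [hu] at this
      exact ⟨hC, this⟩
  have hdd : G.dist v z = G.dist v z' := by
    rw [SimpleGraph.dist_eq_one_iff_adj.mpr hz.1, SimpleGraph.dist_eq_one_iff_adj.mpr hz'.1]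
  have n1 : ¬ (z ∈ P1 ∧ z' ∈ P1) := fun h => hne (hS.lev1 z h.1 z' h.2 hdd)
  have n2 : ¬ (z ∈ P2 ∧ z' ∈ P2) := fun h => hne (hS.lev2 z h.1 z' h.2 hdd)
  have o1 := hS.sub z hz.2 hz.1.ne'
  have o2 := hS.sub z' hz'.2 hz'.1.ne'
  by_cases hz1 : z ∈ P1
  · exact ⟨z, z', u, hne, hz.1, hz'.1, hz.2, hz'.2, hz1, by tauto, by tauto, by tauto,
      fun i => hum i, hN⟩
  · refine ⟨z', z, u, hne.symm, hz'.1, hz.1, hz'.2, hz.2, by tauto, by tauto, by tauto, by tauto,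
      fun i => hum i, fun n hn => ?_⟩
    have := hN n hn
    tauto

theorem sn_three [Fintype V] (hconn : G.Connected) (hpl : IsPlanar G) (hn : 2 ≤ Fintype.card V)
    (hd : {n | G.Adj v n}.ncard ≤ 3) : Fintype.card V ≤ 3 * sn G (fun _ => 2) v + 1 := by
  obtain ⟨tpar, T, -⟩ := tree_exists (v := v) hconn (fun _ => 0)
  obtain ⟨M⟩ := model_exists hconn hpl hn T
  obtain ⟨x, x', C, s, hS, hcard, -, -⟩ := M.sep_main hconn T hn
  rcases hS.dichotomy (by omega) with ⟨i, hi⟩ | h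
  · have := sn_sep hconn hS i hi
    have := hcard i
    omega
  · omega

theorem sn_four [Fintype V] (hconn : G.Connected) (hpl : IsPlanar G) (hn : 2 ≤ Fintype.card V)
    (hd : {n | G.Adj v n}.ncard = 4) (pr : V → ℕ)
    (H : ∀ z z', z ≠ z' → G.Adj v z → G.Adj v z' →
      (pr z < pr z' ∧ (outer G v z').ncard ≤ 4) ∨ (pr z' < pr z ∧ (outer G v z).ncard ≤ 4) ∨
      ∃ b, G.Adj v b ∧ b ≠ z ∧ b ≠ z' ∧ (outer G v b).ncard ≤ 2) :
    Fintype.card V ≤ 6 * sn G (fun _ => 2) v + 1 := by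
  obtain ⟨tpar, T, hpr⟩ := tree_exists (v := v) hconn pr
  obtain ⟨M⟩ := model_exists hconn hpl hn T
  obtain ⟨x, x', C, s, hS, hcard, -, hre⟩ := M.sep_main hconn T hn
  rcases hS.dichotomy (by omega) with ⟨i, hi⟩ | h
  · have := sn_sep hconn hS i hi
    have := hcard i
    omega
  obtain ⟨-, hvC, z, z', u, hne, hvz, hvz', hzC, hzC', hz1, hz2, hz1', hz2', hu, hN⟩ := h
  by_cases hw : ∃ w ∈ C, w ≠ v ∧ ∃ i, G.dist (u i) w + 1 = G.dist v w
  · obtain ⟨w, hwC, hwv, i, hi⟩ := hw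
    obtain ⟨C', s', P1, P2, hS', h1, h2, h3⟩ := hre z z' (u (i + 1)) (u i) w hvz hvz' hz1 hz2 hz1' hz2'
      (hu _).2.1 (hu _).2.1 (hu _).1 (hu _).1 (by rw [(hu _).2.2, (hu _).2.2]; simp) hwC hwv hi
    have hnu : ∀ i, z ≠ u i ∧ z' ≠ u i := fun i =>
      ⟨fun h => (hu i).2.1 (h ▸ hzC), fun h => (hu i).2.1 (h ▸ hzC')⟩
    have : {n | G.Adj v n ∧ n ∈ cside v C' s' 1}.ncard ≤ 2 := by
      have hgen : ∀ y, G.Adj v y → y ≠ u (i + 1) → y ∉ cside v C' s' 1 →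
          {n | G.Adj v n ∧ n ∈ cside v C' s' 1}.ncard ≤ 2 := by
        intro y hy hyu hyc
        have hsub : ({y, u (i + 1)} : Set V) ⊆ {n | G.Adj v n} := by
          rintro n (rfl | rfl)
          · exact hy
          · exact (hu _).1
        have h5 := Set.ncard_diff_add_ncard_of_subset hsub (Set.toFinite _)
        rw [Set.ncard_pair hyu, hd] at h5
        refine (Set.ncard_le_ncard (t := {n | G.Adj v n} \ {y, u (i + 1)}) ?_ (Set.toFinite _)).trans (by omega)
        rintro n ⟨h6, h7⟩
        refine ⟨h6, ?_⟩
        rintro (rfl | rfl)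
        · exact hyc h7
        · exact h1 h7
      rcases h2 with h2 | h2
      · exact hgen z hvz (hnu _).1 h2
      · exact hgen z' hvz' (hnu _).2 h2
    have := sn_sep hconn hS' 1 this
    omega
  push Not at hw
  have hR : ∀ w ∈ C, w ≠ v → ∀ n, G.Adj v n → G.dist n w + 1 = G.dist v w → n = z ∨ n = z' := by
    intro w h1 h2 n h3 h4
    rcases hN n h3 with h | h | ⟨h, h'⟩
    · exact Or.inl h
    · exact Or.inr h
    · exact absurd (by rw [← h']; exact h4) (hw w h1 h2 (s n))
  have hdist : ∀ w, w ≠ v → ∀ y, G.Adj v y → G.dist v y ≤ G.dist v w := by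
    intro w hw y hy
    rw [SimpleGraph.dist_eq_one_iff_adj.mpr hy]
    exact hconn.pos_dist_of_ne (Ne.symm hw)
  have fin : (∃ i, (cside v C s i).ncard ≤ sn G (fun _ => 2) v + 1) → Fintype.card V ≤ 6 * sn G (fun _ => 2) v + 1 := by
    rintro ⟨i, hi⟩
    have := hcard i
    have := sn_pos (v := v) hconn hn
    omega
  apply fin
  rcases H z z' hne hvz hvz' with ⟨h1, h2⟩ | ⟨h1, h2⟩ | ⟨b, hb1, hb2, hb3, hb4⟩
  · refine sn_pair hconn T hS (u := u) hvC hvz hvz' hzC hne hz1' hN ?_ h2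
    intro w h3 h4 h5 n h6 h7
    rcases hR w h3 h4 n h6 h7 with rfl | rfl
    · rfl
    · have := hpr w z (T.comp h5 hz1 (hdist w h4 z hvz)) hvz _ h6 h7
      omega
  · refine sn_pair hconn T hS.swap (u := u) hvC hvz' hvz hzC' hne.symm hz1 (fun n hn => ?_) ?_ h2
    · have := hN n hn; tauto
    intro w h3 h4 h5 n h6 h7
    rcases hR w h3 h4 n h6 h7 with rfl | rfl
    · have := hpr w z' (T.comp h5 hz1' (hdist w h4 z' hvz')) hvz' _ h6 h7
      omega
    · rfl
  · have hbu : b ∉ C ∧ b = u (s b) := by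
      have := hN b hb1; tauto
    refine sn_off hconn hS hvz hvz' hzC hzC' hbu.1 (fun n hn => ?_) hR hb4
    rcases hN n hn with h | h | ⟨h, h'⟩
    · exact Or.inl h
    · exact Or.inr (Or.inl h)
    · by_cases hs : s n = s b
      · right; right; left
        rw [hs] at h'
        rw [h', ← hbu.2]
      · exact Or.inr (Or.inr (Or.inr ⟨h, hs⟩))

/-- a bad vertex of degree four -/
def Bad (G : SimpleGraph V) (v : V) : Prop :=
  (∀ u, G.Adj v u → 3 ≤ (outer G v u).ncard) ∧
  ∃ a b, a ≠ b ∧ G.Adj v a ∧ G.Adj v b ∧ 5 ≤ (outer G v a).ncard ∧ 5 ≤ (outer G v b).ncard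

theorem sn_good [Fintype V] (hconn : G.Connected) (hpl : IsPlanar G) (hn : 2 ≤ Fintype.card V)
    (hd : {n | G.Adj v n}.ncard = 4) (hb : ¬ Bad G v) :
    Fintype.card V ≤ 6 * sn G (fun _ => 2) v + 1 := by
  classical
  by_cases h1 : ∃ b, G.Adj v b ∧ (outer G v b).ncard ≤ 2
  · obtain ⟨b, hb1, hb2⟩ := h1
    refine sn_four hconn hpl hn hd (fun g => if g = b then 1 else 0) ?_
    intro z z' hne hz hz'
    by_cases e1 : b = z
    · subst e1
      right; left
      simp [hne.symm]
      omega
    by_cases e2 : b = z'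
    · subst e2
      left
      simp [hne]
      omega
    exact Or.inr (Or.inr ⟨b, hb1, e1, e2, hb2⟩)
  push Not at h1
  have h2 : ∃ a, ∀ u, G.Adj v u → u ≠ a → (outer G v u).ncard ≤ 4 := by
    by_contra hno
    push Not at hno
    apply hb
    refine ⟨fun u hu => h1 u hu, ?_⟩
    obtain ⟨a, ha, -, ha'⟩ := hno v
    obtain ⟨b, hb, hba, hb'⟩ := hno a
    exact ⟨a, b, hba.symm, ha, hb, ha', hb'⟩
  obtain ⟨a, ha⟩ := h2
  obtain ⟨n, ⟨ord⟩⟩ := Finite.exists_equiv_fin V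
  refine sn_four hconn hpl hn hd (fun g => if g = a then 0 else (ord g : ℕ) + 1) ?_
  intro z z' hne hz hz'
  by_cases e1 : z = a
  · left
    have : z' ≠ a := fun h => hne (e1.trans h.symm)
    exact ⟨by simp [e1, this], ha z' hz' this⟩
  by_cases e2 : z' = a
  · right; left
    exact ⟨by simp [e1, e2], ha z hz e1⟩
  have : (ord z : ℕ) ≠ ord z' := fun h => hne (ord.injective (Fin.ext h))
  simp only [e1, e2, if_false]
  rcases lt_or_gt_of_ne this with h | h
  · exact Or.inl ⟨by omega, ha z' hz' e2⟩
  · exact Or.inr (Or.inl ⟨by omega, ha z hz e1⟩)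

end FF

namespace FF
variable {V : Type} {G : SimpleGraph V} {v : V}

/-- degree as the cardinality of the neighbour set -/
noncomputable def dg (G : SimpleGraph V) (v : V) : ℕ := {n | G.Adj v n}.ncard

theorem dg_pos [Fintype V] (hconn : G.Connected) (hn : 2 ≤ Fintype.card V) (v : V) : 1 ≤ dg G v := by
  have : Nontrivial V := Fintype.one_lt_card_iff_nontrivial.mp hn
  obtain ⟨w, hw⟩ := hconn.preconnected.exists_adj_of_nontrivial v
  exact (Set.ncard_pos (Set.toFinite _)).mpr ⟨w, hw⟩

theorem outer_le_dg [Finite V] (v a : V) : (outer G v a).ncard ≤ dg G a :=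
  Set.ncard_le_ncard (fun _ h => h.1) (Set.toFinite _)

theorem outer_add_two_le [Finite V] {v a t : V} (h1 : G.Adj v a) (h2 : G.Adj a t) (h3 : G.Adj t v) :
    (outer G v a).ncard + 2 ≤ dg G a := by
  rw [← Set.ncard_pair h3.ne, ← Set.ncard_union_eq _ (Set.toFinite _) (Set.toFinite _)]
  · refine Set.ncard_le_ncard ?_ (Set.toFinite _)
    rintro x (hx | rfl | rfl)
    · exact hx.1
    · exact h2
    · exact h1.symm
  · rw [Set.disjoint_left]
    rintro x ⟨_, hx1, hx2⟩ (rfl | rfl)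
    · exact hx2 h3.symm
    · exact hx1 rfl

theorem tri_of_not_E0 {v a : V} (h : G.Adj v a) (hE : s(v, a) ∉ E0 G) : ∃ t, G.Adj a t ∧ G.Adj t v := by
  by_contra hc
  push Not at hc
  refine hE ⟨h, ?_⟩
  intro x y z h1 h2 h3 he
  rcases Sym2.eq_iff.mp he with ⟨rfl, rfl⟩ | ⟨rfl, rfl⟩
  · exact hc z h2 h3
  · exact hc z h3.symm h2.symm

/-- bad vertices of degree four -/
def B4 (G : SimpleGraph V) : Set V := {v | dg G v = 4 ∧ Bad G v}

theorem fiber_bound [Finite V] (h4 : C4Free G) (a : V) :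
    2 * {v | v ∈ B4 G ∧ G.Adj v a ∧ 5 ≤ (outer G v a).ncard ∧ s(v, a) ∉ E0 G}.ncard ≤
      4 * (dg G a - 5) := by
  classical
  set T := {v | v ∈ B4 G ∧ G.Adj v a ∧ 5 ≤ (outer G v a).ncard ∧ s(v, a) ∉ E0 G} with hT
  rcases T.eq_empty_or_nonempty with h | ⟨v0, hv0⟩
  · rw [h]; simp
  have ht : ∀ v, ∃ t, v ∈ T → G.Adj a t ∧ G.Adj t v := by
    intro v
    by_cases hv : v ∈ T
    · obtain ⟨t, h⟩ := tri_of_not_E0 hv.2.1 hv.2.2.2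
      exact ⟨t, fun _ => h⟩
    · exact ⟨v, fun h => absurd h hv⟩
  choose t ht using ht
  have hda : 7 ≤ dg G a := by
    have := outer_add_two_le hv0.2.1 (ht _ hv0).1 (ht _ hv0).2
    have := hv0.2.2.1
    omega
  have hinj : Set.InjOn t T := by
    intro x hx y hy hxy
    rcases h4 x a y (t x) hx.2.1 hy.2.1.symm (by rw [hxy]; exact (ht _ hy).2.symm) (ht _ hx).2 with h | h
    · exact h
    · exact absurd h (ht _ hx).1.ne
  have hdis : Disjoint T (t '' T) := by
    rw [Set.disjoint_left]
    rintro _ h1 ⟨x, hx, rfl⟩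
    have h2 := hx.1.2.1 _ (ht _ hx).2.symm
    have h3 := outer_add_two_le (ht _ hx).2.symm (ht _ hx).1.symm hx.2.1.symm
    have h5 := h1.1.1
    omega
  have h6 : T.ncard + T.ncard ≤ dg G a := by
    nth_rw 2 [← Set.ncard_image_of_injOn hinj]
    rw [← Set.ncard_union_eq hdis (Set.toFinite _) (Set.toFinite _)]
    refine Set.ncard_le_ncard ?_ (Set.toFinite _)
    rintro _ (hx | ⟨x, hx, rfl⟩)
    · exact hx.2.1.symm
    · exact (ht _ hx).1
  omega

theorem bad_bound [Fintype V] (h4 : C4Free G) :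
    4 * (B4 G).ncard ≤ 2 * (E0 G).ncard + ∑ a : V, 4 * (dg G a - 5) := by
  classical
  set X : Finset (V × V) := Finset.univ.filter
    (fun p => p.1 ∈ B4 G ∧ G.Adj p.1 p.2 ∧ 5 ≤ (outer G p.1 p.2).ncard) with hX
  have hX1 : 2 * (B4 G).ncard ≤ X.card := by
    rw [Set.ncard_eq_toFinset_card', mul_comm]
    rw [Finset.card_eq_sum_card_fiberwise (s := X) (f := Prod.fst) (t := (B4 G).toFinset) (by
      intro p hp
      have := (Finset.mem_filter.mp hp).2.1
      simpa using this), ← smul_eq_mul]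
    refine Finset.card_nsmul_le_sum _ _ _ fun v hv => ?_
    have hvB : v ∈ B4 G := by simpa using hv
    obtain ⟨a, b, hab, ha, hb, ha5, hb5⟩ := hvB.2.2
    have hne : (v, a) ≠ (v, b) := fun h => hab (Prod.ext_iff.mp h).2
    rw [← Finset.card_pair hne]
    refine Finset.card_le_card ?_
    intro p hp
    rcases Finset.mem_insert.mp hp with rfl | hp
    · exact Finset.mem_filter.mpr ⟨Finset.mem_filter.mpr ⟨Finset.mem_univ _, hvB, ha, ha5⟩, rfl⟩
    · rw [Finset.mem_singleton.mp hp]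
      exact Finset.mem_filter.mpr ⟨Finset.mem_filter.mpr ⟨Finset.mem_univ _, hvB, hb, hb5⟩, rfl⟩
  have hX0 : (X.filter (fun p => s(p.1, p.2) ∈ E0 G)).card ≤ (E0 G).ncard := by
    rw [Set.ncard_eq_toFinset_card']
    refine Finset.card_le_card_of_injOn (fun p => s(p.1, p.2)) ?_ ?_
    · intro p hp
      have := (Finset.mem_filter.mp hp).2
      simpa using this
    · rintro ⟨x, y⟩ hp ⟨x', y'⟩ hq he
      have hp := (Finset.mem_filter.mp (Finset.mem_filter.mp hp).1).2
      have hq := (Finset.mem_filter.mp (Finset.mem_filter.mp hq).1).2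
      rcases Sym2.eq_iff.mp he with ⟨h1, h2⟩ | ⟨h1, h2⟩
      · simp only at h1 h2
        rw [h1, h2]
      · simp only at h1 h2 hp hq
        subst h1 h2
        have := outer_le_dg (G := G) x y
        have := hq.1.1
        have := hp.2.2
        omega
  have hX2 : 2 * (X.filter (fun p => ¬ s(p.1, p.2) ∈ E0 G)).card ≤ ∑ a : V, 4 * (dg G a - 5) := by
    rw [Finset.card_eq_sum_card_fiberwise (f := Prod.snd) (t := Finset.univ) (fun _ _ => by simp),
      Finset.mul_sum]
    refine Finset.sum_le_sum fun a _ => le_trans ?_ (fiber_bound h4 a)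
    refine Nat.mul_le_mul_left 2 ?_
    rw [Set.ncard_eq_toFinset_card']
    refine Finset.card_le_card_of_injOn Prod.fst ?_ ?_
    · rintro ⟨x, y⟩ hp
      simp only [hX, Finset.coe_filter, Finset.mem_filter, Finset.mem_univ, true_and,
        Set.mem_setOf_eq] at hp
      obtain ⟨⟨⟨h1, h2, h3⟩, h5⟩, rfl⟩ := hp
      simp only [Set.coe_toFinset, Set.mem_setOf_eq]
      exact ⟨h1, h2, h3, h5⟩
    · rintro ⟨x, y⟩ hp ⟨x', y'⟩ hq he
      have hp := (Finset.mem_filter.mp hp).2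
      have hq := (Finset.mem_filter.mp hq).2
      simp only at hp hq he
      rw [hp, hq, he]
  have := X.card_filter_add_card_filter_not (fun p => s(p.1, p.2) ∈ E0 G)
  omega

theorem sum_dg [Fintype V] : ∑ v : V, dg G v = 2 * G.edgeSet.ncard := by
  classical
  have h := G.sum_degrees_eq_twice_card_edges
  have h1 : G.edgeSet.ncard = G.edgeFinset.card := by
    rw [Set.ncard_eq_toFinset_card']; rfl
  rw [h1, ← h]
  refine Finset.sum_congr rfl fun v _ => ?_
  rw [← G.card_neighborFinset_eq_degree, dg, Set.ncard_eq_toFinset_card']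
  congr 1

open Classical in
/-- weight of a vertex -/
noncomputable def wt (G : SimpleGraph V) (v : V) : ℕ :=
  if v ∈ B4 G then 0 else 5 - dg G v

theorem sum_wt [Fintype V] (h4 : C4Free G) :
    10 * Fintype.card V ≤ 2 * ∑ v : V, wt G v + 4 * G.edgeSet.ncard + (E0 G).ncard := by
  classical
  have h1 : ∑ v : V, (5 + (dg G v - 5)) = ∑ v : V, (wt G v + (if v ∈ B4 G then 1 else 0) + dg G v) := by
    refine Finset.sum_congr rfl fun v _ => ?_
    unfold wt
    split_ifs with h
    · have := h.1; omega
    · omega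
  have h2 := bad_bound h4
  have h3 := sum_dg (G := G)
  have h5 : ∑ v : V, (if v ∈ B4 G then 1 else 0) = (B4 G).ncard := by
    rw [Set.ncard_eq_toFinset_card', Finset.card_eq_sum_ones, Finset.sum_ite,
      Finset.sum_const_zero, add_zero]
    congr 1
    ext x
    simp
  rw [Finset.sum_add_distrib, Finset.sum_add_distrib, Finset.sum_add_distrib, h5, h3] at h1
  rw [← Finset.mul_sum] at h2
  simp only [Finset.sum_const, Finset.card_univ, smul_eq_mul] at h1
  omega

theorem wt_le_sn [Fintype V] (hconn : G.Connected) (hpl : IsPlanar G) (hn : 2 ≤ Fintype.card V) (v : V) :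
    wt G v * (Fintype.card V - 1) ≤ 6 * sn G (fun _ => 2) v := by
  have h0 := dg_pos hconn hn v
  unfold wt
  split_ifs with hB
  · simp
  have key : dg G v ≤ 2 ∨ dg G v = 3 ∨ dg G v = 4 ∨ 5 ≤ dg G v := by omega
  rcases key with h | h | h | h
  · have h1 := sn_small hconn h
    calc (5 - dg G v) * (Fintype.card V - 1) ≤ 4 * sn G (fun _ => 2) v :=
          Nat.mul_le_mul (by omega) (by omega)
      _ ≤ _ := by omega
  · have h1 := sn_three hconn hpl hn (v := v) (le_of_eq h)
    rw [h]
    omega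
  · have h1 := sn_good hconn hpl hn (v := v) h (fun hb => hB ⟨h, hb⟩)
    rw [h]
    omega
  · have : 5 - dg G v = 0 := by omega
    rw [this]; simp

theorem sum_sn_bound [Fintype V] (hconn : G.Connected) (hpl : IsPlanar G) (hn : 2 ≤ Fintype.card V)
    (h4 : C4Free G) : (Fintype.card V) ^ 2 < 9 * ∑ v : V, sn G (fun _ => 2) v := by
  classical
  have : Nontrivial V := Fintype.one_lt_card_iff_nontrivial.mp hn
  obtain ⟨v⟩ := hconn.nonempty
  obtain ⟨tpar, T, _⟩ := tree_exists (v := v) hconn (fun _ => 0)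
  obtain ⟨M⟩ := model_exists hconn hpl hn T
  have hE := euler_bound h4 (M.euler_fam T)
  have hS := sum_wt h4
  have hle : (∑ v : V, wt G v) * (Fintype.card V - 1) ≤ 6 * ∑ v : V, sn G (fun _ => 2) v := by
    rw [Finset.sum_mul, Finset.mul_sum]
    exact Finset.sum_le_sum fun v _ => wt_le_sn hconn hpl hn v
  have hE0 : (E0 G).ncard ≤ G.edgeSet.ncard :=
    Set.ncard_le_ncard (fun _ h => h.1) (Set.toFinite _)
  obtain ⟨m, hm⟩ : ∃ m, Fintype.card V = m + 1 := ⟨Fintype.card V - 1, by omega⟩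
  rw [hm] at hE hS hle hn ⊢
  simp only [Nat.add_sub_cancel] at hle
  set W := ∑ v : V, wt G v
  set S := ∑ v : V, sn G (fun _ => 2) v
  have hW : 5 * (m + 1) + 10 ≤ 7 * W := by omega
  have h7 : (5 * (m + 1) + 10) * m ≤ 7 * W * m := Nat.mul_le_mul_right m hW
  nlinarith

theorem final [Fintype V] (hconn : G.Connected) (hpl : IsPlanar G) (hn : 2 ≤ Fintype.card V)
    (h4 : C4Free G) : survivingRate G (fun _ => 2) > 1 / 9 := by
  have h := sum_sn_bound hconn hpl hn h4
  unfold survivingRate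
  have hpos : (0 : ℝ) < (Fintype.card V : ℝ) ^ 2 := by
    have : (0 : ℝ) < Fintype.card V := by exact_mod_cast (by omega : 0 < Fintype.card V)
    positivity
  have h' : ((Fintype.card V : ℝ)) ^ 2 < 9 * ∑ v : V, (sn G (fun _ => 2) v : ℝ) := by
    exact_mod_cast h
  rw [gt_iff_lt, div_lt_div_iff₀ (by norm_num) hpos]
  linarith

end FF
/-- Corollary 1.4: a connected planar graph on at least 2 vertices without 4-cycles has
2-surviving rate greater than `1/9`. -/
theorem surviving_rate_two_no_four_cycle {V : Type} [Fintype V] (G : SimpleGraph V)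
    (hconn : G.Connected) (hplanar : IsPlanar G)
    (hn : 2 ≤ Fintype.card V)
    (hC4 : ∀ (v : V) (c : G.Walk v v), c.IsCycle → c.length ≠ 4) :
    survivingRate G (fun _ => 2) > 1 / 9 := by
  exact FF.final hconn hplanar hn (FF.c4free_of G hC4)
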